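/- arXiv:1704.07111 — 3 statements merged into one kernel-verified Lean document; each statement's English description precedes it below -/
import Mathlib

section
/- Let G be an infinite connected graph. Then G contains a T-join for every infinite subset T of its vertex set if and only if there is no set U of vertices of G such that every connected component of G − U is joined to U by exactly one edge of G and infinitely many of these components are nontrivial (i.e., have more than one vertex). -/
namespace SimpleGraph

variable {V : Type*}

/-- A `T`-join in `G`: a set `P` of (oriented) paths, pairwise edge-disjoint, each with two
distinct endpoints lying in `T`, such that every vertex of `T` is an endpoint of exactly one
path of `P`. -/
def IsTJoin (G : SimpleGraph V) (T : Set V) (P : Set (Σ u : V, Σ v : V, G.Walk u v)) : Prop :=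
  (∀ p ∈ P, p.2.2.IsPath ∧ p.1 ≠ p.2.1 ∧ p.1 ∈ T ∧ p.2.1 ∈ T) ∧
  (∀ p ∈ P, ∀ q ∈ P, p ≠ q → ∀ e ∈ p.2.2.edges, e ∉ q.2.2.edges) ∧
  (∀ t ∈ T, ∃! p, p ∈ P ∧ (p.1 = t ∨ p.2.1 = t))

/-- `G` contains a `T`-join. -/
def HasTJoin (G : SimpleGraph V) (T : Set V) : Prop := ∃ P, G.IsTJoin T P

end SimpleGraph

namespace SimpleGraph

variable {V : Type*}

/-- The vertex set (inside `V`) of a connected component `C` of `G − U`. -/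
def compSet (G : SimpleGraph V) (U : Set V)
    (C : (G.induce (Uᶜ : Set V)).ConnectedComponent) : Set V :=
  Subtype.val '' C.supp

/-- The connected component `C` of `G − U` is joined to `U` by exactly one edge of `G`. -/
def JoinedByExactlyOneEdge (G : SimpleGraph V) (U : Set V)
    (C : (G.induce (Uᶜ : Set V)).ConnectedComponent) : Prop :=
  ∃! e : Sym2 V, e ∈ G.edgeSet ∧ ∃ x ∈ G.compSet U C, ∃ y ∈ U, e = s(x, y)

end SimpleGraph

/-!
Suppose that `U` is an obstruction, and let `T` consist of a vertex of `U` and two vertices of each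
nontrivial component of `G - U`. In a `T`-join, the path from the vertex of `U` enters some
component `C` along the only edge between `C` and `U`, and the path from the other vertex of `T` in
`C` would have to leave `C` along the same edge.

Conversely, all vertices of `T` except perhaps one can be joined inside a tree of shortest paths: at
each vertex pair up what is left over by the branches above it and, where this recursion does not
terminate, pair up what is left over along rays. To absorb the loose vertex, attach it by a trail to
infinitely many paths of the join and try to reroute finitely many of them so that it is joined and
another endpoint becomes loose. If this is always possible, every path is rerouted at most once and
the limit is a `T`-join. If at some point it is not, then every vertex which lies on a remaining
path and can still be reached is cut off from the end of the trail, together with only finitely many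
remaining paths, by a single edge (Menger). Only finitely many of these edges also cut off vertices
that have already been used; the maximal parts cut off by the others are the components of `G - U`
for an obstruction `U`.
-/

namespace TJoin

open SimpleGraph Set Function

universe u w

/-! ### Walks and bridges -/

section Reachability

variable {V : Type*} {G H H' K : SimpleGraph V} {u v w x z : V}

theorem mem_of_reachable {S : Set V} (h : H.Reachable u v) (hu : u ∈ S)
    (hS : ∀ x ∈ S, ∀ y, H.Adj x y → y ∈ S) : v ∈ S := by
  obtain ⟨p⟩ := h
  by_contra hv
  obtain ⟨d, -, hd, hd'⟩ := p.exists_boundary_dart S hu hv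
  exact hd' (hS _ hd _ d.adj)

theorem Reachable.sdiff_of_not_reachable (hK : ∀ a b, K.Adj a b → H.Reachable z a)
    (hzx : ¬ H.Reachable z x) (h : H.Reachable x v) : (H \ K).Reachable x v := by
  refine mem_of_reachable (S := {y | (H \ K).Reachable x y}) h .rfl fun a ha b hab => ?_
  refine ha.trans (Adj.reachable ⟨hab, fun hK' => hzx ?_⟩)
  exact (hK a b hK').trans (ha.mono sdiff_le).symm

theorem exists_reachable_mem {S : Set V} (h : H.Reachable u v) (hv : v ∈ S)
    (hS : ∀ x y, H.Adj x y → x ∉ S → H'.Adj x y) : ∃ y ∈ S, H'.Reachable u y := by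
  by_contra! hcon
  refine hcon v hv (mem_of_reachable (S := {y | H'.Reachable u y}) h .rfl fun x hx y hxy => ?_)
  exact hx.trans (hS x y hxy fun hxS => hcon x hxS hx).reachable

theorem reachable_deleteEdges_or {a b : V} (h : H.Reachable u v) :
    (H.deleteEdges {s(a, b)}).Reachable u v ∨
      (H.deleteEdges {s(a, b)}).Reachable u a ∧ (H.deleteEdges {s(a, b)}).Reachable b v ∨
      (H.deleteEdges {s(a, b)}).Reachable u b ∧ (H.deleteEdges {s(a, b)}).Reachable a v := by
  set H' := H.deleteEdges {s(a, b)}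
  refine mem_of_reachable (S := {v | H'.Reachable u v ∨ H'.Reachable u a ∧ H'.Reachable b v ∨
    H'.Reachable u b ∧ H'.Reachable a v}) h (.inl .rfl) fun x hx y hxy => ?_
  by_cases hab : s(x, y) = s(a, b)
  · obtain ⟨rfl, rfl⟩ | ⟨rfl, rfl⟩ := Sym2.eq_iff.1 hab
    · rcases hx with hx | ⟨hx, -⟩ | ⟨hx, -⟩
      exacts [.inr (.inl ⟨hx, .rfl⟩), .inr (.inl ⟨hx, .rfl⟩), .inl hx]
    · rcases hx with hx | ⟨hx, -⟩ | ⟨hx, -⟩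
      exacts [.inr (.inr ⟨hx, .rfl⟩), .inl hx, .inr (.inr ⟨hx, .rfl⟩)]
  · have hxy' : H'.Reachable x y := (deleteEdges_adj.2 ⟨hxy, hab⟩).reachable
    rcases hx with hx | ⟨hx, hx'⟩ | ⟨hx, hx'⟩
    exacts [.inl (hx.trans hxy'), .inr (.inl ⟨hx, hx'.trans hxy'⟩),
      .inr (.inr ⟨hx, hx'.trans hxy'⟩)]

end Reachability

section WalkGraph

variable {V : Type*} {G H : SimpleGraph V} {u v x y : V}

/-- The edges of a walk, as a spanning subgraph. -/
def walkGraph (p : G.Walk u v) : SimpleGraph V := p.toSubgraph.spanningCoe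

theorem walkGraph_adj {p : G.Walk u v} : (walkGraph p).Adj x y ↔ s(x, y) ∈ p.edges :=
  Walk.adj_toSubgraph_iff_mem_edges

theorem edgeSet_walkGraph (p : G.Walk u v) : (walkGraph p).edgeSet = p.edgeSet := by
  rw [walkGraph, Subgraph.edgeSet_spanningCoe, Walk.edgeSet_toSubgraph]

theorem finite_edgeSet_walkGraph (p : G.Walk u v) : (walkGraph p).edgeSet.Finite := by
  rw [edgeSet_walkGraph]
  exact p.edges.finite_toSet

theorem walkGraph_le (p : G.Walk u v) : walkGraph p ≤ G := fun _ _ h =>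
  p.edges_subset_edgeSet (walkGraph_adj.1 h)

theorem mem_support_of_walkGraph_adj {p : G.Walk u v} (h : (walkGraph p).Adj x y) :
    x ∈ p.support :=
  p.fst_mem_support_of_mem_edges (walkGraph_adj.1 h)

theorem walkGraph_reachable (p : G.Walk u v) (hx : x ∈ p.support) (hy : y ∈ p.support) :
    (walkGraph p).Reachable x y :=
  (p.toSubgraph_connected.preconnected ⟨x, p.mem_verts_toSubgraph.2 hx⟩
    ⟨y, p.mem_verts_toSubgraph.2 hy⟩).map p.toSubgraph.coeEmbeddingSpanningCoe.toHom

end WalkGraph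

section Menger

variable {V : Type*} {H A B : SimpleGraph V} {z v w x : V}

/-- There are two edge-disjoint connections between `z` and `x` in `H`. -/
def HasDisjointConnections (H : SimpleGraph V) (z x : V) : Prop :=
  ∃ A B, A ≤ H ∧ B ≤ H ∧ Disjoint A B ∧ A.Reachable z x ∧ B.Reachable z x

theorem HasDisjointConnections.of_adj (hA : A ≤ H \ edge v w) (hB : B ≤ H \ edge v w)
    (hAB : Disjoint A B) (hAv : A.Reachable z v) (hBv : B.Reachable z v) (hvw : H.Adj v w)
    (h : (H \ edge v w).Reachable w v) : HasDisjointConnections H z w := by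
  let S : Set V := {y | A.Reachable z y ∨ B.Reachable z y}
  let C : SimpleGraph V := fromRel fun a b => a ∈ S ∧ b ∈ S
  have hC : ∀ {D : SimpleGraph V}, (∀ y, D.Reachable z y → y ∈ S) → ∀ y, D.Reachable z y →
      (D ⊓ C).Reachable z y := fun {D} hD y hy =>
    (mem_of_reachable (S := {y | D.Reachable z y ∧ (D ⊓ C).Reachable z y}) hy ⟨.rfl, .rfl⟩
      fun a ha b hab => ⟨ha.1.trans hab.reachable, ha.2.trans (Adj.reachable ⟨hab, hab.ne,
        .inl ⟨hD a ha.1, hD b (ha.1.trans hab.reachable)⟩⟩)⟩).2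
  obtain ⟨y, hy, hwy⟩ := exists_reachable_mem (H' := (H \ edge v w) \ C) (S := S) h (.inl hAv)
    fun a b hab ha => ⟨hab, fun hC => hC.2.elim (fun hC => ha hC.1) fun hC => ha hC.2⟩
  have hQ : Disjoint ((H \ edge v w) \ C) (edge v w) := disjoint_sdiff_self_left.mono_left sdiff_le
  have hvw' : (edge v w).Reachable v w := Adj.reachable ((edge_adj ..).2 ⟨.inl ⟨rfl, rfl⟩, hvw.ne⟩)
  have main : ∀ {A B : SimpleGraph V}, A ≤ H \ edge v w → B ≤ H \ edge v w → Disjoint A B →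
      (A ⊓ C).Reachable z y → (B ⊓ C).Reachable z v → HasDisjointConnections H z w :=
    fun {A B} hA hB hAB hy hv => by
      refine ⟨A ⊓ C ⊔ (H \ edge v w) \ C, B ⊓ C ⊔ edge v w,
        sup_le (inf_le_left.trans (hA.trans sdiff_le)) (sdiff_le.trans sdiff_le),
        sup_le (inf_le_left.trans (hB.trans sdiff_le)) ((edge_le_iff _).2 (.inr hvw)), ?_,
        (hy.mono le_sup_left).trans (hwy.symm.mono le_sup_right),
        (hv.mono le_sup_left).trans (hvw'.mono le_sup_right)⟩
      rw [disjoint_sup_left, disjoint_sup_right, disjoint_sup_right]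
      exact ⟨⟨hAB.mono inf_le_left inf_le_left,
        disjoint_sdiff_self_left.mono_left (inf_le_left.trans hA)⟩,
        disjoint_sdiff_self_left.mono_right inf_le_right, hQ⟩
  have hAS : ∀ y, A.Reachable z y → y ∈ S := fun y => .inl
  have hBS : ∀ y, B.Reachable z y → y ∈ S := fun y => .inr
  obtain hy | hy := hy
  · exact main hA hB hAB (hC hAS y hy) (hC hBS v hBv)
  · exact main hB hA hAB.symm (hC hBS y hy) (hC hAS v hAv)

theorem HasDisjointConnections.trans_adj (h : HasDisjointConnections H z v) (hvw : H.Adj v w)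
    (h2 : H.IsEdgeReachable 2 v w) : HasDisjointConnections H z w := by
  obtain ⟨A, B, hA, hB, hAB, hAv, hBv⟩ := h
  have hvw' : (edge v w).Reachable v w := Adj.reachable ((edge_adj ..).2 ⟨.inl ⟨rfl, rfl⟩, hvw.ne⟩)
  have hext : ∀ {A B : SimpleGraph V}, A ≤ H → B ≤ H → Disjoint A B →
      (A \ edge v w).Reachable z w → B.Reachable z v → HasDisjointConnections H z w :=
    fun {A B} hA hB hAB hAw hBv => ⟨A \ edge v w, B ⊔ edge v w, sdiff_le.trans hA,
      sup_le hB ((edge_le_iff _).2 (.inr hvw)),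
      disjoint_sup_right.2 ⟨hAB.mono_left sdiff_le, disjoint_sdiff_self_left⟩, hAw,
      (hBv.mono le_sup_left).trans (hvw'.mono le_sup_right)⟩
  have hor : ∀ {D : SimpleGraph V}, D.Reachable z v →
      (D \ edge v w).Reachable z w ∨ (D \ edge v w).Reachable z v := fun hv => by
    obtain h | ⟨h, -⟩ | ⟨h, -⟩ := reachable_deleteEdges_or (a := v) (b := w) hv
    exacts [.inr h, .inr h, .inl h]
  obtain hAw | hAv' := hor hAv
  · exact hext hA hB hAB hAw hBv
  obtain hBw | hBv' := hor hBv
  · exact hext hB hA hAB.symm hBw hAv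
  · exact of_adj (sdiff_le_sdiff_right hA) (sdiff_le_sdiff_right hB) (hAB.mono sdiff_le sdiff_le)
      hAv' hBv' hvw (isEdgeReachable_two.1 h2 _).symm

theorem HasDisjointConnections.of_isEdgeReachable_two (h : H.IsEdgeReachable 2 z x) :
    HasDisjointConnections H z x := by
  obtain ⟨p, hp⟩ := (h.reachable two_ne_zero).exists_isPath
  have hsupp : ∀ y ∈ p.support, H.IsEdgeReachable 2 z y := fun y hy =>
    hp.isTrail.isEdgeReachable_two_of_isEdgeReachable_two h p.start_mem_support hy
  have hwalk : ∀ {v x : V} (p : H.Walk v x), (∀ y ∈ p.support, H.IsEdgeReachable 2 v y) →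
      HasDisjointConnections H z v → HasDisjointConnections H z x := by
    intro v x p
    induction p with
    | nil => exact fun _ => id
    | cons hvu p ih =>
      intro hp hv
      have hvu' := hp _ (List.mem_cons_of_mem _ p.start_mem_support)
      exact ih (fun y hy => hvu'.symm.trans (hp y (List.mem_cons_of_mem _ hy)))
        (hv.trans_adj hvu hvu')
  exact hwalk p hsupp ⟨⊥, ⊥, bot_le, bot_le, disjoint_bot_left, .rfl, .rfl⟩

end Menger

section Walks

variable {V : Type*} {H K : SimpleGraph V} {u v x z a b : V} {e : Sym2 V}

theorem walkGraph_le_deleteEdges {p : H.Walk u v} (he : e ∉ p.edges) :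
    walkGraph p ≤ H.deleteEdges {e} := fun _ _ h =>
  deleteEdges_adj.2 ⟨walkGraph_le p h, fun hxy => he (hxy ▸ walkGraph_adj.1 h)⟩

theorem exists_walk_to_first {S : Set V} {p : H.Walk u v} (hp : p.IsTrail) (hv : v ∈ S) :
    ∃ y ∈ S, ∃ q : H.Walk u y, q.IsTrail ∧ (∀ w ∈ q.support, w ∈ S → w = y) ∧
      (walkGraph p \ walkGraph q).Reachable y v := by
  classical
  obtain ⟨y, hy, hyp, hfirst⟩ := p.exists_mem_support_forall_mem_support_imp_eq
    {w ∈ p.support.toFinset | w ∈ S} ⟨v, by simp [hv]⟩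
  have hsub := p.support_takeUntil_subset_support hyp
  refine ⟨y, (Finset.mem_filter.1 hy).2, p.takeUntil y hyp, hp.takeUntil hyp, fun w hw hwS =>
    hfirst w (Finset.mem_filter.2 ⟨List.mem_toFinset.2 (hsub hw), hwS⟩) hw, ?_⟩
  refine (walkGraph_reachable (p.dropUntil y hyp) (Walk.start_mem_support _)
    (Walk.end_mem_support _)).mono fun c d h => ⟨walkGraph_adj.2
    (p.edges_dropUntil_subset_edges hyp (walkGraph_adj.1 h)), fun h' => ?_⟩
  exact hp.disjoint_edges_takeUntil_dropUntil hyp (walkGraph_adj.1 h') (walkGraph_adj.1 h)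

theorem exists_last_edge {P : Sym2 V → Prop} (p : H.Walk u v) (h : ∃ e ∈ p.edges, P e) :
    ∃ (a b : V) (hab : H.Adj a b) (q : H.Walk u a) (q' : H.Walk b v),
      p = q.append (.cons hab q') ∧ P s(a, b) ∧ ∀ e ∈ q'.edges, ¬ P e := by
  induction p with
  | nil => simp at h
  | cons huw p ih =>
    by_cases hp : ∃ e ∈ p.edges, P e
    · obtain ⟨a, b, hab, q, q', rfl, hlast⟩ := ih hp
      exact ⟨a, b, hab, .cons huw q, q', rfl, hlast⟩
    · refine ⟨_, _, huw, .nil, p, rfl, ?_, by simpa using hp⟩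
      simpa only [Walk.edges_cons, List.mem_cons, exists_eq_or_imp, hp, or_false] using h

theorem reachable_sdiff_of_separates (h : H.Reachable z x)
    (hsep : ¬ (H.deleteEdges {s(a, b)}).Reachable z x)
    (ha : (H.deleteEdges {s(a, b)}).Reachable z a)
    (hK : ∀ c d, K.Adj c d → (H.deleteEdges {s(a, b)}).Reachable z c) :
    (H.deleteEdges {s(a, b)} \ K).Reachable b x := by
  obtain h | ⟨-, hbx⟩ | ⟨-, hax⟩ := reachable_deleteEdges_or (a := a) (b := b) h
  exacts [(hsep h).elim, (Reachable.sdiff_of_not_reachable hK hsep hbx.symm).symm,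
    (hsep (ha.trans hax)).elim]

theorem isEdgeReachable_two_of_separates_of_forall_mem {hab : H.Adj a b} {q₁ : H.Walk z a}
    {q₂ : H.Walk b x} (hq : (q₁.append (.cons hab q₂)).IsTrail)
    (hsep : ¬ (H.deleteEdges {s(a, b)}).Reachable z x)
    (h : ∀ e ∈ q₂.edges, (H.deleteEdges {e}).Reachable z x) :
    (H.deleteEdges {s(a, b)} \ walkGraph q₁).IsEdgeReachable 2 b x := by
  have hnodup := hq.edges_nodup
  simp only [Walk.edges_append, Walk.edges_cons, List.nodup_append, List.nodup_cons,
    List.mem_cons, forall_eq_or_imp] at hnodup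
  obtain ⟨-, ⟨hab₂, -⟩, hq₁⟩ := hnodup
  refine isEdgeReachable_two.2 fun e => ?_
  by_cases he : e ∈ q₂.edges
  · have he₁ : e ∉ q₁.edges := fun he₁ => (hq₁ e he₁).2 e he rfl
    have hle : walkGraph q₁ ≤ (H.deleteEdges {e}).deleteEdges {s(a, b)} := fun c d hcd =>
      deleteEdges_adj.2 ⟨walkGraph_le_deleteEdges he₁ hcd, fun hcd' =>
        (hq₁ _ (walkGraph_adj.1 hcd)).1 hcd'⟩
    have hz : ∀ v ∈ q₁.support, ((H.deleteEdges {e}).deleteEdges {s(a, b)}).Reachable z v :=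
      fun v hv => (walkGraph_reachable q₁ q₁.start_mem_support hv).mono hle
    refine (reachable_sdiff_of_separates (K := walkGraph q₁) (h e he)
      (fun h => hsep (h.mono (deleteEdges_mono (deleteEdges_le _))))
      (hz a q₁.end_mem_support) fun c d hcd => hz c (mem_support_of_walkGraph_adj hcd)).mono ?_
    exact fun c d hcd => ⟨⟨⟨hcd.1.1.1, hcd.1.2⟩, hcd.2⟩, hcd.1.1.2⟩
  · refine (walkGraph_reachable q₂ q₂.start_mem_support q₂.end_mem_support).mono fun c d hcd => ?_
    have hcd' := walkGraph_adj.1 hcd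
    refine deleteEdges_adj.2 ⟨⟨walkGraph_le_deleteEdges hab₂ hcd, fun h => ?_⟩, fun h => he ?_⟩
    exacts [(hq₁ _ (walkGraph_adj.1 h)).2 _ hcd' rfl, mem_singleton_iff.1 h ▸ hcd']

end Walks

theorem finite_support_of_finite_edgeSet {V : Type*} {H : SimpleGraph V} (hH : H.edgeSet.Finite) :
    H.support.Finite := by
  refine (hH.biUnion (t := fun e => {v | v ∈ e}) fun e _ => ?_).subset fun v ⟨w, hvw⟩ =>
    mem_biUnion (show s(v, w) ∈ H.edgeSet from hvw) (Sym2.mem_mk_left v w)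
  induction e with
  | h a b => exact (toFinite {a, b}).subset fun v hv => Sym2.mem_iff.1 hv

section FarSide

variable {V : Type*} {G H : SimpleGraph V} {z v w a b : V} {e : Sym2 V} {B : Set (Sym2 V)}

/-- The set of vertices in the component of `z` in `H` that the edge `e` separates from `z`; it
is empty unless `e` is a bridge. -/
def farSide (H : SimpleGraph V) (z : V) (e : Sym2 V) : Set V :=
  {v | H.Reachable z v ∧ ¬ (H.deleteEdges {e}).Reachable z v}

theorem mem_farSide_of_reachable (hv : v ∈ farSide H z e)
    (hvw : (H.deleteEdges {e}).Reachable v w) : w ∈ farSide H z e :=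
  ⟨hv.1.trans (hvw.mono (deleteEdges_le _)), fun hw => hv.2 (hw.trans hvw.symm)⟩

theorem exists_eq_of_mem_farSide (hv : v ∈ farSide H z e) : ∃ a b, e = s(a, b) ∧ H.Adj a b ∧
    (H.deleteEdges {e}).Reachable z a ∧ (H.deleteEdges {e}).Reachable b v := by
  obtain ⟨p⟩ := hv.1
  have he := p.edges_subset_edgeSet (p.mem_edges_of_not_reachable_deleteEdges hv.2)
  induction e with
  | h a b =>
    obtain h | ⟨ha, hb⟩ | ⟨hb, ha⟩ := reachable_deleteEdges_or (a := a) (b := b) hv.1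
    exacts [absurd h hv.2, ⟨a, b, rfl, he, ha, hb⟩, ⟨b, a, Sym2.eq_swap, he.symm, hb, ha⟩]

theorem reachable_of_mem_farSide (hv : v ∈ farSide H z e) (hw : w ∈ farSide H z e) :
    (H.deleteEdges {e}).Reachable v w := by
  obtain ⟨a, b, rfl, -, -, hbv⟩ := exists_eq_of_mem_farSide hv
  obtain ⟨c, d, hcd, -, hzc, hdw⟩ := exists_eq_of_mem_farSide hw
  obtain ⟨rfl, rfl⟩ | ⟨rfl, rfl⟩ := Sym2.eq_iff.1 hcd
  · exact hbv.symm.trans hdw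
  · exact absurd (hzc.trans hbv) hv.2

theorem eq_of_adj_of_mem_farSide (hv : v ∈ farSide H z e) (hw : w ∉ farSide H z e)
    (hvw : H.Adj v w) : s(v, w) = e := by
  by_contra hne
  exact hw (mem_farSide_of_reachable hv (Adj.reachable (deleteEdges_adj.2 ⟨hvw, hne⟩)))

theorem farSide_subset_farSide (hb : b ∈ farSide H z s(a, b)) (ha : a ∈ farSide H z e) :
    farSide H z s(a, b) ⊆ farSide H z e := by
  refine fun v hv => ⟨hv.1, fun hzv => ?_⟩
  have hle : (H.deleteEdges {e}).deleteEdges {s(a, b)} ≤ H.deleteEdges {s(a, b)} :=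
    sdiff_le_sdiff_right (deleteEdges_le _)
  obtain hzv | ⟨hza, -⟩ | ⟨hzb, -⟩ := reachable_deleteEdges_or (a := a) (b := b) hzv
  exacts [hv.2 (hzv.mono hle), ha.2 (hza.mono (deleteEdges_le _)), hb.2 (hzb.mono hle)]

theorem finite_setOf_mem_farSide (H : SimpleGraph V) (z v : V) :
    {e | v ∈ farSide H z e}.Finite := by
  by_cases hzv : H.Reachable z v
  · obtain ⟨p⟩ := hzv
    exact p.edges.finite_toSet.subset fun e he => p.mem_edges_of_not_reachable_deleteEdges he.2
  · exact finite_empty.subset fun e he => hzv he.1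

/-- The set of vertices that no edge in `B` separates from `z`. -/
def core (H : SimpleGraph V) (z : V) (B : Set (Sym2 V)) : Set V := {v | ∀ e ∈ B, v ∉ farSide H z e}

theorem exists_farSide_mem_core (hv : v ∉ core H z B) : ∃ a b, s(a, b) ∈ B ∧ H.Adj a b ∧
    a ∈ core H z B ∧ b ∈ farSide H z s(a, b) ∧ v ∈ farSide H z s(a, b) := by
  have hne : {e | e ∈ B ∧ v ∈ farSide H z e}.Nonempty := by
    simpa [core, Set.Nonempty] using hv
  obtain ⟨e, ⟨heB, hve⟩, hmax⟩ := ((finite_setOf_mem_farSide H z v).subset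
    fun e he => he.2).exists_maximalFor (farSide H z) _ hne
  obtain ⟨a, b, rfl, hab, hza, hbv⟩ := exists_eq_of_mem_farSide hve
  have hb := mem_farSide_of_reachable hve hbv.symm
  refine ⟨a, b, heB, hab, fun e he hae => ?_, hb, hve⟩
  have hsub := farSide_subset_farSide hb hae
  exact (hmax ⟨he, hsub hve⟩ hsub hae).2 hza

theorem compSet_eq_of_reachable {U S : Set V} {C : (G.induce (Uᶜ : Set V)).ConnectedComponent}
    (hHG : H ≤ G) (hvC : v ∈ G.compSet U C) (hvS : v ∈ S) (hSU : S ⊆ Uᶜ)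
    (hS : ∀ x ∈ S, ∀ y ∉ U, G.Adj x y → y ∈ S) (hSH : ∀ x ∈ S, ∀ y, H.Adj x y → y ∈ S)
    (hreach : ∀ x ∈ S, H.Reachable v x) : G.compSet U C = S := by
  obtain ⟨⟨v, hvU⟩, rfl, rfl⟩ := hvC
  refine Subset.antisymm ?_ fun x hx => ?_
  · rintro _ ⟨x, hx, rfl⟩
    exact mem_of_reachable (S := Subtype.val ⁻¹' S) (ConnectedComponent.exact hx).symm hvS
      fun x hx y hxy => hS x hx y y.2 hxy
  · have key : x ∈ S ∩ {y | ∃ hy, (G.induce Uᶜ).Reachable ⟨v, hvU⟩ ⟨y, hy⟩} :=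
      mem_of_reachable (hreach x hx) ⟨hvS, hvU, .rfl⟩ fun y ⟨hyS, hy, hvy⟩ w hyw =>
        ⟨hSH y hyS w hyw, hSU (hSH y hyS w hyw), hvy.trans (Adj.reachable (hHG hyw))⟩
    obtain ⟨-, hxU, hvx⟩ := key
    exact ⟨⟨x, hxU⟩, (ConnectedComponent.sound hvx).symm, rfl⟩

theorem exists_compSet_eq_farSide (hHG : H ≤ G)
    (hB : ∀ e ∈ B, ∀ x ∈ farSide H z e, ∀ y, G.Adj x y → H.Adj x y)
    (C : (G.induce ((core H z B)ᶜ : Set V)).ConnectedComponent) :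
    ∃ a b, s(a, b) ∈ B ∧ H.Adj a b ∧ a ∈ core H z B ∧ b ∈ farSide H z s(a, b) ∧
      G.compSet (core H z B) C = farSide H z s(a, b) := by
  obtain ⟨⟨v, hv⟩, hvC⟩ := C.exists_rep
  obtain ⟨a, b, heB, hab, ha, hb, hve⟩ := exists_farSide_mem_core hv
  refine ⟨a, b, heB, hab, ha, hb, compSet_eq_of_reachable ((deleteEdges_le _).trans hHG)
    ⟨_, hvC, rfl⟩ hve (fun x hx hxU => hxU _ heB hx) (fun x hx y hy hxy => ?_)
    (fun x hx y hxy => mem_farSide_of_reachable hx hxy.reachable)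
    fun x hx => reachable_of_mem_farSide hve hx⟩
  by_contra hyS
  obtain ⟨rfl, rfl⟩ | ⟨rfl, rfl⟩ :=
    Sym2.eq_iff.1 (eq_of_adj_of_mem_farSide hx hyS (hB _ heB x hx y hxy))
  exacts [hyS hb, hy ha]

theorem joinedByExactlyOneEdge_core (hHG : H ≤ G)
    (hB : ∀ e ∈ B, ∀ x ∈ farSide H z e, ∀ y, G.Adj x y → H.Adj x y)
    (C : (G.induce ((core H z B)ᶜ : Set V)).ConnectedComponent) :
    G.JoinedByExactlyOneEdge (core H z B) C := by
  obtain ⟨a, b, heB, hab, ha, hb, hC⟩ := exists_compSet_eq_farSide hHG hB C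
  refine ⟨s(a, b), ⟨hHG hab, b, hC ▸ hb, a, ha, Sym2.eq_swap⟩, ?_⟩
  rintro _ ⟨hxy, x, hx, y, hy, rfl⟩
  rw [hC] at hx
  exact eq_of_adj_of_mem_farSide hx (hy _ heB) (hB _ heB x hx y hxy)

end FarSide

/-! ### Path systems and `T`-joins -/

section PathSystem

/-- A family of pairwise edge-disjoint paths in `G` whose endpoints are all distinct, that is, a
`T`-join for the set `T` of its endpoints, indexed by a type. -/
structure PathSystem {V : Type u} (G : SimpleGraph V) (ι : Type w) where
  s : ι → V
  t : ι → V
  path (i : ι) : G.Walk (s i) (t i)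
  isPath (i : ι) : (path i).IsPath
  disjoint : Pairwise (Disjoint on fun i => walkGraph (path i))
  injective : Injective (Sum.elim s t)

namespace PathSystem

variable {V : Type u} {G : SimpleGraph V} {ι : Type w} (F : PathSystem G ι) {v : V}

/-- The edges of the `i`-th path, as a spanning subgraph. -/
def graph (i : ι) : SimpleGraph V := walkGraph (F.path i)

/-- The endpoints of the paths with index in `I`. -/
def ends (I : Set ι) : Set V := F.s '' I ∪ F.t '' I

theorem graph_le (i : ι) : F.graph i ≤ G := walkGraph_le _

theorem reachable (i : ι) : (F.graph i).Reachable (F.s i) (F.t i) :=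
  walkGraph_reachable _ (Walk.start_mem_support _) (Walk.end_mem_support _)

theorem finite_ends {I : Set ι} (h : I.Finite) : (F.ends I).Finite := (h.image _).union (h.image _)

theorem mem_ends {I : Set ι} : v ∈ F.ends I ↔ ∃ i ∈ I, v = F.s i ∨ v = F.t i := by
  simp only [ends, mem_union, mem_image]
  grind

theorem ends_mono {I J : Set ι} (h : I ⊆ J) : F.ends I ⊆ F.ends J :=
  union_subset_union (image_mono h) (image_mono h)

theorem ends_union (I J : Set ι) : F.ends (I ∪ J) = F.ends I ∪ F.ends J := by
  simp only [ends, image_union]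
  exact union_union_union_comm ..

theorem ends_iUnion {κ : Sort*} (I : κ → Set ι) : F.ends (⋃ k, I k) = ⋃ k, F.ends (I k) := by
  simp only [ends, image_iUnion, iUnion_union_distrib]

theorem s_injective : Injective F.s := F.injective.comp Sum.inl_injective

theorem t_injective : Injective F.t := F.injective.comp Sum.inr_injective

theorem s_ne_t (i j : ι) : F.s i ≠ F.t j := fun h => by
  cases F.injective (a₁ := .inl i) (a₂ := .inr j) h

theorem disjoint_ends {I J : Set ι} (h : Disjoint I J) : Disjoint (F.ends I) (F.ends J) := by
  simp only [ends, disjoint_union_left, disjoint_union_right, disjoint_image_iff F.s_injective,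
    disjoint_image_iff F.t_injective, h, true_and, and_true]
  constructor <;> rw [Set.disjoint_left]
  · rintro _ ⟨i, -, rfl⟩ ⟨j, -, h⟩
    exact F.s_ne_t j i h
  · rintro _ ⟨i, -, rfl⟩ ⟨j, -, h⟩
    exact F.s_ne_t i j h.symm

end PathSystem

variable {V : Type u} {G H K : SimpleGraph V} {T S : Set V}

theorem hasTJoin_of_reachable {ι : Type*} (s t : ι → V) (H : ι → SimpleGraph V)
    (hHG : ∀ i, H i ≤ G) (hH : Pairwise (Disjoint on H)) (h : ∀ i, (H i).Reachable (s i) (t i))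
    (hst : Injective (Sum.elim s t)) : G.HasTJoin (range s ∪ range t) := by
  choose p hp using fun i => (h i).exists_isPath
  have eq_of_end : ∀ {i j v}, (s i = v ∨ t i = v) → (s j = v ∨ t j = v) → i = j := by
    intro i j v hi hj
    rcases hi with rfl | rfl <;> rcases hj with hj | hj
    · exact Sum.inl_injective (hst hj.symm)
    · cases hst (a₁ := .inl i) (a₂ := .inr j) hj.symm
    · cases hst (a₁ := .inl j) (a₂ := .inr i) hj
    · exact Sum.inr_injective (hst hj.symm)
  refine ⟨range fun i => ⟨s i, t i, (p i).mapLe (hHG i)⟩, ?_, ?_, ?_⟩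
  · rintro _ ⟨i, rfl⟩
    refine ⟨(hp i).mapLe _, fun hi => ?_, .inl ⟨i, rfl⟩, .inr ⟨i, rfl⟩⟩
    cases hst (a₁ := .inl i) (a₂ := .inr i) hi
  · rintro _ ⟨i, rfl⟩ _ ⟨j, rfl⟩ hij e hi hj
    rw [Walk.edges_mapLe_eq_edges] at hi hj
    refine Set.disjoint_left.1 (disjoint_edgeSet.2 (hH fun h : i = j => hij (by rw [h])))
      ((p i).edges_subset_edgeSet hi) ((p j).edges_subset_edgeSet hj)
  · rintro v hv
    obtain ⟨i, hi⟩ : ∃ i, s i = v ∨ t i = v := by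
      rcases hv with ⟨i, hi⟩ | ⟨i, hi⟩
      exacts [⟨i, .inl hi⟩, ⟨i, .inr hi⟩]
    refine ⟨_, ⟨⟨i, rfl⟩, hi⟩, ?_⟩
    rintro _ ⟨⟨j, rfl⟩, hj⟩
    rw [eq_of_end hj hi]

theorem HasTJoin.exists_pathSystem (h : G.HasTJoin T) :
    ∃ (ι : Type u) (F : PathSystem G ι), F.ends univ = T := by
  obtain ⟨P, hP, hdisj, hT⟩ := h
  have eq_of_end : ∀ {p q : P} {v}, v ∈ T → (p.1.1 = v ∨ p.1.2.1 = v) →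
      (q.1.1 = v ∨ q.1.2.1 = v) → p = q :=
    fun {p q v} hv hp hq => Subtype.ext ((hT v hv).unique ⟨p.2, hp⟩ ⟨q.2, hq⟩)
  refine ⟨P, ⟨fun p => p.1.1, fun p => p.1.2.1, fun p => p.1.2.2, fun p => (hP p p.2).1, ?_, ?_⟩,
    ?_⟩
  · intro p q hpq
    refine SimpleGraph.disjoint_left.2 fun x y hp hq => ?_
    exact hdisj p p.2 q q.2 (Subtype.coe_ne_coe.2 hpq) _ (walkGraph_adj.1 hp) (walkGraph_adj.1 hq)
  · have hst : ∀ p q : P, p.1.1 ≠ q.1.2.1 := fun p q hpq => by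
      obtain rfl := eq_of_end (hP p p.2).2.2.1 (.inl rfl) (.inr hpq.symm)
      exact (hP p p.2).2.1 hpq
    rintro (p | p) (q | q) hpq
    · exact congrArg _ (eq_of_end (hP p p.2).2.2.1 (.inl rfl) (.inl hpq.symm))
    · exact (hst p q hpq).elim
    · exact (hst q p hpq.symm).elim
    · exact congrArg _ (eq_of_end (hP p p.2).2.2.2 (.inr rfl) (.inr hpq.symm))
  · ext v
    simp only [PathSystem.mem_ends, mem_univ, true_and]
    constructor
    · rintro ⟨p, rfl | rfl⟩
      exacts [(hP p p.2).2.2.1, (hP p p.2).2.2.2]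
    · intro hv
      obtain ⟨p, ⟨hp, hpv⟩, -⟩ := hT v hv
      exact ⟨⟨p, hp⟩, hpv.imp Eq.symm Eq.symm⟩

theorem PathSystem.hasTJoin_iSup {ι : Type*} (F : PathSystem G ι) (I : Set ι) :
    (⨆ i ∈ I, F.graph i).HasTJoin (F.ends I) := by
  rw [PathSystem.ends, image_eq_range, image_eq_range]
  refine hasTJoin_of_reachable _ _ (fun i : I => F.graph i) (fun i => le_iSup₂_of_le i.1 i.2 le_rfl)
    (fun i j hij => F.disjoint (Subtype.coe_ne_coe.2 hij)) (fun i => F.reachable i) ?_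
  rintro (i | i) (j | j) hij
  · exact congrArg _ (Subtype.ext (F.s_injective hij))
  · exact (F.s_ne_t _ _ hij).elim
  · exact (F.s_ne_t _ _ hij.symm).elim
  · exact congrArg _ (Subtype.ext (F.t_injective hij))

theorem HasTJoin.mono (h : H.HasTJoin T) (hHG : H ≤ G) : G.HasTJoin T := by
  obtain ⟨ι, F, rfl⟩ := HasTJoin.exists_pathSystem h
  rw [PathSystem.ends, image_univ, image_univ]
  exact hasTJoin_of_reachable _ _ F.graph (fun i => (F.graph_le i).trans hHG) F.disjoint F.reachable
    F.injective

theorem HasTJoin.empty : H.HasTJoin ∅ := by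
  simpa only [range_eq_empty, union_empty] using
    hasTJoin_of_reachable (G := H) (ι := Empty) nofun nofun nofun nofun nofun nofun
      (injective_of_subsingleton _)

theorem HasTJoin.pair {a b : V} (hab : a ≠ b) (h : H.Reachable a b) : H.HasTJoin {a, b} := by
  have := hasTJoin_of_reachable (G := H) (ι := Unit) (fun _ => a) (fun _ => b) (fun _ => H)
    (fun _ => le_rfl) (fun i j hij => (hij rfl).elim) (fun _ => h) (by
      rintro (_ | _) (_ | _) h
      exacts [rfl, (hab h).elim, (hab h.symm).elim, rfl])
  rwa [range_const, range_const, ← insert_eq] at this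

theorem HasTJoin.iUnion {ι : Type*} {H : ι → SimpleGraph V} {T : ι → Set V}
    (hH : Pairwise (Disjoint on H)) (hT : Pairwise (Disjoint on T))
    (h : ∀ i, (H i).HasTJoin (T i)) :
    (⨆ i, H i).HasTJoin (⋃ i, T i) := by
  choose κ F hF using fun i => HasTJoin.exists_pathSystem (h i)
  have heq : ⋃ i, T i = (range fun k : Σ i, κ i => (F k.1).s k.2) ∪
      range fun k : Σ i, κ i => (F k.1).t k.2 := by
    simp only [← hF, PathSystem.ends, image_univ, iUnion_union_distrib, range_sigma_eq_iUnion_range]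
  have hmem : ∀ i (x : κ i ⊕ κ i), Sum.elim (F i).s (F i).t x ∈ T i := by
    rintro i (k | k) <;> rw [← hF i]
    exacts [.inl (mem_image_of_mem _ (mem_univ k)), .inr (mem_image_of_mem _ (mem_univ k))]
  rw [heq]
  refine hasTJoin_of_reachable _ _ (fun k => (F k.1).graph k.2)
    (fun k => ((F k.1).graph_le k.2).trans (le_iSup H k.1)) ?_ (fun k => (F k.1).reachable k.2) ?_
  · rintro ⟨i, k⟩ ⟨j, l⟩ hne
    obtain rfl | hij := eq_or_ne i j
    · exact (F i).disjoint fun hkl : k = l => hne (by rw [hkl])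
    · exact (hH hij).mono ((F i).graph_le k) ((F j).graph_le l)
  · have hfst : ∀ i j (x : κ i ⊕ κ i) (y : κ j ⊕ κ j),
        Sum.elim (F i).s (F i).t x = Sum.elim (F j).s (F j).t y → i = j := by
      intro i j x y hxy
      by_contra hij
      exact Set.disjoint_left.1 (hT hij) (hmem i x) (hxy ▸ hmem j y)
    rintro (⟨i, k⟩ | ⟨i, k⟩) (⟨j, l⟩ | ⟨j, l⟩) hkl
    · obtain rfl := hfst i j (.inl k) (.inl l) hkl
      exact congrArg (Sum.inl ∘ Sigma.mk i) ((F i).s_injective hkl)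
    · obtain rfl := hfst i j (.inl k) (.inr l) hkl
      exact ((F i).s_ne_t k l hkl).elim
    · obtain rfl := hfst i j (.inr k) (.inl l) hkl
      exact ((F i).s_ne_t l k hkl.symm).elim
    · obtain rfl := hfst i j (.inr k) (.inr l) hkl
      exact congrArg (Sum.inr ∘ Sigma.mk i) ((F i).t_injective hkl)

theorem HasTJoin.sup (hHK : Disjoint H K) (hTS : Disjoint T S) (h : H.HasTJoin T)
    (h' : K.HasTJoin S) : (H ⊔ K).HasTJoin (T ∪ S) := by
  rw [sup_eq_iSup, union_eq_iUnion]
  refine HasTJoin.iUnion ?_ ?_ (Bool.rec h' h)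
  · rintro (_ | _) (_ | _) hij
    exacts [(hij rfl).elim, hHK.symm, hHK, (hij rfl).elim]
  · rintro (_ | _) (_ | _) hij
    exacts [(hij rfl).elim, hTS.symm, hTS, (hij rfl).elim]

theorem HasTJoin.even_ncard (h : H.HasTJoin T) (hT : T.Finite) : Even T.ncard := by
  obtain ⟨ι, F, rfl⟩ := HasTJoin.exists_pathSystem h
  have hι : Finite ι := finite_univ_iff.1
    ((hT.subset subset_union_left).of_finite_image F.s_injective.injOn)
  have heq : F.ends univ = range (Sum.elim F.s F.t) := by
    rw [PathSystem.ends, image_univ, image_univ, Sum.elim_range]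
  rw [heq, ← image_univ, ncard_image_of_injective _ F.injective, ncard_univ, Nat.card_sum]
  exact ⟨_, rfl⟩

end PathSystem

section DanglingTJoin

variable {V : Type*} {G H H' K : SimpleGraph V} {T T' S : Set V} {x y z z' : V}

/-- A dangling `T`-join in `H`: all of `T` is joined except for one vertex, which a further
connection, edge-disjoint from the join, attaches to the vertex `z`. -/
def HasDanglingTJoin (H : SimpleGraph V) (T : Set V) (z : V) : Prop :=
  ∃ τ ∈ T, ∃ K ≤ H, K.Reachable τ z ∧ (H \ K).HasTJoin (T \ {τ})

/-- What a connected graph always contains: a `T`-join or one dangling at `z`. -/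
def HasPartialTJoin (H : SimpleGraph V) (T : Set V) (z : V) : Prop :=
  H.HasTJoin T ∨ HasDanglingTJoin H T z

theorem HasDanglingTJoin.mono (h : HasDanglingTJoin H T z) (hHG : H ≤ G) :
    HasDanglingTJoin G T z := by
  obtain ⟨τ, hτ, K, hK, hr, hj⟩ := h
  exact ⟨τ, hτ, K, hK.trans hHG, hr, HasTJoin.mono hj (sdiff_le_sdiff_right hHG)⟩

theorem HasPartialTJoin.mono (h : HasPartialTJoin H T z) (hHG : H ≤ G) : HasPartialTJoin G T z :=
  h.imp (HasTJoin.mono · hHG) (HasDanglingTJoin.mono · hHG)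

theorem HasDanglingTJoin.singleton : HasDanglingTJoin H {z} z :=
  ⟨z, rfl, ⊥, bot_le, .rfl, by simpa only [Set.sdiff_self] using HasTJoin.empty⟩

theorem HasDanglingTJoin.extend (h : HasDanglingTJoin H T z) (hHK : Disjoint H K)
    (hK : K.Reachable z z') : HasDanglingTJoin (H ⊔ K) T z' := by
  obtain ⟨τ, hτ, A, hA, hr, hj⟩ := h
  refine ⟨τ, hτ, A ⊔ K, sup_le_sup_right hA K, (hr.mono le_sup_left).trans (hK.mono le_sup_right),
    HasTJoin.mono hj (le_sdiff.2 ⟨sdiff_le.trans le_sup_left, ?_⟩)⟩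
  exact disjoint_sup_right.2 ⟨disjoint_sdiff_self_left, hHK.mono_left sdiff_le⟩

theorem HasPartialTJoin.extend (h : HasPartialTJoin H T z) (hHK : Disjoint H K)
    (hK : K.Reachable z z') : HasPartialTJoin (H ⊔ K) T z' :=
  h.imp (HasTJoin.mono · le_sup_left) (HasDanglingTJoin.extend · hHK hK)

theorem HasDanglingTJoin.sup (hHK : Disjoint H K) (hTS : Disjoint T S)
    (h : HasDanglingTJoin H T z) (h' : K.HasTJoin S) : HasDanglingTJoin (H ⊔ K) (T ∪ S) z := by
  obtain ⟨τ, hτ, A, hA, hr, hj⟩ := h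
  refine ⟨τ, .inl hτ, A, hA.trans le_sup_left, hr, ?_⟩
  rw [sup_sdiff, (hHK.mono_left hA).symm.sdiff_eq_left, union_sdiff_distrib,
    sdiff_singleton_eq_self (hTS.notMem_of_mem_left hτ)]
  exact HasTJoin.sup (hHK.mono_left sdiff_le) (hTS.mono_left sdiff_subset) hj h'

theorem HasDanglingTJoin.hasTJoin_sup (hHH' : Disjoint H H') (hHK : Disjoint (H ⊔ H') K)
    (hTT' : Disjoint T T') (h : HasDanglingTJoin H T z) (h' : HasDanglingTJoin H' T' z')
    (hK : K.Reachable z z') : (H ⊔ H' ⊔ K).HasTJoin (T ∪ T') := by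
  obtain ⟨τ, hτ, A, hA, hr, hj⟩ := h
  obtain ⟨τ', hτ', A', hA', hr', hj'⟩ := h'
  have hlink : (A ⊔ A' ⊔ K).HasTJoin {τ, τ'} :=
    HasTJoin.pair (hTT'.ne_of_mem hτ hτ') ((hr.mono (le_sup_left.trans le_sup_left)).trans
      ((hK.mono le_sup_right).trans (hr'.mono (le_sup_right.trans le_sup_left)).symm))
  have hrest : (H \ A ⊔ H' \ A').HasTJoin (T \ {τ} ∪ T' \ {τ'}) :=
    HasTJoin.sup (hHH'.mono sdiff_le sdiff_le) (hTT'.mono sdiff_subset sdiff_subset) hj hj'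
  have hdisj : Disjoint (H \ A ⊔ H' \ A') (A ⊔ A' ⊔ K) := by
    refine disjoint_sup_right.2 ⟨disjoint_sup_right.2 ⟨?_, ?_⟩,
      hHK.mono_left (sup_le_sup sdiff_le sdiff_le)⟩
    · exact disjoint_sup_left.2 ⟨disjoint_sdiff_self_left, hHH'.symm.mono sdiff_le hA⟩
    · exact disjoint_sup_left.2 ⟨hHH'.mono sdiff_le hA', disjoint_sdiff_self_left⟩
  have hT : T \ {τ} ∪ T' \ {τ'} ∪ {τ, τ'} = T ∪ T' := by grind
  rw [← hT]
  refine HasTJoin.mono (HasTJoin.sup hdisj (by grind) hrest hlink) (sup_le ?_ ?_)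
  · exact (sup_le_sup sdiff_le sdiff_le).trans le_sup_left
  · exact sup_le_sup_right (sup_le_sup hA hA') K

theorem disjoint_biSup_biSup {α ι : Type*} [Order.Frame α] {f : ι → α} {I J : Set ι}
    (hf : Pairwise (Disjoint on f)) (hIJ : Disjoint I J) :
    Disjoint (⨆ i ∈ I, f i) (⨆ j ∈ J, f j) :=
  disjoint_iSup₂_iff.2 fun _ hj => iSup₂_disjoint_iff.2 fun _ hi => hf (hIJ.ne_of_mem hi hj)

theorem hasTJoin_of_links {ι κ : Type*} {I : Set ι} {H : ι → SimpleGraph V} {T : ι → Set V}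
    {q : ι → V} {K : κ → SimpleGraph V} {f : Bool × κ → ι} (hH : Pairwise (Disjoint on H))
    (hT : Pairwise (Disjoint on T)) (hK : Pairwise (Disjoint on K))
    (hHK : ∀ i k, Disjoint (H i) (K k)) (hf : Injective f) (hfI : range f ⊆ I)
    (hd : ∀ i ∈ range f, HasDanglingTJoin (H i) (T i) (q i))
    (hfull : ∀ i ∈ I \ range f, (H i).HasTJoin (T i))
    (hlink : ∀ k, (K k).Reachable (q (f (false, k))) (q (f (true, k)))) :
    ((⨆ i ∈ I, H i) ⊔ ⨆ k, K k).HasTJoin (⋃ i ∈ I, T i) := by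
  let B : κ ⊕ ↥(I \ range f) → Set ι := Sum.elim (fun k => range fun c => f (c, k)) fun i => {i.1}
  let L : κ ⊕ ↥(I \ range f) → SimpleGraph V := Sum.elim K ⊥
  have hB : Pairwise (Disjoint on B) := by
    rintro (i | i) (j | j) hij <;> refine Set.disjoint_left.2 ?_ <;> grind [Injective]
  have hBI : ⋃ b, B b = I := by
    have hrange : ⋃ k, range (fun c => f (c, k)) = range f := by
      ext
      simp only [mem_iUnion, mem_range, Prod.exists]
      exact exists_comm
    rw [iUnion_sum]
    simp only [B, Sum.elim_inl, Sum.elim_inr, hrange, iUnion_of_singleton_coe]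
    exact union_sdiff_cancel hfI
  have hHL : ∀ i b, Disjoint (H i) (L b) := fun i =>
    Sum.rec (hHK i) fun _ => disjoint_bot_right
  have hL : Pairwise (Disjoint on L) := by
    rintro (i | i) (j | j) hij
    exacts [hK (ne_of_apply_ne _ hij), disjoint_bot_right, disjoint_bot_left, disjoint_bot_left]
  have hblock : Pairwise (Disjoint on fun b => (⨆ i ∈ B b, H i) ⊔ L b) := fun b c hbc => by
    refine disjoint_sup_left.2 ⟨disjoint_sup_right.2 ⟨disjoint_biSup_biSup hH (hB hbc), ?_⟩,
      disjoint_sup_right.2 ⟨?_, hL hbc⟩⟩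
    exacts [iSup₂_disjoint_iff.2 fun i _ => hHL i c, disjoint_iSup₂_iff.2 fun i _ => (hHL i b).symm]
  have hjoin : ∀ b, ((⨆ i ∈ B b, H i) ⊔ L b).HasTJoin (⋃ i ∈ B b, T i) := by
    rintro (k | i)
    · simp only [B, L, Sum.elim_inl, iSup_range, ← iSup_eq_iUnion, iSup_bool_eq]
      have hne : f (true, k) ≠ f (false, k) := hf.ne (by simp)
      exact HasDanglingTJoin.hasTJoin_sup (hH hne) (disjoint_sup_left.2 ⟨hHK _ _, hHK _ _⟩)
        (hT hne) (hd _ ⟨_, rfl⟩) (hd _ ⟨_, rfl⟩) (hlink k).symm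
    · simpa [B, L] using hfull i i.2
  have hLK : ⨆ b, L b = ⨆ k, K k := by
    simp only [L, iSup_sum, Sum.elim_inl, Sum.elim_inr, Pi.bot_apply, iSup_bot, sup_bot_eq]
  rw [← hBI, ← hLK, iSup_iUnion, biUnion_iUnion, ← iSup_sup_eq]
  exact HasTJoin.iUnion hblock (fun b c hbc => disjoint_biSup_biSup hT (hB hbc)) hjoin

theorem exists_pairing {ι : Type w} (X : Set ι) :
    ∃ (κ : Type w) (f : Bool × κ → ι), Injective f ∧ range f ⊆ X ∧ (X \ range f).Subsingleton := by
  obtain ⟨κ, h | h⟩ :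
      ∃ κ : Type w, Nonempty (Bool × κ ≃ X) ∨ Nonempty (Option (Bool × κ) ≃ X) := by
    cases finite_or_infinite X
    · obtain ⟨m, hm | hm⟩ := (Nat.card X).even_or_odd'
      · exact ⟨ULift (Fin m), .inl (Finite.card_eq.1 (by simp [hm]))⟩
      · exact ⟨ULift (Fin m), .inr (Finite.card_eq.1 (by simp [hm]))⟩
    · have hX := Cardinal.aleph0_le_mk X
      exact ⟨X, .inl (Cardinal.eq.1 (by
        simpa using Cardinal.mul_eq_right hX (Cardinal.ofNat_le_aleph0.trans hX) two_ne_zero))⟩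
  · obtain ⟨e⟩ := h
    refine ⟨κ, fun k => e k, Subtype.val_injective.comp e.injective, ?_, ?_⟩
    · rintro _ ⟨k, rfl⟩
      exact (e k).2
    · rintro x ⟨hx, hx'⟩
      exact (hx' ⟨e.symm ⟨x, hx⟩, congrArg Subtype.val (e.apply_symm_apply _)⟩).elim
  · obtain ⟨e⟩ := h
    refine ⟨κ, fun k => e (some k),
      Subtype.val_injective.comp (e.injective.comp (Option.some_injective _)), ?_, ?_⟩
    · rintro _ ⟨k, rfl⟩
      exact (e _).2
    · have heq : ∀ x ∈ X \ range fun k => (e (some k) : ι), x = e none := by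
        rintro x ⟨hx, hx'⟩
        obtain ⟨k | k, hk⟩ := e.surjective ⟨x, hx⟩
        · rw [hk]
        · exact (hx' ⟨k, congrArg Subtype.val hk⟩).elim
      exact fun x hx y hy => (heq x hx).trans (heq y hy).symm

theorem HasPartialTJoin.iUnion {ι : Type*} {H : ι → SimpleGraph V} {T : ι → Set V}
    (hH : Pairwise (Disjoint on H)) (hT : Pairwise (Disjoint on T))
    (h : ∀ i, HasPartialTJoin (H i) (T i) z) : HasPartialTJoin (⨆ i, H i) (⋃ i, T i) z := by
  obtain ⟨κ, f, hf, hsub, hrest⟩ := exists_pairing {i | ¬ (H i).HasTJoin (T i)}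
  have hd : ∀ i ∈ range f, HasDanglingTJoin (H i) (T i) z :=
    fun i hi => (h i).resolve_left (hsub hi)
  have hlink : ∀ I : Set ι, range f ⊆ I → (∀ i ∈ I \ range f, (H i).HasTJoin (T i)) →
      (⨆ i ∈ I, H i).HasTJoin (⋃ i ∈ I, T i) := fun I hI hfull => by
    simpa only [iSup_bot, sup_bot_eq] using hasTJoin_of_links (K := fun _ => ⊥) hH hT
      (fun _ _ _ => disjoint_bot_left) (fun _ _ => disjoint_bot_right) hf hI hd hfull fun _ => .rfl
  obtain hempty | ⟨i₀, hi₀⟩ := hrest.eq_empty_or_singleton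
  · left
    simpa only [mem_univ, iSup_pos, iUnion_true] using hlink univ (subset_univ _) fun i hi => by
      by_contra hi'
      exact hempty.subset ⟨hi', hi.2⟩
  · right
    have hi : i₀ ∈ {i | ¬ (H i).HasTJoin (T i)} \ range f := hi₀ ▸ rfl
    have hothers : (⨆ i ∈ ({i₀}ᶜ : Set ι), H i).HasTJoin (⋃ i ∈ ({i₀}ᶜ : Set ι), T i) := by
      refine hlink _ (fun i hi' h => hi.2 (h ▸ hi')) fun i hi' => ?_
      by_contra hi''
      exact hi'.1 (hi₀.subset ⟨hi'', hi'.2⟩)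
    rw [iSup_split_single H i₀, ← iSup_eq_iUnion, iSup_split_single T i₀]
    refine HasDanglingTJoin.sup ?_ ?_ ((h i₀).resolve_left hi.1) hothers
    · exact disjoint_iSup₂_iff.2 fun i hi => hH (Ne.symm hi)
    · exact disjoint_iSup₂_iff.2 fun i hi => hT (Ne.symm hi)

theorem hasTJoin_of_ray {H K : ℕ → SimpleGraph V} {T : ℕ → Set V} {q : ℕ → V}
    (hH : Pairwise (Disjoint on H)) (hT : Pairwise (Disjoint on T)) (hK : Pairwise (Disjoint on K))
    (hHK : ∀ m n, Disjoint (H m) (K n)) (hq : ∀ n, (K n).Reachable (q n) (q (n + 1)))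
    (h : ∀ n, HasPartialTJoin (H n) (T n) (q n)) (hinf : {n | ¬ (H n).HasTJoin (T n)}.Infinite) :
    ((⨆ n, H n) ⊔ ⨆ n, K n).HasTJoin (⋃ n, T n) := by
  let e := Nat.nth fun n => ¬ (H n).HasTJoin (T n)
  have he : StrictMono e := Nat.nth_strictMono hinf
  have hrange : range e = {n | ¬ (H n).HasTJoin (T n)} := Nat.range_nth_of_infinite hinf
  have hreach : ∀ m n, m ≤ n → (⨆ k ∈ Ico m n, K k).Reachable (q m) (q n) := by
    intro m n hmn
    induction n, hmn using Nat.le_induction with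
    | base => exact .rfl
    | succ n hmn ih =>
      exact (ih.mono (biSup_mono fun k hk => ⟨hk.1, hk.2.trans n.lt_succ_self⟩)).trans
        ((hq n).mono (le_iSup₂_of_le n ⟨hmn, n.lt_succ_self⟩ le_rfl))
  have hIco : Pairwise (Disjoint on fun k => Ico (e (2 * k)) (e (2 * k + 1))) := by
    refine (pairwise_disjoint_on _).2 fun k l hkl => Set.disjoint_left.2 fun n hn hn' => ?_
    exact absurd (hn.2.trans_le (he.monotone (by lia))) (not_lt.2 hn'.1)
  have := hasTJoin_of_links (I := univ) (K := fun k => ⨆ n ∈ Ico (e (2 * k)) (e (2 * k + 1)), K n)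
    (f := e ∘ Equiv.boolProdNatEquivNat) hH hT (fun k l hkl => disjoint_biSup_biSup hK (hIco hkl))
    (fun m k => disjoint_iSup₂_iff.2 fun n _ => hHK m n)
    (he.injective.comp (Equiv.injective _)) (subset_univ _) ?_ ?_
    fun k => hreach _ _ (he (2 * k).lt_succ_self).le
  · simp only [mem_univ, iSup_pos, iUnion_true] at this
    exact HasTJoin.mono this (sup_le_sup_left (iSup_le fun k => iSup₂_le fun n _ => le_iSup K n) _)
  · rw [EquivLike.range_comp, hrange]
    exact fun n hn => (h n).resolve_left hn
  · rw [EquivLike.range_comp, hrange]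
    exact fun n hn => not_not.1 hn.2

end DanglingTJoin

/-! ### Connected graphs -/

theorem bijective_iterate_prod {α : Type*} {f : α → α} {d : α → ℕ} (hf : Injective f)
    (hd : ∀ a, d a < d (f a)) : Bijective fun p : ↥(range f)ᶜ × ℕ => f^[p.2] p.1 := by
  have hsub : ∀ {a b : ↥(range f)ᶜ} {m n : ℕ}, m ≤ n → f^[m] a = f^[n] b → a = b ∧ m = n := by
    intro a b m n hmn h
    obtain ⟨k, rfl⟩ := Nat.exists_eq_add_of_le hmn
    have hab : (a : α) = f^[k] b := (hf.iterate m) (by rw [h, iterate_add_apply])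
    cases k with
    | zero => exact ⟨Subtype.ext hab, rfl⟩
    | succ k => exact (a.2 ⟨f^[k] b, by rw [hab, iterate_succ_apply']⟩).elim
  constructor
  · rintro ⟨a, m⟩ ⟨b, n⟩ h
    obtain hmn | hnm := le_total m n
    · exact Prod.ext_iff.2 (hsub hmn h)
    · exact (Prod.ext_iff.2 (hsub hnm h.symm)).symm
  · intro a
    induction h : d a using Nat.strong_induction_on generalizing a with
    | _ n ih =>
      by_cases ha : a ∈ range f
      · obtain ⟨b, rfl⟩ := ha
        obtain ⟨⟨c, k⟩, rfl⟩ := ih _ (h ▸ hd b) b rfl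
        exact ⟨⟨c, k + 1⟩, iterate_succ_apply' ..⟩
      · exact ⟨⟨⟨a, ha⟩, 0⟩, rfl⟩

theorem infinite_setOf_iterate {α : Type*} {f g : α → α} {d : α → ℕ} {P : α → Prop}
    (hf : ∀ a, d a < d (f a)) (hfg : ∀ a, d (f a) ≤ d (g a))
    (hg : ∀ a, ¬ P (f a) → d (g (f a)) ≤ d (g a)) (a : α) : {n | P (f^[n] a)}.Infinite := by
  intro hfin
  obtain ⟨m, hm⟩ := hfin.bddAbove
  have hd : StrictMono fun n => d (f^[n] a) := strictMono_nat_of_lt_succ fun n => by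
    simpa only [iterate_succ_apply'] using hf (f^[n] a)
  have hg_le : ∀ k, d (g (f^[m + k] a)) ≤ d (g (f^[m] a)) := by
    intro k
    induction k with
    | zero => rfl
    | succ k ih =>
      have hP : ¬ P (f^[m + k + 1] a) := fun h => (hm h).not_gt (by lia)
      rw [iterate_succ_apply'] at hP
      rw [← add_assoc, iterate_succ_apply']
      exact (hg _ hP).trans ih
  have h₁ := hg_le (d (g (f^[m] a)))
  have h₂ := hfg (f^[m + d (g (f^[m] a))] a)
  rw [← iterate_succ_apply' f] at h₂
  have h₃ : m + d (g (f^[m] a)) + 1 ≤ d (f^[m + d (g (f^[m] a)) + 1] a) := hd.le_apply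
  lia

/-- A rooted forest on `V`, given by the parent map. The roots are the vertices of depth `0`; the
value of `parent` there is irrelevant. -/
structure RootedForest (V : Type*) where
  depth : V → ℕ
  parent : V → V
  depth_parent_add_one (v : V) : 0 < depth v → depth (parent v) + 1 = depth v

namespace RootedForest

variable {V : Type*} (R : RootedForest V) {T X Y C : Set V} {c r u v w : V}

/-- The children of `v` in the rooted forest. -/
def children (v : V) : Set V := {c | 0 < R.depth c ∧ R.parent c = v}

/-- The descendants of `v` in the rooted forest, including `v` itself. -/
def below (v : V) : Set V := {u | ∃ k, R.depth u = R.depth v + k ∧ R.parent^[k] u = v}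

/-- The edges joining the vertices of `X` to their parents. -/
def parentGraph (X : Set V) : SimpleGraph V :=
  fromRel fun c v => c ∈ X ∧ c ∈ R.children v

variable {R}

theorem depth_of_mem_children (hc : c ∈ R.children v) : R.depth c = R.depth v + 1 := by
  rw [← hc.2, R.depth_parent_add_one c hc.1]

theorem mem_below_self : v ∈ R.below v := ⟨0, rfl, rfl⟩

theorem depth_le_of_mem_below (h : u ∈ R.below v) : R.depth v ≤ R.depth u := by
  obtain ⟨k, hk, -⟩ := h
  lia

theorem mem_below_trans (huv : u ∈ R.below v) (hvw : v ∈ R.below w) : u ∈ R.below w := by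
  obtain ⟨k, hk, rfl⟩ := huv
  obtain ⟨l, hl, rfl⟩ := hvw
  exact ⟨l + k, by lia, iterate_add_apply ..⟩

theorem eq_of_mem_below (huv : u ∈ R.below v) (h : R.depth u ≤ R.depth v) : u = v := by
  obtain ⟨k, hk, rfl⟩ := huv
  obtain rfl : k = 0 := by lia
  rfl

theorem mem_below_of_depth_le (huv : u ∈ R.below v) (huw : u ∈ R.below w)
    (h : R.depth v ≤ R.depth w) : w ∈ R.below v := by
  obtain ⟨k, hk, rfl⟩ := huv
  obtain ⟨l, hl, rfl⟩ := huw
  exact ⟨k - l, by lia, by rw [← iterate_add_apply, Nat.sub_add_cancel (by lia)]⟩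

theorem mem_below_of_mem_children (hc : c ∈ R.children v) : c ∈ R.below v :=
  ⟨1, depth_of_mem_children hc, hc.2⟩

theorem parent_mem_below (huv : u ∈ R.below v) (h : u ≠ v) :
    u ∈ R.children (R.parent u) ∧ R.parent u ∈ R.below v := by
  obtain ⟨_ | k, hk, rfl⟩ := huv
  · exact (h rfl).elim
  · have hu : 0 < R.depth u := by lia
    exact ⟨⟨hu, rfl⟩, k, by have := R.depth_parent_add_one u hu; lia, rfl⟩

theorem exists_mem_children_of_mem_below (huv : u ∈ R.below v) (h : u ≠ v) :
    ∃ c ∈ R.children v, u ∈ R.below c := by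
  obtain ⟨k, hk, hu⟩ := huv
  induction k generalizing u with
  | zero => exact (h hu).elim
  | succ k ih =>
    obtain ⟨hpu, -⟩ := parent_mem_below ⟨_, hk, hu⟩ h
    have hdepth := depth_of_mem_children hpu
    by_cases hv : R.parent u = v
    · exact ⟨u, hv ▸ hpu, mem_below_self⟩
    · obtain ⟨c, hc, huc⟩ := ih hv (by lia) hu
      exact ⟨c, hc, mem_below_trans (mem_below_of_mem_children hpu) huc⟩

theorem disjoint_below_of_mem_children {c' : V} (hc : c ∈ R.children v) (hc' : c' ∈ R.children v)
    (h : c ≠ c') : Disjoint (R.below c) (R.below c') := by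
  have hdepth := (depth_of_mem_children hc).trans (depth_of_mem_children hc').symm
  refine Set.disjoint_left.2 fun u hu hu' => h (Eq.symm ?_)
  exact eq_of_mem_below (mem_below_of_depth_le hu hu' hdepth.le) hdepth.ge

theorem notMem_below_of_mem_children (hc : c ∈ R.children v) : v ∉ R.below c := fun hv => by
  have := depth_of_mem_children hc
  have := depth_le_of_mem_below hv
  lia

theorem parentGraph_mono (h : X ⊆ Y) : R.parentGraph X ≤ R.parentGraph Y := by
  refine fun u v huv => ?_
  simp only [parentGraph, fromRel_adj] at huv ⊢
  exact ⟨huv.1, huv.2.imp (And.imp_left (@h u)) (And.imp_left (@h v))⟩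

theorem disjoint_parentGraph (h : Disjoint X Y) :
    Disjoint (R.parentGraph X) (R.parentGraph Y) := by
  refine SimpleGraph.disjoint_left.2 fun u v hu hv => ?_
  simp only [parentGraph, fromRel_adj] at hu hv
  rcases hu.2 with ⟨hX, hc⟩ | ⟨hX, hc⟩ <;> rcases hv.2 with ⟨hY, hc'⟩ | ⟨hY, hc'⟩
  on_goal 1 => exact Set.disjoint_left.1 h hX hY
  on_goal 3 => exact Set.disjoint_left.1 h hX hY
  all_goals
    have := depth_of_mem_children hc
    have := depth_of_mem_children hc'
    lia

theorem parentGraph_singleton_reachable (hc : c ∈ R.children v) :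
    (R.parentGraph {c}).Reachable c v := by
  refine Adj.reachable ((fromRel_adj ..).2 ⟨fun h => ?_, .inl ⟨rfl, hc⟩⟩)
  exact notMem_below_of_mem_children hc (h ▸ mem_below_self)

/-- The set `X` of descendants of `w` can be dealt with inside `X`, leaving over at most one vertex
of `T`, which is then connected to `w`. -/
def IsGood (R : RootedForest V) (T X : Set V) (w : V) : Prop :=
  HasPartialTJoin (R.parentGraph (X \ {w})) (T ∩ X) w

theorem isGood_insert_biUnion (hC : C ⊆ R.children v)
    (h : ∀ c ∈ C, R.IsGood T (R.below c) c) :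
    R.IsGood T (insert v (⋃ c ∈ C, R.below c)) v := by
  let X : Option C → Set V := fun o => o.elim {v} fun c => R.below c
  have hX : Pairwise (Disjoint on X) := by
    rintro (_ | c) (_ | c') hne
    · exact (hne rfl).elim
    · exact Set.disjoint_singleton_left.2 (notMem_below_of_mem_children (hC c'.2))
    · exact Set.disjoint_singleton_right.2 (notMem_below_of_mem_children (hC c.2))
    · exact disjoint_below_of_mem_children (hC c.2) (hC c'.2)
        (Subtype.coe_ne_coe.2 fun h => hne (by rw [h]))
  have hpart : ∀ o, HasPartialTJoin (R.parentGraph (X o \ {v})) (T ∩ X o) v := by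
    rintro (_ | ⟨c, hc⟩)
    · by_cases hv : v ∈ T
      · have hT : T ∩ X none = {v} := inter_eq_right.2 (singleton_subset_iff.2 hv)
        exact .inr (by rw [hT]; exact .singleton)
      · have hT : T ∩ X none = ∅ := inter_singleton_eq_empty.2 hv
        exact .inl (hT ▸ HasTJoin.empty)
    · refine ((h c hc).extend (disjoint_parentGraph disjoint_sdiff_self_left)
        (parentGraph_singleton_reachable (hC hc))).mono (sup_le ?_ ?_) <;>
        refine parentGraph_mono (subset_sdiff_singleton ?_ ?_)
      · exact sdiff_subset
      · exact fun hv => notMem_below_of_mem_children (hC hc) hv.1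
      · exact singleton_subset_iff.2 mem_below_self
      · rintro rfl
        exact notMem_below_of_mem_children (hC hc) mem_below_self
  have hunion : insert v (⋃ c ∈ C, R.below c) = ⋃ o, X o := by
    rw [iUnion_option, insert_eq, biUnion_eq_iUnion]
    rfl
  rw [IsGood, hunion, inter_iUnion]
  refine (HasPartialTJoin.iUnion (fun o o' ho => ?_) (fun o o' ho => ?_) hpart).mono
    (iSup_le fun o => parentGraph_mono (sdiff_subset_sdiff_left (subset_iUnion X o)))
  · exact disjoint_parentGraph ((hX ho).mono sdiff_subset sdiff_subset)
  · exact (hX ho).mono inter_subset_right inter_subset_right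

/-- The descendants of `r` reached from `r` through vertices `c` which are *bad*, meaning that
`R.below c` is not good. -/
def badRegion (R : RootedForest V) (T : Set V) (r : V) : Set V :=
  {v | Relation.ReflTransGen (fun u c => c ∈ R.children u ∧ ¬ R.IsGood T (R.below c) c) r v}

/-- The part of `R.below w` hanging off the bad region at `w`. -/
def bag (R : RootedForest V) (T : Set V) (r w : V) : Set V :=
  insert w (⋃ c ∈ R.children w \ R.badRegion T r, R.below c)

theorem mem_bag : u ∈ R.bag T r w ↔
    u = w ∨ ∃ c ∈ R.children w, c ∉ R.badRegion T r ∧ u ∈ R.below c := by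
  simp only [bag, mem_insert_iff, mem_iUnion₂, mem_sdiff, exists_prop, and_assoc]

theorem mem_below_of_mem_badRegion (hv : v ∈ R.badRegion T r) : v ∈ R.below r := by
  induction hv with
  | refl => exact mem_below_self
  | tail _ h ih => exact mem_below_trans (mem_below_of_mem_children h.1) ih

theorem mem_badRegion_of_mem_below (hv : v ∈ R.badRegion T r) (hc : v ∈ R.below c)
    (hcr : c ∈ R.below r) : c ∈ R.badRegion T r := by
  induction hv with
  | refl => exact eq_of_mem_below hcr (depth_le_of_mem_below hc) ▸ .refl
  | @tail u v hu h ih =>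
    obtain rfl | hne := eq_or_ne v c
    · exact hu.tail h
    · exact ih (h.1.2 ▸ (parent_mem_below hc hne).2)

theorem bag_subset_below : R.bag T r w ⊆ R.below w := fun u hu => by
  obtain rfl | ⟨c, hc, -, huc⟩ := mem_bag.1 hu
  · exact mem_below_self
  · exact mem_below_trans huc (mem_below_of_mem_children hc)

theorem exists_mem_bag (hu : u ∈ R.below r) : ∃ w ∈ R.badRegion T r, u ∈ R.bag T r w := by
  obtain ⟨k, hk, hur⟩ := id hu
  induction k generalizing u with
  | zero => exact ⟨r, .refl, mem_bag.2 (.inl hur)⟩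
  | succ k ih =>
    by_cases hN : u ∈ R.badRegion T r
    · exact ⟨u, hN, mem_bag.2 (.inl rfl)⟩
    · obtain ⟨hpu, hpr⟩ := parent_mem_below hu fun h => hN (h ▸ .refl)
      have hdepth := depth_of_mem_children hpu
      obtain ⟨w, hw, hpw⟩ := ih hpr (by lia) hur
      refine ⟨w, hw, mem_bag.2 (.inr ?_)⟩
      obtain hpw | ⟨c, hc, hcN, huc⟩ := mem_bag.1 hpw
      · exact ⟨u, hpw ▸ hpu, hN, mem_below_self⟩
      · exact ⟨c, hc, hcN, mem_below_trans (mem_below_of_mem_children hpu) huc⟩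

theorem mem_below_of_mem_bag {w' : V} (hw : w ∈ R.badRegion T r) (hw' : w' ∈ R.badRegion T r)
    (hu : u ∈ R.below w) (hu' : u ∈ R.bag T r w') : w' ∈ R.below w := by
  refine mem_below_of_depth_le hu (bag_subset_below hu') (not_lt.1 fun hlt => ?_)
  obtain rfl | ⟨c, hc, hcN, huc⟩ := mem_bag.1 hu'
  · exact hlt.not_ge (depth_le_of_mem_below hu)
  · refine hcN (mem_badRegion_of_mem_below hw (mem_below_of_depth_le huc hu ?_) ?_)
    · exact (depth_of_mem_children hc).trans_le hlt
    · exact mem_below_trans (mem_below_of_mem_children hc) (mem_below_of_mem_badRegion hw')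

theorem pairwise_disjoint_bag :
    Pairwise (Disjoint on fun w : R.badRegion T r => R.bag T r w) := by
  refine fun w w' hne => Set.disjoint_left.2 fun u hu hu' => hne (Subtype.ext ?_)
  refine eq_of_mem_below (mem_below_of_mem_bag w'.2 w.2 (bag_subset_below hu') hu) ?_
  exact depth_le_of_mem_below (mem_below_of_mem_bag w.2 w'.2 (bag_subset_below hu) hu')

theorem isGood_bag (hw : w ∈ R.badRegion T r) : R.IsGood T (R.bag T r w) w := by
  refine isGood_insert_biUnion sdiff_subset fun c hc => ?_
  by_contra hbad
  exact hc.2 (hw.tail ⟨hc.1, hbad⟩)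

theorem not_isGood_of_mem_badRegion (hr : ¬ R.IsGood T (R.below r) r)
    (hw : w ∈ R.badRegion T r) : ¬ R.IsGood T (R.below w) w := by
  cases hw with
  | refl => exact hr
  | tail _ h => exact h.2

/-- The vertices of `T` in the bag at `w` can be joined inside this bag, with none left over. -/
def BagHasTJoin (R : RootedForest V) (T : Set V) (r w : V) : Prop :=
  (R.parentGraph (R.bag T r w \ {w})).HasTJoin (T ∩ R.bag T r w)

theorem exists_not_bagHasTJoin (hr : ¬ R.IsGood T (R.below r) r) (hw : w ∈ R.badRegion T r) :
    ∃ w' ∈ R.badRegion T r, w' ∈ R.below w ∧ w' ≠ w ∧ ¬ R.BagHasTJoin T r w' := by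
  by_contra! hcon
  refine not_isGood_of_mem_badRegion hr hw ?_
  let N : Set V := {w' ∈ R.badRegion T r | w' ∈ R.below w}
  have hdisj : Pairwise (Disjoint on fun w' : N => R.bag T r w') := fun w' w'' hne =>
    @pairwise_disjoint_bag _ R T r ⟨w', w'.2.1⟩ ⟨w'', w''.2.1⟩ (by grind)
  have hpart : ∀ w' : N,
      HasPartialTJoin (R.parentGraph (R.bag T r w' \ {w'.1})) (T ∩ R.bag T r w') w := by
    rintro ⟨w', hN, hw'⟩
    obtain rfl | hne := eq_or_ne w' w
    · exact isGood_bag hN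
    · exact .inl (hcon w' hN hw' hne)
  have hcover : R.below w = ⋃ w' : N, R.bag T r w' := by
    refine (iUnion_subset fun w' u hu => mem_below_trans (bag_subset_below hu) w'.2.2).antisymm'
      fun u hu => ?_
    obtain ⟨w', hw', hu'⟩ := exists_mem_bag (mem_below_trans hu (mem_below_of_mem_badRegion hw))
    exact mem_iUnion.2 ⟨⟨w', hw', mem_below_of_mem_bag hw hw' hu hu'⟩, hu'⟩
  have hle : ∀ w' : N, R.bag T r w' \ {w'.1} ⊆ R.below w \ {w} := fun w' u hu => by
    refine ⟨mem_below_trans (bag_subset_below hu.1) w'.2.2, ?_⟩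
    rintro rfl
    exact hu.2 (eq_of_mem_below (bag_subset_below hu.1) (depth_le_of_mem_below w'.2.2))
  have := HasPartialTJoin.iUnion
    (fun w' w'' h => disjoint_parentGraph ((hdisj h).mono sdiff_subset sdiff_subset))
    (fun w' w'' h => (hdisj h).mono inter_subset_right inter_subset_right) hpart
  rw [← inter_iUnion, ← hcover] at this
  exact this.mono (iSup_le fun w' => parentGraph_mono (hle w'))

/-- Heading for a nearest bag without `T`-join, one keeps meeting such bags. -/
theorem exists_mem_children_badRegion (hr : ¬ R.IsGood T (R.below r) r) :
    ∃ f : R.badRegion T r → R.badRegion T r, (∀ w : R.badRegion T r, (f w : V) ∈ R.children w) ∧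
      ∀ w, {n | ¬ R.BagHasTJoin T r (f^[n] w)}.Infinite := by
  have hnear : ∀ w : R.badRegion T r, ∃ w' : R.badRegion T r,
      (w'.1 ∈ R.below w ∧ w' ≠ w ∧ ¬ R.BagHasTJoin T r w') ∧ ∀ v : R.badRegion T r,
        v.1 ∈ R.below w ∧ v ≠ w ∧ ¬ R.BagHasTJoin T r v → R.depth w' ≤ R.depth v := by
    intro w
    obtain ⟨w', hw', hb, hne, hj⟩ := exists_not_bagHasTJoin hr w.2
    obtain ⟨w₀, hw₀, hmin⟩ := exists_minimalFor_of_wellFoundedLT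
      (fun v : R.badRegion T r => v.1 ∈ R.below w ∧ v ≠ w ∧ ¬ R.BagHasTJoin T r v)
      (fun v => R.depth v) ⟨⟨w', hw'⟩, hb, fun h => hne (congrArg Subtype.val h), hj⟩
    exact ⟨w₀, hw₀, fun v hv => (le_total _ _).elim id (hmin hv)⟩
  choose g hg hmin using hnear
  have hchild : ∀ w : R.badRegion T r, ∃ c : R.badRegion T r,
      c.1 ∈ R.children w ∧ (g w).1 ∈ R.below c := by
    intro w
    obtain ⟨c, hc, hgc⟩ := exists_mem_children_of_mem_below (hg w).1
      (Subtype.coe_ne_coe.2 (hg w).2.1)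
    exact ⟨⟨c, mem_badRegion_of_mem_below (g w).2 hgc (mem_below_trans
      (mem_below_of_mem_children hc) (mem_below_of_mem_badRegion w.2))⟩, hc, hgc⟩
  choose f hf hgf using hchild
  exact ⟨f, hf, infinite_setOf_iterate (d := fun w : R.badRegion T r => R.depth w) (g := g)
    (P := fun w => ¬ R.BagHasTJoin T r w) (fun w => (depth_of_mem_children (hf w)).ge)
    (fun w => depth_le_of_mem_below (hgf w)) fun w hw =>
      hmin _ _ ⟨hgf w, fun h => hw (h ▸ (hg w).2.2), (hg w).2.2⟩⟩

theorem hasTJoin_of_badRegion_ray {w : ℕ → V} (hw : ∀ n, w n ∈ R.badRegion T r)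
    (hchild : ∀ n, w (n + 1) ∈ R.children (w n)) (hinf : {n | ¬ R.BagHasTJoin T r (w n)}.Infinite) :
    (R.parentGraph ((⋃ n, R.bag T r (w n)) \ {r})).HasTJoin (T ∩ ⋃ n, R.bag T r (w n)) := by
  have hmono : StrictMono (R.depth ∘ w) := strictMono_nat_of_lt_succ fun n =>
    (depth_of_mem_children (hchild n)).ge
  have hw_inj : Injective w := hmono.injective.of_comp
  have hdisj : Pairwise (Disjoint on fun n => R.bag T r (w n)) := fun m n hmn =>
    @pairwise_disjoint_bag _ R T r ⟨w m, hw m⟩ ⟨w n, hw n⟩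
      fun h => hmn (hw_inj (congrArg Subtype.val h))
  have hself : ∀ n, w n ∈ R.bag T r (w n) := fun n => mem_bag.2 (.inl rfl)
  have hwr : ∀ n, r ∈ R.bag T r (w n) → r = w n := fun n hr =>
    eq_of_mem_below (bag_subset_below hr)
      (depth_le_of_mem_below (mem_below_of_mem_badRegion (hw n)))
  rw [inter_iUnion]
  refine HasTJoin.mono (hasTJoin_of_ray (K := fun n => R.parentGraph {w (n + 1)})
    (fun m n h => disjoint_parentGraph ((hdisj h).mono sdiff_subset sdiff_subset))
    (fun m n h => (hdisj h).mono inter_subset_right inter_subset_right)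
    (fun m n h => disjoint_parentGraph (disjoint_singleton.2 fun h' =>
      h (Nat.succ_injective (hw_inj h')))) (fun m n => disjoint_parentGraph ?_)
    (fun n => (parentGraph_singleton_reachable (hchild n)).symm) (fun n => isGood_bag (hw n)) hinf)
    (sup_le (iSup_le fun n => parentGraph_mono ?_) (iSup_le fun n => parentGraph_mono ?_))
  · refine Set.disjoint_singleton_right.2 fun h => ?_
    obtain rfl | hne := eq_or_ne m (n + 1)
    · exact h.2 rfl
    · exact Set.disjoint_left.1 (hdisj hne) h.1 (hself _)
  · exact fun u hu => ⟨mem_iUnion.2 ⟨n, hu.1⟩, fun hur => hu.2 (hur ▸ hwr n (hur ▸ hu.1))⟩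
  · refine singleton_subset_iff.2 ⟨mem_iUnion.2 ⟨n + 1, hself _⟩, fun hr => ?_⟩
    have hlt := hmono (Nat.succ_pos n)
    have hle := depth_le_of_mem_below (mem_below_of_mem_badRegion (hw 0))
    exact (hle.trans_lt hlt).ne (congrArg R.depth (mem_singleton_iff.1 hr)).symm

theorem isGood_below (R : RootedForest V) (T : Set V) (r : V) : R.IsGood T (R.below r) r := by
  by_contra hr
  obtain ⟨f, hf, hinf⟩ := exists_mem_children_badRegion hr
  have hinj : Injective f := fun v w h => Subtype.ext ((hf v).2.symm.trans (h ▸ (hf w).2))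
  have hbij := bijective_iterate_prod (d := fun w : R.badRegion T r => R.depth w) hinj
    fun w => (depth_of_mem_children (hf w)).ge
  let B : R.badRegion T r → Set V := fun w => R.bag T r w
  have hB : Pairwise (Disjoint on B) := pairwise_disjoint_bag
  let X : ↥(range f)ᶜ → Set V := fun w => ⋃ n, B (f^[n] w)
  have hX : Pairwise (Disjoint on X) := fun w w' hne => disjoint_iUnion_left.2 fun m =>
    disjoint_iUnion_right.2 fun n => hB fun h =>
      hne (Prod.ext_iff.1 (@hbij.1 (w, m) (w', n) h)).1
  have hcover : R.below r = ⋃ w, X w := by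
    refine subset_antisymm (fun u hu => ?_) (iUnion_subset fun w => iUnion_subset fun n u hu =>
      mem_below_trans (bag_subset_below hu) (mem_below_of_mem_badRegion (f^[n] w.1).2))
    obtain ⟨v, hv, huv⟩ := exists_mem_bag hu
    obtain ⟨⟨w, n⟩, hwn⟩ := hbij.2 ⟨v, hv⟩
    exact mem_iUnion₂.2 ⟨w, n, by simpa only [B, hwn] using huv⟩
  have hjoin : ∀ w, (R.parentGraph (X w \ {r})).HasTJoin (T ∩ X w) := fun w =>
    hasTJoin_of_badRegion_ray (fun n => (f^[n] w.1).2)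
      (fun n => by simpa only [iterate_succ_apply'] using hf (f^[n] w)) (hinf w)
  refine hr (.inl ?_)
  rw [hcover, inter_iUnion]
  refine HasTJoin.mono (HasTJoin.iUnion (fun w w' h => disjoint_parentGraph
    ((hX h).mono sdiff_subset sdiff_subset)) (fun w w' h => (hX h).mono inter_subset_right
    inter_subset_right) hjoin) (iSup_le fun w => ?_)
  exact parentGraph_mono (sdiff_subset_sdiff_left (subset_iUnion X w))

end RootedForest

section Connected

variable {V : Type*} {H : SimpleGraph V} {T : Set V} {r v : V}

theorem exists_adj_dist_add_one (hv : 0 < H.dist r v) :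
    ∃ u, H.Adj u v ∧ H.dist r u + 1 = H.dist r v := by
  obtain ⟨p, hp⟩ := (nonempty_of_pos_dist hv).some.reachable.symm.exists_walk_length_eq_dist
  rw [dist_comm] at hp
  cases p with
  | nil => exact (hv.ne' hp.symm).elim
  | @cons _ u _ h q =>
    refine ⟨u, h.symm, le_antisymm ?_ ?_⟩
    · have := H.dist_comm (u := u) ▸ dist_le q
      rw [Walk.length_cons] at hp
      lia
    · obtain ⟨q', hq'⟩ := q.reachable.symm.exists_walk_length_eq_dist
      simpa only [Walk.length_concat, hq'] using dist_le (q'.concat h.symm)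

theorem exists_rootedForest_dist (H : SimpleGraph V) (r : V) : ∃ R : RootedForest V,
    (∀ v, R.depth v = H.dist r v) ∧ ∀ v, ∀ c ∈ R.children v, H.Adj v c := by
  have h : ∀ v, ∃ u, 0 < H.dist r v → H.Adj u v ∧ H.dist r u + 1 = H.dist r v := fun v => by
    by_cases hv : 0 < H.dist r v
    · obtain ⟨u, hu⟩ := exists_adj_dist_add_one hv
      exact ⟨u, fun _ => hu⟩
    · exact ⟨v, fun hv' => (hv hv').elim⟩
  choose f hf using h
  refine ⟨⟨H.dist r, f, fun v hv => (hf v hv).2⟩, fun _ => rfl, ?_⟩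
  rintro _ c ⟨hc, rfl⟩
  exact (hf c hc).1

theorem hasPartialTJoin_of_reachable (hT : ∀ v ∈ T, H.Reachable r v) : HasPartialTJoin H T r := by
  obtain ⟨R, hdepth, hadj⟩ := exists_rootedForest_dist H r
  have hsub : ∀ n v, H.Reachable r v → H.dist r v = n → v ∈ R.below r := by
    intro n
    induction n with
    | zero =>
      intro v hv hn
      exact hv.dist_eq_zero_iff.1 hn ▸ RootedForest.mem_below_self
    | succ n ih =>
      intro v hv hn
      have hc : v ∈ R.children (R.parent v) := ⟨by rw [hdepth]; lia, rfl⟩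
      have hd := RootedForest.depth_of_mem_children hc
      rw [hdepth, hdepth] at hd
      exact RootedForest.mem_below_trans (RootedForest.mem_below_of_mem_children hc)
        (ih _ (hv.trans (hadj _ v hc).symm.reachable) (by lia))
  have hgood := R.isGood_below T r
  rw [RootedForest.IsGood, inter_eq_left.2 fun v hv => hsub _ v (hT v hv) rfl] at hgood
  refine hgood.mono fun u v huv => ?_
  obtain ⟨-, ⟨-, h⟩ | ⟨-, h⟩⟩ := (fromRel_adj ..).1 huv
  exacts [(hadj _ _ h).symm, hadj _ _ h]

theorem hasTJoin_of_reachable_of_even (hfin : T.Finite) (heven : Even T.ncard)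
    (hT : ∀ v ∈ T, H.Reachable r v) : H.HasTJoin T := by
  refine (hasPartialTJoin_of_reachable hT).resolve_right fun ⟨τ, hτ, _, _, _, hj⟩ => ?_
  have heven' := HasTJoin.even_ncard hj hfin.sdiff
  have hcard := ncard_sdiff_singleton_add_one hτ hfin
  grind

end Connected

/-! ### Completing a dangling `T`-join -/

section Game

variable {V : Type u} {G : SimpleGraph V} {ι : Type w}

theorem exists_infinite_fiber {α β : Type*} {I : Set α} {Y : Set β} {P : α → β → Prop}
    (hI : I.Infinite) (hY : Y.Finite) (h : ∀ i ∈ I, ∃ y ∈ Y, P i y) :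
    ∃ y ∈ Y, {i ∈ I | P i y}.Infinite := by
  by_contra! hfin
  refine hI ((hY.biUnion hfin).subset fun i hi => ?_)
  obtain ⟨y, hy, hiy⟩ := h i hi
  exact mem_biUnion hy ⟨hi, hiy⟩

theorem finite_not_disjoint_of_finite_edgeSet {f : ι → SimpleGraph V} {K : SimpleGraph V}
    (hf : Pairwise (Disjoint on f)) (hK : K.edgeSet.Finite) : {i | ¬ Disjoint (f i) K}.Finite := by
  by_contra hinf
  obtain ⟨e, -, he⟩ := exists_infinite_fiber (P := fun i e => e ∈ (f i).edgeSet) hinf hK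
    fun i hi => (not_disjoint_iff.1 (mt disjoint_edgeSet.1 hi)).imp fun _ => And.symm
  obtain ⟨i, hi, j, hj, hij⟩ := he.nontrivial
  exact Set.disjoint_left.1 (disjoint_edgeSet.2 (hf hij)) hi.2 hj.2

theorem PathSystem.exists_split (F : PathSystem G ι) {i : ι} {x y : V}
    (hx : x ∈ (F.path i).support) (hy : y ∈ (F.path i).support) :
    ∃ a a', F.ends {i} = {a, a'} ∧
      ∃ A ≤ F.graph i, (F.graph i \ A).Reachable x a ∧ A.Reachable y a' := by
  classical
  have hends : F.ends {i} = {F.s i, F.t i} := by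
    rw [PathSystem.ends, image_singleton, image_singleton]
    rfl
  let p := (F.path i).takeUntil y hy
  let q := (F.path i).dropUntil y hy
  have hpq : Disjoint (walkGraph p) (walkGraph q) := by
    rw [← disjoint_edgeSet, edgeSet_walkGraph, edgeSet_walkGraph]
    exact Set.disjoint_left.2 ((F.isPath i).isTrail.disjoint_edges_takeUntil_dropUntil hy)
  have hp : walkGraph p ≤ F.graph i := fun _ _ h =>
    walkGraph_adj.2 (Walk.edges_takeUntil_subset_edges _ hy (walkGraph_adj.1 h))
  have hq : walkGraph q ≤ F.graph i := fun _ _ h =>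
    walkGraph_adj.2 (Walk.edges_dropUntil_subset_edges _ hy (walkGraph_adj.1 h))
  have hx' : x ∈ p.support ∨ x ∈ q.support := by
    rwa [← Walk.mem_support_append_iff, Walk.take_spec]
  obtain hx | hx := hx'
  · exact ⟨F.s i, F.t i, hends, walkGraph q, hq,
      (walkGraph_reachable p hx p.start_mem_support).mono (le_sdiff.2 ⟨hp, hpq⟩),
      walkGraph_reachable q q.start_mem_support q.end_mem_support⟩
  · exact ⟨F.t i, F.s i, hends.trans (pair_comm _ _), walkGraph p, hp,
      (walkGraph_reachable q hx q.end_mem_support).mono (le_sdiff.2 ⟨hq, hpq.symm⟩),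
      walkGraph_reachable p p.end_mem_support p.start_mem_support⟩

theorem PathSystem.exists_saturation (F : PathSystem G ι) {H : SimpleGraph V} {z y : V}
    {I : Set ι} (h : H.Reachable z y) (hI : ∀ j ∈ I, F.graph j ≤ H) :
    ∃ J ⊆ I, J.Finite ∧ ∃ K ≤ H, K.edgeSet.Finite ∧ K.Reachable z y ∧
      (∀ a b, K.Adj a b → H.Reachable z a) ∧ (∀ v ∈ F.ends J, K.Reachable z v) ∧
      ∀ j ∈ I, j ∉ J → Disjoint (F.graph j) K := by
  obtain ⟨q⟩ := h
  let J : Set ι := {j ∈ I | ¬ Disjoint (F.graph j) (walkGraph q)}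
  have hJ : J.Finite := (finite_not_disjoint_of_finite_edgeSet F.disjoint
    (finite_edgeSet_walkGraph q)).subset fun j hj => hj.2
  let K : SimpleGraph V := walkGraph q ⊔ ⨆ j ∈ J, F.graph j
  have hKH : K ≤ H := sup_le (walkGraph_le q) (iSup₂_le fun j hj => hI j hj.1)
  have hq : ∀ v ∈ q.support, K.Reachable z v := fun v hv =>
    (walkGraph_reachable q q.start_mem_support hv).mono le_sup_left
  have hpath : ∀ j ∈ J, ∀ v ∈ (F.path j).support, K.Reachable z v := by
    intro j hj v hv
    obtain ⟨e, he, heq⟩ := not_disjoint_iff.1 (mt disjoint_edgeSet.1 hj.2)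
    induction e with | _ a b =>
    have hjK : F.graph j ≤ K := (le_biSup F.graph hj).trans le_sup_right
    exact (hq a (mem_support_of_walkGraph_adj heq)).trans
      ((walkGraph_reachable _ (mem_support_of_walkGraph_adj he) hv).mono hjK)
  refine ⟨J, sep_subset _ _, hJ, K, hKH, ?_, hq y q.end_mem_support, fun a b hab => ?_, ?_, ?_⟩
  · rw [edgeSet_sup, edgeSet_iSup]
    simp only [edgeSet_iSup]
    exact (finite_edgeSet_walkGraph q).union (hJ.biUnion fun j _ => finite_edgeSet_walkGraph _)
  · refine Reachable.mono hKH ?_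
    rw [sup_adj, iSup_adj] at hab
    simp only [iSup_adj] at hab
    obtain hab | ⟨j, hj, hab⟩ := hab
    exacts [hq a (mem_support_of_walkGraph_adj hab),
      hpath j hj a (mem_support_of_walkGraph_adj hab)]
  · intro v hv
    obtain ⟨j, hj, rfl | rfl⟩ := F.mem_ends.1 hv
    exacts [hpath j hj _ (Walk.start_mem_support _), hpath j hj _ (Walk.end_mem_support _)]
  · exact fun j hj hjJ => disjoint_sup_right.2 ⟨not_not.1 fun h => hjJ ⟨hj, h⟩,
      disjoint_iSup₂_iff.2 fun k hk => F.disjoint fun h => hjJ (h ▸ hk)⟩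

/-- A stage in the completion of a path system `F` and an extra vertex `r` to a `T`-join of all
endpoints and `r`. Finitely many edges (`used`) serve to join the endpoints of the paths in `done`
and `r`, except for the vertex `loose`, which is connected by `tail` to the vertex `tip`; from
`tip`, infinitely many paths outside `done` can be reached along fresh edges. -/
structure State (F : PathSystem G ι) (r : V) where
  used : SimpleGraph V
  tail : SimpleGraph V
  done : Set ι
  loose : V
  tip : V
  used_le : used ≤ G
  tail_le : tail ≤ G
  finite_used : used.edgeSet.Finite
  finite_tail : tail.edgeSet.Finite
  disjoint : Disjoint used tail
  loose_mem : loose ∈ insert r (F.ends done)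
  reachable : tail.Reachable loose tip
  free : ∀ i ∉ done, Disjoint (F.graph i) (used ⊔ tail)
  infinite : {i | i ∉ done ∧ (G \ (used ⊔ tail)).Reachable tip (F.s i)}.Infinite

namespace State

variable {F : PathSystem G ι} {r : V} (S : State F r)

/-- The fresh edges in a given state. -/
def rest : SimpleGraph V := G \ (S.used ⊔ S.tail)

/-- The vertices already joined in a given state. -/
def joined : Set V := insert r (F.ends S.done) \ {S.loose}

/-- `S'` arises from `S` by joining further vertices, among them the loose vertex of `S`, along
further edges. -/
def IsMove (S S' : State F r) : Prop :=
  S.used ≤ S'.used ∧ insert r (F.ends S.done) ⊆ S'.joined ∧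
    (S'.used \ S.used).HasTJoin (S'.joined \ S.joined)

/-- A state without a move. -/
def IsStuck (S : State F r) : Prop := ∀ S', ¬ S.IsMove S'

theorem rest_le : S.rest ≤ G := sdiff_le

theorem disjoint_rest : Disjoint S.rest (S.used ⊔ S.tail) := disjoint_sdiff_self_left

theorem graph_le_rest {i : ι} (hi : i ∉ S.done) : F.graph i ≤ S.rest :=
  le_sdiff.2 ⟨F.graph_le i, S.free i hi⟩

theorem hasTJoin_of_forall_isMove (hr : r ∉ F.ends univ) (S₀ : State F r) (hused : S₀.used = ⊥)
    (hjoined : S₀.joined = ∅) (h : ∀ S : State F r, ∃ S', S.IsMove S') :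
    G.HasTJoin (insert r (F.ends univ)) := by
  choose next hnext using h
  let S : ℕ → State F r := fun n => next^[n] S₀
  have hmove : ∀ n, (S n).IsMove (S (n + 1)) := fun n => by
    simpa only [S, iterate_succ_apply'] using hnext (next^[n] S₀)
  let U : ℕ → SimpleGraph V := fun n => (S n).used
  let J : ℕ → Set V := fun n => (S n).joined
  have hU : Monotone U := monotone_nat_of_le_succ fun n => (hmove n).1
  have hJ : Monotone J := monotone_nat_of_le_succ fun n => sdiff_subset.trans (hmove n).2.1
  have hblock : ∀ n, (disjointed U n).HasTJoin (disjointed J n)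
    | 0 => by
      rw [disjointed_zero, disjointed_zero, show U 0 = ⊥ from hused, show J 0 = ∅ from hjoined]
      exact HasTJoin.empty
    | n + 1 => by
      rw [← Order.succ_eq_add_one, hU.disjointed_succ (not_isMax n),
        hJ.disjointed_succ (not_isMax n)]
      exact (hmove n).2.2
  have hjoin := HasTJoin.iUnion (disjoint_disjointed U) (disjoint_disjointed J) hblock
  rw [iUnion_disjointed, iSup_disjointed] at hjoin
  have hunion : ⋃ n, J n = insert r (F.ends (⋃ n, (S n).done)) := by
    rw [F.ends_iUnion, insert_iUnion]
    exact subset_antisymm (iUnion_mono fun n => sdiff_subset)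
      (iUnion_subset fun n => (hmove n).2.1.trans (subset_iUnion J (n + 1)))
  rw [hunion] at hjoin
  have hends : insert r (F.ends univ) =
      insert r (F.ends (⋃ n, (S n).done)) ∪ F.ends (⋃ n, (S n).done)ᶜ := by
    rw [insert_union, ← F.ends_union, union_compl_self]
  rw [hends]
  refine HasTJoin.mono (HasTJoin.sup ?_ ?_ hjoin (F.hasTJoin_iSup _))
    (sup_le (iSup_le fun n => (S n).used_le) (iSup₂_le fun i _ => F.graph_le i))
  · refine iSup_disjoint_iff.2 fun n => disjoint_iSup₂_iff.2 fun i hi => ?_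
    exact (((S n).free i fun h => hi (mem_iUnion.2 ⟨n, h⟩)).mono_right le_sup_left).symm
  · exact disjoint_insert_left.2 ⟨fun h => hr (F.ends_mono (subset_univ _) h),
      F.disjoint_ends disjoint_compl_right⟩

theorem disjoint_ends_insert (hr : r ∉ F.ends univ) {J : Set ι} (hJ : Disjoint J S.done) :
    Disjoint (F.ends J) (insert r (F.ends S.done)) :=
  disjoint_insert_right.2 ⟨fun h => hr (F.ends_mono (subset_univ _) h), F.disjoint_ends hJ⟩

theorem hasTJoin_tail_sup (hr : r ∉ F.ends univ) {Q : SimpleGraph V} {J : Set ι} {a : V}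
    (hJfin : J.Finite) (hJ : Disjoint J S.done) (ha : a ∈ F.ends J)
    (hends : ∀ v ∈ F.ends J, v ≠ a → Q.Reachable S.tip v) :
    (S.tail ⊔ Q).HasTJoin (insert S.loose (F.ends J \ {a})) := by
  have hfin := F.finite_ends hJfin
  have hloose : S.loose ∉ F.ends J :=
    (S.disjoint_ends_insert hr hJ).notMem_of_mem_right S.loose_mem
  refine hasTJoin_of_reachable_of_even (r := S.tip) (hfin.sdiff.insert _) ?_ ?_
  · rw [ncard_insert_of_notMem (fun h => hloose h.1) hfin.sdiff,
      ncard_sdiff_singleton_add_one ha hfin]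
    exact HasTJoin.even_ncard (F.hasTJoin_iSup J) hfin
  · rintro v (rfl | ⟨hv, hva⟩)
    exacts [S.reachable.symm.mono le_sup_left, (hends v hv hva).mono le_sup_right]

theorem exists_isMove (hr : r ∉ F.ends univ) {Q D : SimpleGraph V} {J : Set ι} {a z : V}
    (hQ : Q ≤ S.rest) (hD : D ≤ S.rest) (hQfin : Q.edgeSet.Finite) (hDfin : D.edgeSet.Finite)
    (hQD : Disjoint Q D) (hJfin : J.Finite) (hJ : Disjoint J S.done) (ha : a ∈ F.ends J)
    (haz : D.Reachable a z) (hends : ∀ v ∈ F.ends J, v ≠ a → Q.Reachable S.tip v)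
    (hfree : ∀ i ∉ S.done, i ∉ J → Disjoint (F.graph i) (Q ⊔ D))
    (hinf : {i | i ∉ S.done ∧ i ∉ J ∧ (S.rest \ (Q ⊔ D)).Reachable z (F.s i)}.Infinite) :
    ∃ S', S.IsMove S' := by
  have hsup : S.used ⊔ S.tail ⊔ Q ⊔ D = (S.used ⊔ S.tail) ⊔ (Q ⊔ D) := sup_assoc ..
  have hrest : G \ (S.used ⊔ S.tail ⊔ Q ⊔ D) = S.rest \ (Q ⊔ D) := by
    rw [hsup, rest, _root_.sdiff_sdiff_left]
  have hoQ : Disjoint (S.used ⊔ S.tail) Q := S.disjoint_rest.symm.mono_right hQ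
  have hJr := S.disjoint_ends_insert hr hJ
  refine ⟨{
    used := S.used ⊔ S.tail ⊔ Q
    tail := D
    done := S.done ∪ J
    loose := a
    tip := z
    used_le := sup_le (sup_le S.used_le S.tail_le) (hQ.trans S.rest_le)
    tail_le := hD.trans S.rest_le
    finite_used := by
      simpa only [edgeSet_sup] using (S.finite_used.union S.finite_tail).union hQfin
    finite_tail := hDfin
    disjoint := disjoint_sup_left.2 ⟨S.disjoint_rest.symm.mono_right hD, hQD⟩
    loose_mem := .inr (F.ends_mono subset_union_right ha)
    reachable := haz
    free := fun i hi => by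
      rw [mem_union, not_or] at hi
      rw [hsup]
      exact disjoint_sup_right.2 ⟨S.free i hi.1, hfree i hi.1 hi.2⟩
    infinite := by
      rw [hrest]
      simpa only [mem_union, not_or, and_assoc] using hinf }, le_sup_left.trans le_sup_left, ?_, ?_⟩
  · exact subset_sdiff_singleton (insert_subset_insert (F.ends_mono subset_union_left))
      (Set.disjoint_left.1 hJr ha)
  have hjoined : (insert r (F.ends (S.done ∪ J)) \ {a}) \ S.joined =
      insert S.loose (F.ends J \ {a}) := by
    have := S.loose_mem
    have := Set.disjoint_left.1 hJr
    rw [F.ends_union, joined]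
    grind
  have hle : S.tail ⊔ Q ≤ (S.used ⊔ S.tail ⊔ Q) \ S.used :=
    le_sdiff.2 ⟨sup_le_sup_right le_sup_right Q,
      disjoint_sup_left.2 ⟨S.disjoint.symm, (hoQ.mono_left le_sup_left).symm⟩⟩
  exact (hjoined ▸ HasTJoin.mono (S.hasTJoin_tail_sup hr hJfin hJ ha hends) hle :)

end State

namespace State

variable {F : PathSystem G ι} {r : V} {S : State F r} {i : ι} {x y : V} {W : SimpleGraph V}

theorem exists_isMove_of_infinite_of_mem_path (hr : r ∉ F.ends univ) (hi : i ∉ S.done)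
    (hx : x ∈ (F.path i).support) (hy : y ∈ (F.path i).support) (hW : W ≤ S.rest)
    (hWfin : W.edgeSet.Finite) (hWF : ∀ j ∉ S.done, Disjoint (F.graph j) W)
    (hWx : W.Reachable S.tip x)
    (hinf : {j | j ∉ S.done ∧ (S.rest \ (W ⊔ F.graph i)).Reachable y (F.s j)}.Infinite) :
    ∃ S', S.IsMove S' := by
  obtain ⟨a, a', hends, A, hA, hxa, hya⟩ := F.exists_split hx hy
  have hPi : F.graph i ≤ S.rest := S.graph_le_rest hi
  have hPifin : (F.graph i).edgeSet.Finite := finite_edgeSet_walkGraph _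
  have hunion : W ⊔ F.graph i \ A ⊔ A = W ⊔ F.graph i := by
    rw [sup_assoc, sdiff_sup_cancel hA]
  refine S.exists_isMove hr (Q := W ⊔ F.graph i \ A) (D := A) (J := {i}) (a := a') (z := y)
    (sup_le hW (sdiff_le.trans hPi)) (hA.trans hPi) ?_ (hPifin.subset (edgeSet_mono hA))
    (disjoint_sup_left.2 ⟨((hWF i hi).mono_left hA).symm, disjoint_sdiff_self_left⟩)
    (finite_singleton i) (Set.disjoint_singleton_left.2 hi) ?_ hya.symm ?_ ?_ ?_
  · rw [edgeSet_sup]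
    exact hWfin.union (hPifin.subset (edgeSet_mono sdiff_le))
  · simp only [hends, mem_insert_iff, mem_singleton_iff, or_true]
  · rw [hends]
    rintro v (rfl | rfl) hv
    exacts [(hWx.mono le_sup_left).trans (hxa.mono le_sup_right), (hv rfl).elim]
  · rw [hunion]
    exact fun j hj hji => disjoint_sup_right.2 ⟨hWF j hj, F.disjoint hji⟩
  · rw [hunion]
    refine (hinf.sdiff (finite_singleton i)).mono fun j hj => ⟨hj.1.1, hj.2, hj.1.2⟩

theorem exists_isMove_of_infinite_of_not_reachable (hr : r ∉ F.ends univ) (hi : i ∉ S.done)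
    (hx : x ∈ (F.path i).support) {y' : V} (hy' : y' ∈ (F.path i).support) (hW : W ≤ S.rest)
    (hWfin : W.edgeSet.Finite) (hWF : ∀ j ∉ S.done, Disjoint (F.graph j) W)
    (hWx : W.Reachable x y) (hzy' : (S.rest \ (W ⊔ F.graph i)).Reachable S.tip y')
    (hzy : ¬ (S.rest \ (W ⊔ F.graph i)).Reachable S.tip y)
    (hinf : {j | j ∉ S.done ∧ (S.rest \ (W ⊔ F.graph i)).Reachable y (F.s j)}.Infinite) :
    ∃ S', S.IsMove S' := by
  set H := S.rest \ (W ⊔ F.graph i)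
  obtain ⟨a, a', hends, A, hA, hya, hxa⟩ := F.exists_split hy' hx
  have hPi : F.graph i ≤ S.rest := S.graph_le_rest hi
  have hPifin : (F.graph i).edgeSet.Finite := finite_edgeSet_walkGraph _
  obtain ⟨J, hJI, hJ, K, hKH, hKfin, hKy', hKz, hKJ, hKI⟩ :=
    F.exists_saturation hzy' (I := S.doneᶜ \ {i}) fun j hj => le_sdiff.2
      ⟨S.graph_le_rest hj.1, disjoint_sup_right.2 ⟨hWF j hj.1, F.disjoint hj.2⟩⟩
  have hKW : Disjoint K (W ⊔ F.graph i) := disjoint_sdiff_self_left.mono_left hKH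
  rw [disjoint_sup_right] at hKW
  have hunion : K ⊔ F.graph i \ A ⊔ (W ⊔ A) = W ⊔ F.graph i ⊔ K := by
    rw [sup_sup_sup_comm, sdiff_sup_cancel hA, sup_assoc, sup_comm]
  refine S.exists_isMove hr (Q := K ⊔ F.graph i \ A) (D := W ⊔ A) (J := insert i J) (a := a')
    (z := y) (sup_le (hKH.trans sdiff_le) (sdiff_le.trans hPi)) (sup_le hW (hA.trans hPi)) ?_ ?_
    ?_ (hJ.insert i) ?_ ?_ ((hxa.symm.mono le_sup_right).trans (hWx.mono le_sup_left)) ?_ ?_ ?_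
  · exact edgeSet_sup K _ ▸ hKfin.union (hPifin.subset (edgeSet_mono sdiff_le))
  · exact edgeSet_sup W A ▸ hWfin.union (hPifin.subset (edgeSet_mono hA))
  · exact disjoint_sup_left.2 ⟨disjoint_sup_right.2 ⟨hKW.1, hKW.2.mono_right hA⟩,
      disjoint_sup_right.2 ⟨(hWF i hi).mono_left sdiff_le, disjoint_sdiff_self_left⟩⟩
  · exact disjoint_insert_left.2 ⟨hi, Set.disjoint_left.2 fun j hj => (hJI hj).1⟩
  · rw [← union_singleton, F.ends_union, hends]
    simp only [mem_union, mem_insert_iff, mem_singleton_iff, or_true]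
  · rw [← union_singleton, F.ends_union, hends]
    rintro v (hv | rfl | rfl) hva
    exacts [(hKJ v hv).mono le_sup_left, (hKy'.mono le_sup_left).trans (hya.mono le_sup_right),
      (hva rfl).elim]
  · rw [hunion]
    intro j hj hjJ
    rw [mem_insert_iff, not_or] at hjJ
    exact disjoint_sup_right.2 ⟨disjoint_sup_right.2 ⟨hWF j hj, F.disjoint hjJ.1⟩,
      hKI j ⟨hj, hjJ.1⟩ hjJ.2⟩
  · rw [hunion, ← _root_.sdiff_sdiff_left]
    exact (hinf.sdiff (hJ.insert i)).mono fun j hj =>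
      ⟨hj.1.1, hj.2, Reachable.sdiff_of_not_reachable hKz hzy hj.1.2⟩

theorem exists_isMove_of_reachable_sdiff (hr : r ∉ F.ends univ) (hi : i ∉ S.done)
    (hx : x ∈ (F.path i).support) (hW : W ≤ S.rest) (p : W.Walk S.tip x)
    (hp : ∀ j ∉ S.done, Disjoint (F.graph j) (walkGraph p))
    (h : (S.rest \ walkGraph p).Reachable S.tip x) : ∃ S', S.IsMove S' := by
  set H := S.rest \ (walkGraph p ⊔ F.graph i)
  have hHadj : ∀ v w, S.rest.Adj v w → v ∉ p.support → v ∉ (F.path i).support → H.Adj v w :=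
    fun v w hvw hv hv' => ⟨hvw, fun h => h.elim (fun h => hv (mem_support_of_walkGraph_adj h))
      fun h => hv' (mem_support_of_walkGraph_adj h)⟩
  have hpx : ∀ v ∈ p.support, (walkGraph p).Reachable x v := fun v hv =>
    walkGraph_reachable p p.end_mem_support hv
  have hmeet : ∀ j ∈ {j | j ∉ S.done ∧ S.rest.Reachable S.tip (F.s j)},
      ∃ y ∈ {v | v ∈ p.support ∨ v ∈ (F.path i).support}, H.Reachable y (F.s j) := by
    intro j hj
    obtain ⟨y, hy, hjy⟩ := exists_reachable_mem (H' := H)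
      (S := {v | v ∈ p.support ∨ v ∈ (F.path i).support}) hj.2.symm (.inl p.start_mem_support)
      fun v w hvw hv => hHadj v w hvw (fun h => hv (.inl h)) fun h => hv (.inr h)
    exact ⟨y, hy, hjy.symm⟩
  obtain ⟨y, hy, hinf⟩ := exists_infinite_fiber S.infinite
    ((List.finite_toSet p.support).union (List.finite_toSet (F.path i).support)) hmeet
  replace hinf : {j | j ∉ S.done ∧ H.Reachable y (F.s j)}.Infinite :=
    hinf.mono fun j hj => ⟨hj.1.1, hj.2⟩
  have hmove : ∀ y' ∈ (F.path i).support, H.Reachable y' y → ∃ S', S.IsMove S' :=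
    fun y' hy' hyy' => exists_isMove_of_infinite_of_mem_path hr hi hx hy'
      ((walkGraph_le p).trans hW) (finite_edgeSet_walkGraph p) hp (hpx _ p.start_mem_support).symm
      (hinf.mono fun j hj => ⟨hj.1, hyy'.trans hj.2⟩)
  obtain hy | hy := hy
  · obtain ⟨y', hy', hzy'⟩ := exists_reachable_mem (H' := H)
      (S := {v | v ∈ (F.path i).support}) h hx fun v w hvw hv =>
        ⟨hvw.1, fun h => h.elim hvw.2 fun h => hv (mem_support_of_walkGraph_adj h)⟩
    by_cases hzy : H.Reachable S.tip y
    · exact hmove y' hy' (hzy'.symm.trans hzy)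
    · exact exists_isMove_of_infinite_of_not_reachable hr hi hx hy'
        ((walkGraph_le p).trans hW) (finite_edgeSet_walkGraph p) hp (hpx y hy) hzy' hzy hinf
  · exact hmove y hy .rfl

end State

namespace State

variable {F : PathSystem G ι} {r x a b : V} (S : State F r) {K : SimpleGraph V}

/-- The vertices on a path that has not been dealt with in a given state. -/
def marked : Set V := {v | ∃ i ∉ S.done, v ∈ (F.path i).support}

variable {S} in
theorem disjoint_walkGraph_of_marked {H : SimpleGraph V} {u : V} (q : H.Walk u x)
    (hq : ∀ v ∈ q.support, v ∈ S.marked → v = x) :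
    ∀ j ∉ S.done, Disjoint (F.graph j) (walkGraph q) := by
  intro j hj
  refine disjoint_left.2 fun c d hcd hcd' => hcd.ne ?_
  rw [hq c (mem_support_of_walkGraph_adj hcd') ⟨j, hj, mem_support_of_walkGraph_adj hcd⟩,
    hq d (mem_support_of_walkGraph_adj hcd'.symm) ⟨j, hj, mem_support_of_walkGraph_adj hcd.symm⟩]

theorem exists_isMove_of_isEdgeReachable_two (hr : r ∉ F.ends univ) (hx : x ∈ S.marked)
    (h : S.rest.IsEdgeReachable 2 S.tip x) : ∃ S', S.IsMove S' := by
  obtain ⟨A, B, hA, hB, hAB, hAx, hBx⟩ := HasDisjointConnections.of_isEdgeReachable_two h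
  obtain ⟨p, hp⟩ := hAx.exists_isPath
  obtain ⟨y, ⟨i, hi, hyi⟩, q, -, hq, hyx⟩ := exists_walk_to_first hp.isTrail hx
  refine exists_isMove_of_reachable_sdiff hr hi hyi hA q (disjoint_walkGraph_of_marked q hq) ?_
  exact (hBx.mono (le_sdiff.2 ⟨hB, hAB.symm.mono_right (walkGraph_le q)⟩)).trans
    (hyx.symm.mono (sdiff_le_sdiff_right ((walkGraph_le p).trans hA)))

/-- The state obtained by moving the tip along fresh edges, to be added to the tail. -/
def extend (hK : K ≤ S.rest) (hKfin : K.edgeSet.Finite) (hKb : K.Reachable S.tip b)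
    (hKF : ∀ j ∉ S.done, Disjoint (F.graph j) K)
    (hinf : {j | j ∉ S.done ∧ (S.rest \ K).Reachable b (F.s j)}.Infinite) : State F r where
  used := S.used
  tail := S.tail ⊔ K
  done := S.done
  loose := S.loose
  tip := b
  used_le := S.used_le
  tail_le := sup_le S.tail_le (hK.trans S.rest_le)
  finite_used := S.finite_used
  finite_tail := by
    rw [edgeSet_sup]
    exact S.finite_tail.union hKfin
  disjoint := disjoint_sup_right.2
    ⟨S.disjoint, (S.disjoint_rest.mono hK le_sup_left).symm⟩
  loose_mem := S.loose_mem
  reachable := (S.reachable.mono le_sup_left).trans (hKb.mono le_sup_right)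
  free i hi := by
    rw [← sup_assoc]
    exact disjoint_sup_right.2 ⟨S.free i hi, hKF i hi⟩
  infinite := by
    rwa [← sup_assoc, ← _root_.sdiff_sdiff_left]

theorem exists_isMove_of_separates (hr : r ∉ F.ends univ) (hx : x ∈ S.marked)
    (hab : S.rest.Adj a b) (hK : K ≤ S.rest.deleteEdges {s(a, b)}) (hKfin : K.edgeSet.Finite)
    (hKa : K.Reachable S.tip a) (hKz : ∀ c d, K.Adj c d → K.Reachable S.tip c)
    (hKF : ∀ j ∉ S.done, Disjoint (F.graph j) (edge a b ⊔ K))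
    (hsep : ¬ (S.rest.deleteEdges {s(a, b)}).Reachable S.tip x)
    (hinf : {j | j ∉ S.done ∧ (S.rest.deleteEdges {s(a, b)}).Reachable x (F.s j)}.Infinite)
    (htwo : (S.rest.deleteEdges {s(a, b)} \ K).IsEdgeReachable 2 b x) : ∃ S', S.IsMove S' := by
  have hbx := (htwo.reachable two_ne_zero).mono sdiff_le
  have hrest : S.rest \ (edge a b ⊔ K) = S.rest.deleteEdges {s(a, b)} \ K :=
    _root_.sdiff_sdiff_left.symm
  let S' : State F r := S.extend (K := edge a b ⊔ K) (b := b)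
    (sup_le ((edge_le_iff _).2 (.inr hab)) (hK.trans (deleteEdges_le _)))
    (by
      rw [edgeSet_sup]
      exact ((finite_singleton _).subset edgeSet_edge_subset).union hKfin)
    ((hKa.mono le_sup_right).trans
      (Adj.reachable (.inl ((edge_adj ..).2 ⟨.inl ⟨rfl, rfl⟩, hab.ne⟩)))) hKF
    (by
      rw [hrest]
      exact hinf.mono fun j hj => ⟨hj.1, Reachable.sdiff_of_not_reachable
        (fun c d hcd => (hKz c d hcd).mono hK) (fun h => hsep (h.trans hbx)) (hbx.trans hj.2)⟩)
  have hS'rest : S'.rest = S.rest.deleteEdges {s(a, b)} \ K := by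
    rw [← hrest, rest, rest, _root_.sdiff_sdiff_left, sup_assoc]
    rfl
  obtain ⟨S'', hmove⟩ := S'.exists_isMove_of_isEdgeReachable_two hr hx (hS'rest ▸ htwo)
  exact ⟨S'', hmove⟩

theorem exists_isMove_of_walk (hr : r ∉ F.ends univ) (hx : x ∈ S.marked)
    {q : S.rest.Walk S.tip x} (hq : q.IsTrail) (hfirst : ∀ v ∈ q.support, v ∈ S.marked → v = x)
    (hinf : ∀ e, ¬ (S.rest.deleteEdges {e}).Reachable S.tip x →
      {j | j ∉ S.done ∧ (S.rest.deleteEdges {e}).Reachable x (F.s j)}.Infinite) :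
    ∃ S', S.IsMove S' := by
  by_cases hsep : ∃ e ∈ q.edges, ¬ (S.rest.deleteEdges {e}).Reachable S.tip x
  swap
  · push Not at hsep
    refine S.exists_isMove_of_isEdgeReachable_two hr hx (isEdgeReachable_two.2 fun e => ?_)
    by_contra he
    exact he (hsep e (q.mem_edges_of_not_reachable_deleteEdges he))
  obtain ⟨a, b, hab, q₁, q₂, rfl, hsep, hlast⟩ := exists_last_edge q hsep
  simp only [not_not] at hlast
  have hab₁ : s(a, b) ∉ q₁.edges := fun h => by
    have hnodup := hq.edges_nodup
    rw [Walk.edges_append] at hnodup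
    exact List.disjoint_of_nodup_append hnodup h List.mem_cons_self
  have hle : edge a b ⊔ walkGraph q₁ ≤ walkGraph (q₁.append (.cons hab q₂)) := by
    refine sup_le ((edge_le_iff _).2 (.inr (walkGraph_adj.2 ?_))) fun c d h =>
      walkGraph_adj.2 ?_ <;> rw [Walk.edges_append, List.mem_append]
    exacts [.inr List.mem_cons_self, .inl (walkGraph_adj.1 h)]
  exact S.exists_isMove_of_separates hr hx hab (walkGraph_le_deleteEdges hab₁)
    (finite_edgeSet_walkGraph q₁) (walkGraph_reachable q₁ q₁.start_mem_support q₁.end_mem_support)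
    (fun c d hcd => walkGraph_reachable q₁ q₁.start_mem_support (mem_support_of_walkGraph_adj hcd))
    (fun j hj => (disjoint_walkGraph_of_marked _ hfirst j hj).mono_right hle) hsep (hinf _ hsep)
    (isEdgeReachable_two_of_separates_of_forall_mem hq hsep hlast)

variable {S} in
theorem IsStuck.exists_separating (hr : r ∉ F.ends univ) (hS : S.IsStuck) (hx : x ∈ S.marked)
    (hzx : S.rest.Reachable S.tip x) : ∃ e, ¬ (S.rest.deleteEdges {e}).Reachable S.tip x ∧
      {j | j ∉ S.done ∧ (S.rest.deleteEdges {e}).Reachable x (F.s j)}.Finite := by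
  obtain ⟨p, hp⟩ := hzx.exists_isPath
  obtain ⟨y, hy, q, hq, hfirst, hyx⟩ := exists_walk_to_first hp.isTrail hx
  by_contra! hinf
  obtain ⟨S', hS'⟩ := S.exists_isMove_of_walk hr hy hq hfirst fun e he => by
    have heq := q.mem_edges_of_not_reachable_deleteEdges he
    have hle : walkGraph p \ walkGraph q ≤ S.rest.deleteEdges {e} := fun c d hcd =>
      deleteEdges_adj.2 ⟨walkGraph_le p hcd.1,
        fun hcd' => hcd.2 (walkGraph_adj.2 (mem_singleton_iff.1 hcd' ▸ heq))⟩
    have hyx' := hyx.mono hle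
    exact (hinf e fun h => he (h.trans hyx'.symm)).mono fun j hj => ⟨hj.1, hyx'.trans hj.2⟩
  exact hS S' hS'

end State

end Game

section Stuck

variable {V : Type u} {G : SimpleGraph V} {ι : Type w} {F : PathSystem G ι} {r v : V}

namespace State

variable (S : State F r) {i : ι} {e : Sym2 V}

/-- The edges that separate only finitely many of the remaining paths from the tip. -/
def thin : Set (Sym2 V) := {e | {j | j ∉ S.done ∧ F.s j ∈ farSide S.rest S.tip e}.Finite}

/-- The edges of `S.thin` whose far side meets no edge outside `S.rest`. -/
def cut : Set (Sym2 V) :=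
  {e ∈ S.thin | ∀ v ∈ farSide S.rest S.tip e, v ∉ (S.used ⊔ S.tail).support}

theorem adj_rest_of_mem_cut (he : e ∈ S.cut) {x : V} (hx : x ∈ farSide S.rest S.tip e) (y : V)
    (hxy : G.Adj x y) : S.rest.Adj x y :=
  ⟨hxy, fun h => he.2 x hx ⟨y, h⟩⟩

theorem finite_mem_farSide_thin_diff_cut :
    {j | j ∉ S.done ∧ ∃ e ∈ S.thin \ S.cut, F.s j ∈ farSide S.rest S.tip e}.Finite := by
  have hW : (S.used ⊔ S.tail).support.Finite := finite_support_of_finite_edgeSet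
    (edgeSet_sup S.used S.tail ▸ S.finite_used.union S.finite_tail)
  refine (hW.biUnion fun v _ => ((finite_setOf_mem_farSide S.rest S.tip v).inter_of_left
    S.thin).biUnion fun e he => he.2).subset ?_
  rintro j ⟨hj, e, ⟨he, he'⟩, hje⟩
  obtain ⟨v, hv, hvW⟩ : ∃ v ∈ farSide S.rest S.tip e, v ∈ (S.used ⊔ S.tail).support := by
    by_contra! h
    exact he' ⟨he, h⟩
  exact mem_biUnion hvW (mem_biUnion (show e ∈ _ ∩ _ from ⟨hv, he⟩) ⟨hj, hje⟩)

variable {S}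

theorem IsStuck.exists_mem_thin (hr : r ∉ F.ends univ) (hS : S.IsStuck) (hv : v ∈ S.marked)
    (htv : S.rest.Reachable S.tip v) : ∃ e ∈ S.thin, v ∈ farSide S.rest S.tip e := by
  obtain ⟨e, he, hfin⟩ := hS.exists_separating hr hv htv
  exact ⟨e, hfin.subset fun j hj => ⟨hj.1, reachable_of_mem_farSide ⟨htv, he⟩ hj.2⟩, htv, he⟩

theorem IsStuck.exists_nontrivial_compSet (hr : r ∉ F.ends univ) (hS : S.IsStuck)
    (hi : i ∉ S.done) (hti : S.rest.Reachable S.tip (F.s i))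
    (hcut : ∀ e ∈ S.thin, F.s i ∈ farSide S.rest S.tip e → e ∈ S.cut) :
    ∃ C, (G.compSet (core S.rest S.tip S.cut) C).Nontrivial ∧
      F.s i ∈ G.compSet (core S.rest S.tip S.cut) C := by
  obtain ⟨e₀, he₀, hse₀⟩ := hS.exists_mem_thin hr ⟨i, hi, (F.path i).start_mem_support⟩ hti
  have hsU : F.s i ∉ core S.rest S.tip S.cut := fun h => h e₀ (hcut e₀ he₀ hse₀) hse₀
  let C := (G.induce (core S.rest S.tip S.cut)ᶜ).connectedComponentMk ⟨F.s i, hsU⟩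
  have hsC : F.s i ∈ G.compSet _ C := ⟨⟨F.s i, hsU⟩, rfl, rfl⟩
  refine ⟨C, ⟨F.s i, hsC, F.t i, ?_, F.s_ne_t i i⟩, hsC⟩
  obtain ⟨a, b, -, hab, ha, hb, hC⟩ :=
    exists_compSet_eq_farSide S.rest_le (fun e he x => S.adj_rest_of_mem_cut he) C
  rw [hC] at hsC ⊢
  by_contra ht
  have hle := S.graph_le_rest hi
  have hab' : (F.graph i).Adj a b := by
    by_contra hab'
    exact ht (mem_farSide_of_reachable hsC ((F.reachable i).mono fun c d hcd =>
      deleteEdges_adj.2 ⟨hle hcd, fun h => hab' (by rwa [← mem_edgeSet, ← mem_singleton_iff.1 h])⟩))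
  have hai := mem_support_of_walkGraph_adj hab'
  have hta := hti.trans ((walkGraph_reachable _ (F.path i).start_mem_support hai).mono hle)
  obtain ⟨e, he, hae⟩ := hS.exists_mem_thin hr ⟨i, hi, hai⟩ hta
  exact ha e (hcut e he (farSide_subset_farSide hb hae hsC)) hae

theorem IsStuck.infinite_nontrivial (hr : r ∉ F.ends univ) (hS : S.IsStuck) :
    {C : (G.induce (core S.rest S.tip S.cut)ᶜ).ConnectedComponent |
      (G.compSet _ C).Nontrivial}.Infinite := by
  intro hfin
  obtain ⟨C, -, hC⟩ := exists_infinite_fiber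
    (P := fun i C => F.s i ∈ G.compSet (core S.rest S.tip S.cut) C)
    (S.infinite.sdiff S.finite_mem_farSide_thin_diff_cut) hfin fun i ⟨⟨hi, hti⟩, hiX⟩ =>
      hS.exists_nontrivial_compSet hr hi hti fun e he hie => by
        by_contra he'
        exact hiX ⟨hi, e, ⟨he, he'⟩, hie⟩
  obtain ⟨a, b, heB, -, -, -, hCe⟩ :=
    exists_compSet_eq_farSide S.rest_le (fun e he x => S.adj_rest_of_mem_cut he) C
  exact hC (heB.1.subset fun i ⟨⟨⟨hi, _⟩, _⟩, hiC⟩ => ⟨hi, hCe ▸ hiC⟩)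

end State

end Stuck

/-! ### Obstructions -/

section Obstruction

variable {V : Type*} {G H K : SimpleGraph V} {T U : Set V} {u v w x y : V}
  {C C' : (G.induce (Uᶜ : Set V)).ConnectedComponent}

theorem notMem_of_mem_compSet (hv : v ∈ G.compSet U C) : v ∉ U := by
  obtain ⟨v, -, rfl⟩ := hv
  exact v.2

theorem eq_of_mem_compSet (hv : v ∈ G.compSet U C) (hv' : v ∈ G.compSet U C') : C = C' := by
  obtain ⟨v, rfl, rfl⟩ := hv
  obtain ⟨w, rfl, hwv⟩ := hv'
  rw [Subtype.ext hwv]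

theorem mem_compSet_of_adj (hv : v ∈ G.compSet U C) (hw : w ∉ U) (h : G.Adj v w) :
    w ∈ G.compSet U C := by
  obtain ⟨v, rfl, rfl⟩ := hv
  exact ⟨⟨w, hw⟩, ConnectedComponent.sound (Adj.reachable (show G.Adj w v from h.symm)), rfl⟩

theorem exists_adj_of_reachable_of_notMem_compSet (hHG : H ≤ G) (h : H.Reachable v w)
    (hv : v ∈ G.compSet U C) (hw : w ∉ G.compSet U C) :
    ∃ a ∈ G.compSet U C, ∃ b ∈ U, H.Adj a b := by
  by_contra! hcon
  exact hw (mem_of_reachable h hv fun a ha b hab =>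
    mem_compSet_of_adj ha (fun hb => hcon a ha b hb hab) (hHG hab))

theorem not_disjoint_of_joinedByExactlyOneEdge (hC : G.JoinedByExactlyOneEdge U C)
    (hH : H ≤ G) (hK : K ≤ G) (hvw : H.Reachable v w) (hxy : K.Reachable x y)
    (hv : v ∈ G.compSet U C) (hw : w ∉ G.compSet U C) (hx : x ∈ G.compSet U C)
    (hy : y ∉ G.compSet U C) : ¬ Disjoint H K := by
  obtain ⟨a, ha, b, hb, hab⟩ := exists_adj_of_reachable_of_notMem_compSet hH hvw hv hw
  obtain ⟨c, hc, d, hd, hcd⟩ := exists_adj_of_reachable_of_notMem_compSet hK hxy hx hy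
  have heq : s(a, b) = s(c, d) :=
    hC.unique ⟨hH hab, a, ha, b, hb, rfl⟩ ⟨hK hcd, c, hc, d, hd, rfl⟩
  have hab' : K.Adj a b := by rwa [← mem_edgeSet, heq]
  exact fun h => disjoint_left.1 h a b hab hab'

theorem PathSystem.exists_ends_eq_pair {ι : Type*} (F : PathSystem G ι) (hv : v ∈ F.ends univ) :
    ∃ i w, w ≠ v ∧ F.ends {i} = {v, w} ∧ (F.graph i).Reachable v w := by
  obtain ⟨i, -, rfl | rfl⟩ := F.mem_ends.1 hv
  · exact ⟨i, F.t i, (F.s_ne_t i i).symm, by simp [ends, pair_comm], F.reachable i⟩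
  · exact ⟨i, F.s i, F.s_ne_t i i, by simp [ends], (F.reachable i).symm⟩

/-- The path of a `T`-join starting at `u` leads into a component of `G - U`, and then so does the
path from the other vertex of `T` in this component; both use the edge joining it to `U`. -/
theorem not_hasTJoin_of_joinedByExactlyOneEdge
    (hU : ∀ C : (G.induce (Uᶜ : Set V)).ConnectedComponent, G.JoinedByExactlyOneEdge U C)
    (hTU : T ∩ U = {u}) (hTC : ∀ v ∈ T \ U, ∃ C, ∃ w ≠ v, T ∩ G.compSet U C = {v, w}) :
    ¬ G.HasTJoin T := by
  intro hT
  obtain ⟨ι, F, rfl⟩ := HasTJoin.exists_pathSystem hT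
  have hu : u ∈ F.ends univ ∩ U := hTU.superset rfl
  obtain ⟨i, v, hvu, hi, huv⟩ := F.exists_ends_eq_pair hu.1
  have hvT : v ∈ F.ends univ := F.ends_mono (subset_univ {i}) (hi.superset (.inr rfl))
  obtain ⟨C, w, hwv, hC⟩ := hTC v ⟨hvT, fun hvU => hvu (hTU.subset ⟨hvT, hvU⟩)⟩
  have hvC : v ∈ F.ends univ ∩ G.compSet U C := hC.superset (.inl rfl)
  have hwC : w ∈ F.ends univ ∩ G.compSet U C := hC.superset (.inr rfl)
  obtain ⟨j, x, hxw, hj, hwx⟩ := F.exists_ends_eq_pair hwC.1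
  have hwu : w ≠ u := fun h => notMem_of_mem_compSet hwC.2 (h ▸ hu.2)
  have hij : i ≠ j := by
    rintro rfl
    have hw : w ∈ ({u, v} : Set V) := hi.subset (hj.superset (.inl rfl))
    exact hw.elim hwu hwv
  have hxT : x ∈ F.ends {j} := hj.superset (.inr rfl)
  have hxv : x ≠ v := fun h => Set.disjoint_left.1 (F.disjoint_ends (disjoint_singleton.2 hij))
    (hi.superset (.inr rfl)) (h ▸ hxT)
  have hxC : x ∉ G.compSet U C := fun hx =>
    (hC.subset ⟨F.ends_mono (subset_univ _) hxT, hx⟩).elim hxv hxw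
  exact not_disjoint_of_joinedByExactlyOneEdge (hU C) (F.graph_le i) (F.graph_le j) huv.symm hwx
    hvC.2 (fun h => notMem_of_mem_compSet h hu.2) hwC.2 hxC (F.disjoint hij)

/-- `U` obstructs the existence of `T`-joins for infinite `T`: every component of `G - U` is joined
to `U` by exactly one edge, and infinitely many of them are nontrivial. -/
def IsObstruction (G : SimpleGraph V) (U : Set V) : Prop :=
  (∀ C : (G.induce (Uᶜ : Set V)).ConnectedComponent, G.JoinedByExactlyOneEdge U C) ∧
    {C : (G.induce (Uᶜ : Set V)).ConnectedComponent | (G.compSet U C).Nontrivial}.Infinite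

theorem IsObstruction.exists_not_hasTJoin (hU : IsObstruction G U) :
    ∃ T : Set V, T.Infinite ∧ ¬ G.HasTJoin T := by
  obtain ⟨hU, hinf⟩ := hU
  set N := {C : (G.induce (Uᶜ : Set V)).ConnectedComponent | (G.compSet U C).Nontrivial}
  obtain ⟨C₀, -⟩ := hinf.nonempty
  obtain ⟨-, ⟨-, -, -, u, hu, -⟩, -⟩ := hU C₀
  have : Nonempty V := ⟨u⟩
  choose! a ha b hb hab using fun C (hC : C ∈ N) => hC
  let T := insert u (⋃ C ∈ N, {a C, b C})
  have hT : ∀ v ∈ T, v = u ∨ ∃ C ∈ N, v ∈ ({a C, b C} : Set V) ∧ v ∈ G.compSet U C := by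
    rintro v (rfl | hv)
    · exact .inl rfl
    obtain ⟨C, hC, hv⟩ := mem_iUnion₂.1 hv
    exact .inr ⟨C, hC, hv, pair_subset (ha C hC) (hb C hC) hv⟩
  have hTC : ∀ C ∈ N, T ∩ G.compSet U C = {a C, b C} := by
    refine fun C hC => Subset.antisymm ?_ fun v hv =>
      ⟨.inr (mem_biUnion hC hv), pair_subset (ha C hC) (hb C hC) hv⟩
    rintro v ⟨hvT, hvC⟩
    obtain rfl | ⟨C', -, hv, hvC'⟩ := hT v hvT
    · exact absurd hu (notMem_of_mem_compSet hvC)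
    · rwa [eq_of_mem_compSet hvC hvC']
  refine ⟨T, ?_, not_hasTJoin_of_joinedByExactlyOneEdge hU (u := u) ?_ ?_⟩
  · refine (hinf.image fun C hC C' hC' h => eq_of_mem_compSet (ha C hC)
      ((show a C = a C' from h) ▸ ha C' hC')).mono ?_
    rintro _ ⟨C, hC, rfl⟩
    exact .inr (mem_biUnion hC (mem_insert _ _))
  · refine Subset.antisymm (fun v ⟨hvT, hvU⟩ => (hT v hvT).resolve_right ?_)
      (singleton_subset_iff.2 ⟨mem_insert _ _, hu⟩)
    rintro ⟨C, -, -, hvC⟩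
    exact notMem_of_mem_compSet hvC hvU
  · rintro v ⟨hvT, hvU⟩
    obtain rfl | ⟨C, hC, rfl | rfl, -⟩ := hT v hvT
    · exact absurd hu hvU
    · exact ⟨C, b C, (hab C hC).symm, hTC C hC⟩
    · exact ⟨C, a C, hab C hC, (hTC C hC).trans (pair_comm _ _)⟩

end Obstruction

section Sufficiency

variable {V : Type u} {G : SimpleGraph V} {ι : Type w} {F : PathSystem G ι} {r : V} {T : Set V}

theorem State.IsStuck.isObstruction_core {S : State F r} (hr : r ∉ F.ends univ) (hS : S.IsStuck) :
    IsObstruction G (core S.rest S.tip S.cut) :=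
  ⟨joinedByExactlyOneEdge_core S.rest_le fun _ he _ => S.adj_rest_of_mem_cut he,
    hS.infinite_nontrivial hr⟩

/-- The state in which nothing is joined and the tip is the extra vertex. -/
def State.initial [Infinite ι] (hG : G.Connected) (F : PathSystem G ι) (r : V) : State F r where
  used := ⊥
  tail := ⊥
  done := ∅
  loose := r
  tip := r
  used_le := bot_le
  tail_le := bot_le
  finite_used := by simp
  finite_tail := by simp
  disjoint := disjoint_bot_left
  loose_mem := mem_insert _ _
  reachable := .rfl
  free _ _ := by simp
  infinite := infinite_univ.mono fun i _ =>
    ⟨notMem_empty i, by simpa using hG.preconnected r (F.s i)⟩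

theorem exists_isObstruction_of_not_hasTJoin (hG : G.Connected) (hT : T.Infinite)
    (h : ¬ G.HasTJoin T) : ∃ U, IsObstruction G U := by
  obtain ⟨v₀, -⟩ := hT.nonempty
  obtain hT' | ⟨r, hr, K, -, -, hjoin⟩ :=
    hasPartialTJoin_of_reachable (T := T) fun v _ => hG.preconnected v₀ v
  · exact absurd hT' h
  obtain ⟨ι, F, hF⟩ := HasTJoin.exists_pathSystem (HasTJoin.mono hjoin sdiff_le)
  have hrF : r ∉ F.ends univ := fun h => (hF.subset h).2 rfl
  have : Infinite ι := by
    by_contra hι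
    rw [not_infinite_iff_finite] at hι
    exact (hT.sdiff (finite_singleton r)) (hF ▸ F.finite_ends finite_univ)
  by_contra! hno
  have hTF : insert r (F.ends univ) = T := by
    rw [hF, insert_sdiff_singleton, insert_eq_of_mem hr]
  refine h (hTF ▸ State.hasTJoin_of_forall_isMove hrF (State.initial hG F r) rfl ?_ fun S => ?_)
  · simp [State.joined, State.initial, PathSystem.ends]
  · by_contra! hS
    exact hno _ (State.IsStuck.isObstruction_core hrF hS)

end Sufficiency

end TJoin

/-- An infinite connected graph `G` contains a `T`-join for every infinite `T ⊆ V(G)` iff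
there is no `U ⊆ V(G)` such that every connected component of `G − U` is joined to `U` by
exactly one edge and infinitely many of these components are nontrivial. -/
theorem infinite_hasTJoin_iff {V : Type*} [Infinite V] (G : SimpleGraph V) (hG : G.Connected) :
    (∀ T : Set V, T.Infinite → G.HasTJoin T) ↔
      ¬ ∃ U : Set V,
        (∀ C : (G.induce (Uᶜ : Set V)).ConnectedComponent, G.JoinedByExactlyOneEdge U C) ∧
        {C : (G.induce (Uᶜ : Set V)).ConnectedComponent | (G.compSet U C).Nontrivial}.Infinite := by
  constructor
  · rintro h ⟨U, hU⟩
    obtain ⟨T, hT, hno⟩ := TJoin.IsObstruction.exists_not_hasTJoin hU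
    exact hno (h T hT)
  · intro hno T hT
    by_contra h
    exact hno (TJoin.exists_isObstruction_of_not_hasTJoin hG hT h)
end

section
/- Let G be a connected graph and suppose there exists a set U of vertices of G such that every connected component of G − U is joined to U by exactly one edge of G and infinitely many of these components are nontrivial (i.e., have more than one vertex). Then there exists an infinite subset T of V(G) for which G has no T-join; indeed, one may take T to consist of one vertex of U together with two vertices from each nontrivial connected component of G − U. -/
/-!
Let `S` be a set of vertices that at most one edge leaves, with `T ∩ S` finite and even. At most
one path of a `T`-join can cross from `S` to its complement, and by parity none does: if one did,
the other paths would pair off all of `T ∩ S` except a single vertex. If `T` consists of a vertex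
`u ∈ U` and two vertices from each nontrivial component of `G − U`, this applies to every such
component, so `u` cannot be paired with any other vertex of `T`.
-/

section TJoin

variable {V : Type*} {G : SimpleGraph V} {S T : Set V}
  {P : Set (Σ u : V, Σ v : V, G.Walk u v)}

/-- The edge boundary (cut) of `S`: the edges of `G` with one endpoint in `S` and the other
outside. The paths of a `T`-join compete for these edges. -/
def edgeBoundary (G : SimpleGraph V) (S : Set V) : Set (Sym2 V) :=
  {e | e ∈ G.edgeSet ∧ ∃ x ∈ S, ∃ y ∉ S, e = s(x, y)}

theorem edgeBoundary_compl (G : SimpleGraph V) (S : Set V) :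
    edgeBoundary G Sᶜ = edgeBoundary G S := by
  ext e
  constructor
  · rintro ⟨he, x, hx, y, hy, rfl⟩
    exact ⟨he, y, not_not.mp hy, x, hx, Sym2.eq_swap⟩
  · rintro ⟨he, x, hx, y, hy, rfl⟩
    exact ⟨he, y, hy, x, not_not.mpr hx, Sym2.eq_swap⟩

theorem exists_mem_edges_mem_edgeBoundary {a b : V} (p : G.Walk a b) (h : ¬(a ∈ S ↔ b ∈ S)) :
    ∃ e ∈ p.edges, e ∈ edgeBoundary G S := by
  wlog ha : a ∈ S generalizing S
  · rw [← edgeBoundary_compl]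
    exact this (S := Sᶜ) (mt not_iff_not.mp h) ha
  have hb : b ∉ S := fun hb ↦ h (iff_of_true ha hb)
  obtain ⟨d, hd, hfst, hsnd⟩ := p.exists_boundary_dart S ha hb
  exact ⟨d.edge, List.mem_map_of_mem hd, d.edge_mem, d.fst, hfst, d.snd, hsnd, rfl⟩

theorem fst_mem_iff_snd_mem_of_isTJoin_of_ne (hP : G.IsTJoin T P)
    (hS : (edgeBoundary G S).Subsingleton)
    {p q : Σ u : V, Σ v : V, G.Walk u v} (hp : p ∈ P) (hq : q ∈ P) (hpq : p ≠ q)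
    (hpS : ¬(p.1 ∈ S ↔ p.2.1 ∈ S)) : q.1 ∈ S ↔ q.2.1 ∈ S := by
  by_contra hqS
  obtain ⟨e, hep, heS⟩ := exists_mem_edges_mem_edgeBoundary p.2.2 hpS
  obtain ⟨f, hfq, hfS⟩ := exists_mem_edges_mem_edgeBoundary q.2.2 hqS
  exact hP.2.1 p hp q hq hpq e hep (hS hfS heS ▸ hfq)

theorem existsUnique_partner_of_isTJoin (hP : G.IsTJoin T P) {t : V} (ht : t ∈ T) :
    ∃! w, ∃ p ∈ P, s(p.1, p.2.1) = s(t, w) := by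
  obtain ⟨p, ⟨hp, hpt⟩, hunique⟩ := hP.2.2 t ht
  obtain ⟨w, hw⟩ : t ∈ s(p.1, p.2.1) := Sym2.mem_iff.mpr (hpt.imp Eq.symm Eq.symm)
  refine ⟨w, ⟨p, hp, hw⟩, ?_⟩
  rintro w' ⟨q, hq, hw'⟩
  have hqt : t ∈ s(q.1, q.2.1) := hw' ▸ Sym2.mem_mk_left t w'
  obtain rfl : q = p := hunique q ⟨hq, (Sym2.mem_iff.mp hqt).imp Eq.symm Eq.symm⟩
  exact Sym2.congr_right.mp (hw'.symm.trans hw)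

theorem even_ncard_of_isTJoin (hP : G.IsTJoin T P) (hST : S ⊆ T) (hfin : S.Finite)
    (hpaired : ∀ p ∈ P, p.1 ∈ S ↔ p.2.1 ∈ S) : Even S.ncard := by
  have partner_mem {v w : V} (hv : v ∈ S) (h : ∃ p ∈ P, s(p.1, p.2.1) = s(v, w)) : w ∈ S := by
    obtain ⟨p, hp, h⟩ := h
    obtain ⟨rfl, rfl⟩ | ⟨rfl, rfl⟩ := Sym2.eq_iff.mp h
    exacts [(hpaired p hp).mp hv, (hpaired p hp).mpr hv]
  let M : (⊤ : SimpleGraph V).Subgraph :=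
    { verts := S
      Adj := fun v w ↦ v ∈ S ∧ ∃ p ∈ P, s(p.1, p.2.1) = s(v, w)
      adj_sub := by
        rintro v _ ⟨-, p, hp, h⟩ rfl
        obtain ⟨hfst, hsnd⟩ := or_self_iff.mp (Sym2.eq_iff.mp h)
        exact (hP.1 p hp).2.1 (hfst.trans hsnd.symm)
      edge_vert := And.left
      symm := ⟨fun v w ⟨hv, h⟩ ↦ ⟨partner_mem hv h, by rwa [Sym2.eq_swap]⟩⟩ }
  have hM : M.IsMatching := fun v hv ↦ by
    simpa only [M, show v ∈ S from hv, true_and] using existsUnique_partner_of_isTJoin hP (hST hv)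
  have : Fintype M.verts := hfin.fintype
  rw [show S = M.verts from rfl, Set.ncard_eq_toFinset_card']
  exact hM.even_card

theorem fst_mem_iff_snd_mem_of_isTJoin_of_even_ncard (hP : G.IsTJoin T P)
    (hS : (edgeBoundary G S).Subsingleton) (hfin : (T ∩ S).Finite) (heven : Even (T ∩ S).ncard)
    {p : Σ u : V, Σ v : V, G.Walk u v} (hp : p ∈ P) : p.1 ∈ S ↔ p.2.1 ∈ S := by
  by_contra hpS
  obtain ⟨t, htT, htS, hpt, hends⟩ : ∃ t ∈ T, t ∈ S ∧ (p.1 = t ∨ p.2.1 = t) ∧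
      p.1 ∉ S \ {t} ∧ p.2.1 ∉ S \ {t} := by
    obtain ⟨-, -, hfst, hsnd⟩ := hP.1 p hp
    by_cases h : p.1 ∈ S
    · exact ⟨p.1, hfst, h, .inl rfl, by simp, by simp_all⟩
    · exact ⟨p.2.1, hsnd, (not_iff.mp hpS).mp h, .inr rfl, by simp [h], by simp⟩
  have hpaired : ∀ q ∈ P, q.1 ∈ (T ∩ S) \ {t} ↔ q.2.1 ∈ (T ∩ S) \ {t} := by
    intro q hq
    by_cases hpq : p = q
    · subst hpq
      exact iff_of_false (fun h ↦ hends.1 ⟨h.1.2, h.2⟩) (fun h ↦ hends.2 ⟨h.1.2, h.2⟩)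
    · have hqt : ¬(q.1 = t ∨ q.2.1 = t) := fun h ↦
        hpq ((hP.2.2 t htT).unique ⟨hp, hpt⟩ ⟨hq, h⟩)
      have hqS := fst_mem_iff_snd_mem_of_isTJoin_of_ne hP hS hp hq hpq hpS
      obtain ⟨-, -, hfst, hsnd⟩ := hP.1 q hq
      simp_all
  have heven' : Even ((T ∩ S) \ {t}).ncard :=
    even_ncard_of_isTJoin hP (Set.sdiff_subset.trans Set.inter_subset_left) hfin.sdiff hpaired
  have hcard : ((T ∩ S) \ {t}).ncard + 1 = (T ∩ S).ncard :=
    Set.ncard_sdiff_singleton_add_one ⟨htT, htS⟩ hfin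
  exact Nat.not_even_iff_odd.mpr heven'.add_one (hcard ▸ heven)

theorem not_hasTJoin_of_forall_exists_separating {u : V} (hu : u ∈ T)
    (hsep : ∀ t ∈ T, t ≠ u → ∃ S : Set V, t ∈ S ∧ u ∉ S ∧ (edgeBoundary G S).Subsingleton ∧
      (T ∩ S).Finite ∧ Even (T ∩ S).ncard) :
    ¬G.HasTJoin T := by
  rintro ⟨P, hP⟩
  obtain ⟨t, ⟨p, hp, hpt⟩, -⟩ := existsUnique_partner_of_isTJoin hP hu
  obtain ⟨-, hne, hfst, hsnd⟩ := hP.1 p hp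
  obtain ⟨rfl, rfl⟩ | ⟨rfl, rfl⟩ := Sym2.eq_iff.mp hpt
  · obtain ⟨S, htS, huS, hS, hfin, heven⟩ := hsep _ hsnd hne.symm
    exact huS ((fst_mem_iff_snd_mem_of_isTJoin_of_even_ncard hP hS hfin heven hp).mpr htS)
  · obtain ⟨S, htS, huS, hS, hfin, heven⟩ := hsep _ hfst hne
    exact huS ((fst_mem_iff_snd_mem_of_isTJoin_of_even_ncard hP hS hfin heven hp).mp htS)

end TJoin

section Transversal

variable {ι α : Type*} {I : Set ι} {S : ι → Set α}

theorem exists_subset_biUnion_encard_inter_eq (hdisj : I.PairwiseDisjoint S) {k : ι → ℕ∞}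
    (hk : ∀ i ∈ I, k i ≤ (S i).encard) :
    ∃ T ⊆ ⋃ i ∈ I, S i, ∀ i ∈ I, (T ∩ S i).encard = k i := by
  choose! A hAS hcard using fun i hi ↦ Set.exists_subset_encard_eq (hk i hi)
  refine ⟨⋃ i ∈ I, A i, Set.iUnion₂_mono hAS, fun i hi ↦ ?_⟩
  rw [← hcard i hi]
  congr 1
  refine subset_antisymm ?_ (Set.subset_inter (Set.subset_biUnion_of_mem hi) (hAS i hi))
  rintro x ⟨hx, hxi⟩
  obtain ⟨j, hj, hxj⟩ := Set.mem_iUnion₂.mp hx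
  rwa [hdisj.elim_set hi hj x hxi (hAS j hj hxj)]

theorem infinite_of_forall_inter_nonempty (hdisj : I.PairwiseDisjoint S) (hI : I.Infinite)
    {T : Set α} (hT : ∀ i ∈ I, (T ∩ S i).Nonempty) : T.Infinite := by
  have hinj : I.InjOn fun i ↦ T ∩ S i := fun i hi j hj hij ↦ by
    obtain ⟨x, hx⟩ := hT i hi
    have hx' : x ∈ T ∩ S j := hij.subset hx
    exact hdisj.elim_set hi hj x hx.2 hx'.2
  exact (hI.biUnion hinj).mono (Set.iUnion₂_subset fun _ _ ↦ Set.inter_subset_left)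

end Transversal

section CompSet

variable {V : Type*} {G : SimpleGraph V} {U : Set V}

theorem compSet_subset_compl (C : (G.induce Uᶜ).ConnectedComponent) : G.compSet U C ⊆ Uᶜ := by
  rintro _ ⟨x, -, rfl⟩
  exact x.2

theorem pairwise_disjoint_compSet (G : SimpleGraph V) (U : Set V) :
    Pairwise fun C D : (G.induce Uᶜ).ConnectedComponent ↦
      Disjoint (G.compSet U C) (G.compSet U D) := fun _ _ hCD ↦
  (Set.disjoint_image_iff Subtype.val_injective).mpr
    ((G.induce Uᶜ).pairwise_disjoint_supp_connectedComponent hCD)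

theorem mem_compSet_of_adj {C : (G.induce Uᶜ).ConnectedComponent} {x y : V}
    (hx : x ∈ G.compSet U C) (hxy : G.Adj x y) (hy : y ∉ U) : y ∈ G.compSet U C := by
  obtain ⟨x, hxC, rfl⟩ := hx
  have hadj : (G.induce Uᶜ).Adj x ⟨y, hy⟩ := hxy
  exact ⟨⟨y, hy⟩, C.mem_supp_of_adj_mem_supp hxC hadj, rfl⟩

theorem edgeBoundary_compSet (C : (G.induce Uᶜ).ConnectedComponent) :
    edgeBoundary G (G.compSet U C) =
      {e | e ∈ G.edgeSet ∧ ∃ x ∈ G.compSet U C, ∃ y ∈ U, e = s(x, y)} := by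
  ext e
  constructor
  · rintro ⟨he, x, hx, y, hy, rfl⟩
    exact ⟨he, x, hx, y, by_contra fun hyU ↦ hy (mem_compSet_of_adj hx he hyU), rfl⟩
  · rintro ⟨he, x, hx, y, hy, rfl⟩
    exact ⟨he, x, hx, y, fun hyC ↦ compSet_subset_compl C hyC hy, rfl⟩

theorem edgeBoundary_compSet_subsingleton {C : (G.induce Uᶜ).ConnectedComponent}
    (hC : G.JoinedByExactlyOneEdge U C) : (edgeBoundary G (G.compSet U C)).Subsingleton := by
  rw [edgeBoundary_compSet]
  exact fun _ he _ hf ↦ hC.unique he hf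

theorem nonempty_of_joinedByExactlyOneEdge {C : (G.induce Uᶜ).ConnectedComponent}
    (hC : G.JoinedByExactlyOneEdge U C) : U.Nonempty := by
  obtain ⟨_, ⟨-, -, -, u, hu, -⟩, -⟩ := hC
  exact ⟨u, hu⟩

end CompSet

theorem exists_infinite_no_tJoin_general {V : Type*} (G : SimpleGraph V) (U : Set V)
    (hU : U.Nonempty)
    (hboundary : ∀ C : (G.induce (Uᶜ : Set V)).ConnectedComponent, (G.compSet U C).Nontrivial →
      (edgeBoundary G (G.compSet U C)).Subsingleton)
    (hinf : {C : (G.induce (Uᶜ : Set V)).ConnectedComponent |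
      (G.compSet U C).Nontrivial}.Infinite) :
    ∃ T : Set V, T.Infinite ∧ ¬ G.HasTJoin T ∧
      ∃ u ∈ U, u ∈ T ∧
        T ⊆ insert u (⋃ C ∈ {C : (G.induce (Uᶜ : Set V)).ConnectedComponent |
          (G.compSet U C).Nontrivial}, G.compSet U C) ∧
        ∀ C : (G.induce (Uᶜ : Set V)).ConnectedComponent, (G.compSet U C).Nontrivial →
          (T ∩ G.compSet U C).ncard = 2 := by
  obtain ⟨u, hu⟩ := hU
  have hdisj := (pairwise_disjoint_compSet G U).set_pairwise {C | (G.compSet U C).Nontrivial}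
  obtain ⟨T, hTsub, hTcard⟩ := exists_subset_biUnion_encard_inter_eq (k := fun _ ↦ 2) hdisj
    fun C hC ↦ Order.add_one_le_of_lt (Set.one_lt_encard_iff_nontrivial.mpr hC)
  have huC C : u ∉ G.compSet U C := fun h ↦ compSet_subset_compl C h hu
  have hcard C (hC : (G.compSet U C).Nontrivial) : (insert u T ∩ G.compSet U C).encard = 2 := by
    rw [Set.insert_inter_of_notMem (huC C), hTcard C hC]
  have hncard C (hC : (G.compSet U C).Nontrivial) : (insert u T ∩ G.compSet U C).ncard = 2 := by
    rw [Set.ncard_def, hcard C hC, ENat.toNat_ofNat]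
  refine ⟨insert u T, ?_, ?_, u, hu, Set.mem_insert u T, Set.insert_subset_insert hTsub, hncard⟩
  · exact infinite_of_forall_inter_nonempty hdisj hinf fun C hC ↦
      Set.nonempty_of_ncard_ne_zero (by simp [hncard C hC])
  · refine not_hasTJoin_of_forall_exists_separating (Set.mem_insert u T) fun t ht htu ↦ ?_
    obtain ⟨C, hC, htC⟩ := Set.mem_iUnion₂.mp (hTsub (ht.resolve_left htu))
    exact ⟨G.compSet U C, htC, huC C, hboundary C hC,
      Set.finite_of_encard_eq_coe (hcard C hC), by simp [hncard C hC]⟩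

/-- If `G` is connected and there is a `U ⊆ V(G)` such that every connected component of
`G − U` is joined to `U` by exactly one edge and infinitely many of these components are
nontrivial, then there is an infinite `T ⊆ V(G)` with no `T`-join; moreover one may take `T`
to consist of one vertex of `U` together with two vertices from each nontrivial component of
`G − U`. -/
theorem exists_infinite_no_tJoin {V : Type*} (G : SimpleGraph V) (hG : G.Connected)
    (U : Set V)
    (hone : ∀ C : (G.induce (Uᶜ : Set V)).ConnectedComponent, G.JoinedByExactlyOneEdge U C)
    (hinf : {C : (G.induce (Uᶜ : Set V)).ConnectedComponent |
      (G.compSet U C).Nontrivial}.Infinite) :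
    ∃ T : Set V, T.Infinite ∧ ¬ G.HasTJoin T ∧
      ∃ u ∈ U, u ∈ T ∧
        T ⊆ insert u (⋃ C ∈ {C : (G.induce (Uᶜ : Set V)).ConnectedComponent |
          (G.compSet U C).Nontrivial}, G.compSet U C) ∧
        ∀ C : (G.induce (Uᶜ : Set V)).ConnectedComponent, (G.compSet U C).Nontrivial →
          (T ∩ G.compSet U C).ncard = 2 :=
  exists_infinite_no_tJoin_general G U
    (nonempty_of_joinedByExactlyOneEdge (hone hinf.nonempty.some))
    (fun C _ ↦ edgeBoundary_compSet_subsingleton (hone C)) hinf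
end

section
/- Let G be a connected graph and T ⊆ V(G). If G does not contain a T-join, then for every vertex v ∈ V(G) \ T, the graph G contains a (T ∪ {v})-join. -/
/-!
It suffices to treat a rooted spanning tree. Call a vertex settled if its subtree, together with
the edge to its parent, has a join of its vertices in `T`, possibly with one path ending at the
parent; the claim is that the root is settled. A vertex all of whose children are settled is
settled, because the paths arriving from the children can be concatenated in pairs.

For an arbitrary vertex `y`, grow a region from `y` without entering settled proper subtrees.
Every vertex `z` of the region, taken with the settled subtrees at its children, then leaves at
most one path end over at `z`, and is called a token if it leaves one. If above every token there
is another one, the tokens can be matched along pairwise disjoint vertical segments, each leading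
from a token to a next one; so `y` is settled. Otherwise `y` has a last token `k`. An unsettled
child of `k` would have no tokens and thus be settled after all, so all children of `k` are
settled, whence so is `k`. But only `y` itself can be a settled vertex of its region.
-/

open scoped symmDiff
open Function Set

universe u

variable {V : Type u}

/-- A working form of a `T`-join: the elements of `T` are listed without repetition as the ends
`e (inl i)`, `e (inr i)` of pairs, and the pairs are linked inside pairwise edge-disjoint
subgraphs `H i` of `G`. Subgraphs are easier to combine than walks, whose types mention `G`. -/
structure IsLinkage (G : SimpleGraph V) (T : Set V) {ι : Type*} (e : ι ⊕ ι → V)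
    (H : ι → SimpleGraph V) : Prop where
  injective : Injective e
  range_eq : range e = T
  le : ∀ i, H i ≤ G
  disjoint : Pairwise (Disjoint on H)
  reachable : ∀ i, (H i).Reachable (e (.inl i)) (e (.inr i))

section Linkage

variable {G : SimpleGraph V} {T : Set V}

theorem IsLinkage.hasTJoin {ι : Type*} {e : ι ⊕ ι → V} {H : ι → SimpleGraph V}
    (h : IsLinkage G T e H) : G.HasTJoin T := by
  choose w hw using fun i => (h.reachable i).exists_isPath
  let p (i : ι) : Σ u : V, Σ v : V, G.Walk u v := ⟨_, _, (w i).mapLe (h.le i)⟩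
  have edge_mem {i : ι} {s : Sym2 V} (hs : s ∈ (p i).2.2.edges) : s ∈ (H i).edgeSet :=
    (w i).edges_subset_edgeSet (by simpa [p] using hs)
  refine ⟨range p, ?_, ?_, ?_⟩
  · rintro _ ⟨i, rfl⟩
    refine ⟨(SimpleGraph.Walk.isPath_mapLe (h.le i)).2 (hw i), fun hi => ?_, ?_, ?_⟩
    · exact Sum.inl_ne_inr (h.injective hi)
    · exact h.range_eq ▸ mem_range_self _
    · exact h.range_eq ▸ mem_range_self _
  · rintro _ ⟨i, rfl⟩ _ ⟨j, rfl⟩ hij s hi hj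
    have hne : i ≠ j := fun hij' => hij (congrArg p hij')
    exact (SimpleGraph.disjoint_edgeSet.2 (h.disjoint hne)).notMem_of_mem_left
      (edge_mem hi) (edge_mem hj)
  · intro t ht
    obtain ⟨i | i, rfl⟩ := h.range_eq ▸ ht
    · refine ⟨p i, ⟨⟨i, rfl⟩, .inl rfl⟩, ?_⟩
      rintro _ ⟨⟨j, rfl⟩, hj | hj⟩
      · rw [Sum.inl_injective (h.injective hj)]
      · exact absurd (h.injective hj) Sum.inr_ne_inl
    · refine ⟨p i, ⟨⟨i, rfl⟩, .inr rfl⟩, ?_⟩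
      rintro _ ⟨⟨j, rfl⟩, hj | hj⟩
      · exact absurd (h.injective hj) Sum.inl_ne_inr
      · rw [Sum.inr_injective (h.injective hj)]

theorem exists_isLinkage (h : G.HasTJoin T) :
    ∃ (ι : Type u) (e : ι ⊕ ι → V) (H : ι → SimpleGraph V), IsLinkage G T e H := by
  obtain ⟨P, hpath, hdisj, huniq⟩ := h
  let ends : P ⊕ P → V := Sum.elim (fun p => p.1.1) (fun p => p.1.2.1)
  have eq_of_end {p q : P} {t : V} (hp : p.1.1 = t ∨ p.1.2.1 = t)
      (hq : q.1.1 = t ∨ q.1.2.1 = t) : p = q := by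
    have ht : t ∈ T := by
      rcases hp with rfl | rfl
      exacts [(hpath p p.2).2.2.1, (hpath p p.2).2.2.2]
    exact Subtype.ext ((huniq t ht).unique ⟨p.2, hp⟩ ⟨q.2, hq⟩)
  refine ⟨P, ends, fun p => .fromEdgeSet {s | s ∈ p.1.2.2.edges}, ?_, ?_, fun p => ?_, ?_,
    fun p => ?_⟩
  · rintro (p | p) (q | q) hpq
    · rw [eq_of_end (p := p) (q := q) (.inl hpq) (.inl rfl)]
    · obtain rfl : p = q := eq_of_end (.inl hpq) (.inr rfl)
      exact absurd hpq (hpath p p.2).2.1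
    · obtain rfl : p = q := eq_of_end (.inr hpq) (.inl rfl)
      exact absurd hpq.symm (hpath p p.2).2.1
    · rw [eq_of_end (p := p) (q := q) (.inr hpq) (.inr rfl)]
  · ext t
    constructor
    · rintro ⟨p | p, rfl⟩
      exacts [(hpath p p.2).2.2.1, (hpath p p.2).2.2.2]
    · intro ht
      obtain ⟨p, ⟨hp, rfl | rfl⟩, -⟩ := huniq t ht
      exacts [⟨.inl ⟨p, hp⟩, rfl⟩, ⟨.inr ⟨p, hp⟩, rfl⟩]
  · rw [SimpleGraph.fromEdgeSet_le]
    exact fun s hs => p.1.2.2.edges_subset_edgeSet hs.1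
  · intro p q hpq
    rw [onFun, ← SimpleGraph.disjoint_edgeSet, SimpleGraph.edgeSet_fromEdgeSet,
      SimpleGraph.edgeSet_fromEdgeSet]
    refine Disjoint.mono sdiff_subset sdiff_subset (Set.disjoint_left.2 ?_)
    exact hdisj p p.2 q q.2 fun h => hpq (Subtype.ext h)
  · refine ⟨p.1.2.2.transfer _ fun s hs => ?_⟩
    rw [SimpleGraph.edgeSet_fromEdgeSet]
    exact ⟨hs, G.not_isDiag_of_mem_edgeSet (p.1.2.2.edges_subset_edgeSet hs)⟩

theorem hasTJoin_mono {H : SimpleGraph V} (hGH : G ≤ H) (h : G.HasTJoin T) : H.HasTJoin T := by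
  obtain ⟨ι, e, L, hL⟩ := exists_isLinkage h
  exact IsLinkage.hasTJoin { hL with le := fun i => (hL.le i).trans hGH }

theorem hasTJoin_iSup {ι : Type*} {H : ι → SimpleGraph V} {X : ι → Set V}
    (hH : Pairwise (Disjoint on H)) (hX : Pairwise (Disjoint on X))
    (h : ∀ i, (H i).HasTJoin (X i)) : (⨆ i, H i).HasTJoin (⋃ i, X i) := by
  choose κ e L hL using fun i => exists_isLinkage (h i)
  have mem (i : ι) (k : κ i ⊕ κ i) : e i k ∈ X i := (hL i).range_eq ▸ mem_range_self k
  let tag : (Σ i, κ i) ⊕ (Σ i, κ i) ≃ Σ i, κ i ⊕ κ i := (Equiv.sigmaSumDistrib κ κ).symm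
  let ends (k : Σ i, κ i ⊕ κ i) : V := e k.1 k.2
  refine IsLinkage.hasTJoin (e := ends ∘ tag) (H := fun k : Σ i, κ i => L k.1 k.2)
    ⟨?_, ?_, ?_, ?_, fun k => (hL k.1).reachable k.2⟩
  · refine Injective.comp ?_ tag.injective
    rintro ⟨i, k⟩ ⟨j, l⟩ hkl
    obtain rfl : i = j := by
      by_contra hij
      exact (hX hij).notMem_of_mem_left (mem i k) ((show e i k = e j l from hkl) ▸ mem j l)
    exact congrArg (Sigma.mk i) ((hL i).injective hkl)
  · rw [range_comp, tag.range_eq_univ, image_univ, range_sigma_eq_iUnion_range]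
    exact iUnion_congr fun i => (hL i).range_eq
  · exact fun k => ((hL k.1).le k.2).trans (le_iSup H k.1)
  · rintro ⟨i, k⟩ ⟨j, l⟩ hkl
    rcases eq_or_ne i j with rfl | hij
    · exact (hL i).disjoint fun hkl' => hkl (congrArg (Sigma.mk i) hkl')
    · exact (hH hij).mono ((hL i).le k) ((hL j).le l)

theorem hasTJoin_biSup {ι : Type*} {s : Set ι} {H : ι → SimpleGraph V} {X : ι → Set V}
    (hH : s.PairwiseDisjoint H) (hX : s.PairwiseDisjoint X) (h : ∀ i ∈ s, (H i).HasTJoin (X i)) :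
    (⨆ i ∈ s, H i).HasTJoin (⋃ i ∈ s, X i) := by
  rw [← iSup_subtype'', biUnion_eq_iUnion]
  exact hasTJoin_iSup (hH.subtype _ _) (hX.subtype _ _) fun i => h i i.2

theorem hasTJoin_sup {H : SimpleGraph V} {X Y : Set V} (hGH : Disjoint G H) (hXY : Disjoint X Y)
    (hX : G.HasTJoin X) (hY : H.HasTJoin Y) : (G ⊔ H).HasTJoin (X ∪ Y) := by
  rw [sup_eq_iSup, union_eq_iUnion]
  exact hasTJoin_iSup (pairwise_disjoint_on_bool.2 hGH)
    (pairwise_disjoint_on_bool.2 hXY) (Bool.forall_bool.2 ⟨hY, hX⟩)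

theorem hasTJoin_pair {u v : V} (huv : u ≠ v) (h : G.Reachable u v) : G.HasTJoin {u, v} := by
  refine IsLinkage.hasTJoin (ι := Unit) (e := Sum.elim (fun _ => u) (fun _ => v)) (H := fun _ => G)
    ⟨?_, ?_, fun _ => le_rfl, Subsingleton.pairwise, fun _ => h⟩
  · exact (injective_of_subsingleton _).sumElim (injective_of_subsingleton _) fun _ _ => huv
  · rw [Sum.elim_range, range_const, range_const, singleton_union]

theorem exists_reachable_hasTJoin_sdiff {x : V} (h : G.HasTJoin T) (hx : x ∈ T) :
    ∃ y ∈ T, y ≠ x ∧ ∃ H ≤ G, H.Reachable x y ∧ (G \ H).HasTJoin (T \ {x, y}) := by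
  obtain ⟨ι, e, L, hL⟩ := exists_isLinkage h
  have remove (i : ι) : (G \ L i).HasTJoin (T \ {e (.inl i), e (.inr i)}) := by
    refine IsLinkage.hasTJoin (e := e ∘ Sum.map ((↑) : {j // j ≠ i} → ι) (↑))
      (H := fun j => L j) ⟨?_, ?_, ?_, ?_, fun j => hL.reachable j⟩
    · exact hL.injective.comp (Subtype.val_injective.sumMap Subtype.val_injective)
    · rw [← hL.range_eq]
      ext t
      constructor
      · rintro ⟨⟨j, hj⟩ | ⟨j, hj⟩, rfl⟩ <;> simp [hL.injective.eq_iff, hj]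
      · rintro ⟨⟨j | j, rfl⟩, ht⟩
        · exact ⟨.inl ⟨j, fun hj => ht (by simp [hj])⟩, rfl⟩
        · exact ⟨.inr ⟨j, fun hj => ht (by simp [hj])⟩, rfl⟩
    · exact fun j => le_sdiff.2 ⟨hL.le j, hL.disjoint j.2⟩
    · exact hL.disjoint.comp_of_injective Subtype.val_injective
  have mem (k : ι ⊕ ι) : e k ∈ T := hL.range_eq ▸ mem_range_self k
  obtain ⟨i | i, rfl⟩ := hL.range_eq ▸ hx
  · exact ⟨_, mem (.inr i), hL.injective.ne Sum.inr_ne_inl, L i, hL.le i, hL.reachable i, remove i⟩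
  · exact ⟨_, mem (.inl i), hL.injective.ne Sum.inl_ne_inr, L i, hL.le i,
      (hL.reachable i).symm, pair_comm (e (.inl i)) _ ▸ remove i⟩

end Linkage

section SymmDiff

variable {G H : SimpleGraph V} {X Y : Set V}

theorem hasTJoin_toggle_of_notMem {u v : V} (hu : u ∉ X) (hv : v ∉ X) (hGH : Disjoint G H)
    (hX : G.HasTJoin X) (huv : H.Reachable u v) : (G ⊔ H).HasTJoin (X ∆ {u} ∆ {v}) := by
  rcases eq_or_ne u v with rfl | hne
  · rw [symmDiff_symmDiff_cancel_right]
    exact hasTJoin_mono le_sup_left hX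
  · have hunion : X ∆ {u} ∆ {v} = X ∪ {u, v} := by
      ext t; simp only [mem_symmDiff, mem_union, mem_insert_iff, mem_singleton_iff]; grind
    rw [hunion]
    exact hasTJoin_sup hGH (disjoint_right.2 (by grind)) hX (hasTJoin_pair hne huv)

/-- Reroutes the path ending at a vertex `u ∈ X` through the new connection from `u` to `v`. -/
theorem exists_reroute {u v : V} (hu : u ∈ X) (hGH : Disjoint G H) (hX : G.HasTJoin X)
    (huv : H.Reachable u v) :
    ∃ y ∈ X, y ≠ u ∧ ∃ K L : SimpleGraph V, Disjoint K L ∧ K ⊔ L = G ⊔ H ∧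
      K.HasTJoin (X \ {u, y}) ∧ L.Reachable y v := by
  obtain ⟨y, hy, hyu, F, hFG, huy, hX'⟩ := exists_reachable_hasTJoin_sdiff hX hu
  refine ⟨y, hy, hyu, G \ F, F ⊔ H, ?_, ?_, hX', ?_⟩
  · exact disjoint_sup_right.2 ⟨disjoint_sdiff_self_left, hGH.mono_left sdiff_le⟩
  · rw [← sup_assoc, sdiff_sup_cancel hFG]
  · exact (huy.symm.mono le_sup_left).trans (huv.mono le_sup_right)

theorem hasTJoin_toggle_of_notMem_left {u v : V} (hu : u ∉ X) (hGH : Disjoint G H)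
    (hX : G.HasTJoin X) (huv : H.Reachable u v) : (G ⊔ H).HasTJoin (X ∆ {u} ∆ {v}) := by
  by_cases hv : v ∈ X
  · obtain ⟨y, hy, hyv, K, L, hKL, hsup, hX', hyu⟩ := exists_reroute hv hGH hX huv.symm
    have hend : X ∆ {u} ∆ {v} = (X \ {v, y}) ∆ {y} ∆ {u} := by
      ext t; simp only [mem_symmDiff, mem_sdiff, mem_insert_iff, mem_singleton_iff]; grind
    rw [hend, ← hsup]
    exact hasTJoin_toggle_of_notMem (by simp) (by simp [hu]) hKL hX' hyu
  · exact hasTJoin_toggle_of_notMem hu hv hGH hX huv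

theorem hasTJoin_toggle {u v : V} (hGH : Disjoint G H) (hX : G.HasTJoin X)
    (huv : H.Reachable u v) : (G ⊔ H).HasTJoin (X ∆ {u} ∆ {v}) := by
  by_cases hu : u ∈ X
  · obtain ⟨y, hy, hyu, K, L, hKL, hsup, hX', hyv⟩ := exists_reroute hu hGH hX huv
    have hend : X ∆ {u} ∆ {v} = (X \ {u, y}) ∆ {y} ∆ {v} := by
      ext t; simp only [mem_symmDiff, mem_sdiff, mem_insert_iff, mem_singleton_iff]; grind
    rw [hend, ← hsup]
    exact hasTJoin_toggle_of_notMem_left (by simp) hKL hX' hyv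
  · exact hasTJoin_toggle_of_notMem_left hu hGH hX huv

theorem hasTJoin_symmDiff (hGH : Disjoint G H) (hfin : (X ∩ Y).Finite) (hX : G.HasTJoin X)
    (hY : H.HasTJoin Y) : (G ⊔ H).HasTJoin (X ∆ Y) := by
  induction hn : (X ∩ Y).ncard using Nat.strong_induction_on generalizing G H X Y with
  | _ n ih =>
    rcases (X ∩ Y).eq_empty_or_nonempty with hempty | ⟨z, hzX, hzY⟩
    · have hdisj : Disjoint X Y := disjoint_iff_inter_eq_empty.2 hempty
      rw [hdisj.symmDiff_eq_sup]
      exact hasTJoin_sup hGH hdisj hX hY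
    · obtain ⟨y, hy, hyz, F, hFH, hzy, hY'⟩ := exists_reachable_hasTJoin_sdiff hY hzY
      have hXF : (G ⊔ F).HasTJoin (X ∆ {z} ∆ {y}) := hasTJoin_toggle (hGH.mono_right hFH) hX hzy
      have hinter : X ∆ {z} ∆ {y} ∩ (Y \ {z, y}) ⊂ X ∩ Y := by
        refine ⟨fun t => ?_, fun hsub => ?_⟩
        · simp only [mem_inter_iff, mem_symmDiff, mem_sdiff, mem_insert_iff, mem_singleton_iff]
          grind
        · exact (hsub ⟨hzX, hzY⟩).2.2 (mem_insert z _)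
      have hend : X ∆ Y = (X ∆ {z} ∆ {y}) ∆ (Y \ {z, y}) := by
        ext t; simp only [mem_symmDiff, mem_sdiff, mem_insert_iff, mem_singleton_iff]; grind
      have hedge : G ⊔ H = (G ⊔ F) ⊔ (H \ F) := by rw [sup_assoc, sup_sdiff_cancel_right hFH]
      rw [hend, hedge]
      refine ih _ (hn ▸ ncard_lt_ncard hinter hfin) ?_ (hfin.subset hinter.1) hXF hY' rfl
      exact disjoint_sup_left.2 ⟨hGH.mono_right sdiff_le, disjoint_sdiff_self_right⟩

end SymmDiff

theorem exists_equiv_prod_bool (ι : Type u) :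
    ∃ κ : Type u, Nonempty (κ × Bool ≃ ι) ∨ Nonempty (Option (κ × Bool) ≃ ι) := by
  rcases finite_or_infinite ι with hfin | hinf
  · have := Fintype.ofFinite ι
    obtain ⟨k, hk | hk⟩ := Nat.even_or_odd' (Fintype.card ι)
    · exact ⟨ULift (Fin k), .inl ⟨Fintype.equivOfCardEq (by simp [hk, mul_comm])⟩⟩
    · exact ⟨ULift (Fin k), .inr ⟨Fintype.equivOfCardEq (by simp [hk, mul_comm])⟩⟩
  · refine ⟨ι, .inl (Cardinal.eq.1 ?_)⟩
    simpa using Cardinal.mul_eq_left (Cardinal.aleph0_le_mk ι)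
      (Cardinal.ofNat_le_aleph0.trans (Cardinal.aleph0_le_mk ι)) two_ne_zero

section Star

variable {x : V}

theorem hasTJoin_iSup_prod_bool {κ : Type*} {H : κ × Bool → SimpleGraph V}
    {X : κ × Bool → Set V} (hH : Pairwise (Disjoint on H))
    (hX : Pairwise (Disjoint on X)) (hx : ∀ i, x ∉ X i) (h : ∀ i, (H i).HasTJoin (insert x (X i))) :
    (⨆ i, H i).HasTJoin (⋃ i, X i) := by
  have ne_bool (k : κ) : (k, true) ≠ (k, false) := by simp
  have ne_fst {k l : κ} (hkl : k ≠ l) (b c : Bool) : (k, b) ≠ (l, c) := by simp [hkl]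
  -- Concatenate the paths ending at `x` in `H (k, true)` and in `H (k, false)`.
  have hpair (k : κ) : (H (k, true) ⊔ H (k, false)).HasTJoin (X (k, true) ∪ X (k, false)) := by
    have hinter : insert x (X (k, true)) ∩ insert x (X (k, false)) = {x} := by
      rw [← insert_inter_distrib, (hX (ne_bool k)).inter_eq, insert_empty_eq]
    have hunion : insert x (X (k, true)) ∆ insert x (X (k, false))
        = X (k, true) ∪ X (k, false) := by
      have := disjoint_left.1 (hX (ne_bool k))
      have := hx (k, true)
      have := hx (k, false)
      ext t; simp only [mem_symmDiff, mem_insert_iff, mem_union]; grind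
    rw [← hunion]
    exact hasTJoin_symmDiff (hH (ne_bool k)) (hinter ▸ finite_singleton x) (h _) (h _)
  have hH' : Pairwise (Disjoint on fun k => H (k, true) ⊔ H (k, false)) := by
    intro k l hkl
    simp only [onFun, disjoint_sup_left, disjoint_sup_right]
    exact ⟨⟨hH (ne_fst hkl _ _), hH (ne_fst hkl _ _)⟩, hH (ne_fst hkl _ _), hH (ne_fst hkl _ _)⟩
  have hX' : Pairwise (Disjoint on fun k => X (k, true) ∪ X (k, false)) := by
    intro k l hkl
    simp only [onFun, disjoint_union_left, disjoint_union_right]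
    exact ⟨⟨hX (ne_fst hkl _ _), hX (ne_fst hkl _ _)⟩, hX (ne_fst hkl _ _), hX (ne_fst hkl _ _)⟩
  have hsup : ⨆ i, H i = ⨆ k, H (k, true) ⊔ H (k, false) := by
    simp only [iSup_prod, iSup_bool_eq]
  have hunion : ⋃ i, X i = ⋃ k, X (k, true) ∪ X (k, false) := by
    simp only [← iSup_eq_iUnion, iSup_prod, iSup_bool_eq, sup_eq_union]
  exact hsup ▸ hunion ▸ hasTJoin_iSup hH' hX' hpair

theorem symmDiff_singleton_of_notMem {T : Set V} (hx : x ∉ T) : T ∆ {x} = insert x T := by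
  rw [(disjoint_singleton_right.2 hx).symmDiff_eq_sup]
  exact union_singleton

/-- `G` has a `T`-join or a join of `T` with membership of `x` toggled: the vertices of `T` can be
paired off in `G`, except that possibly one path ends at `x` instead. -/
def HasTJoinUpTo (G : SimpleGraph V) (x : V) (T : Set V) : Prop :=
  G.HasTJoin T ∨ G.HasTJoin (T ∆ {x})

theorem hasTJoinUpTo_mono {G H : SimpleGraph V} {T : Set V} (hGH : G ≤ H)
    (h : HasTJoinUpTo G x T) : HasTJoinUpTo H x T :=
  h.imp (hasTJoin_mono hGH) (hasTJoin_mono hGH)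

theorem hasTJoinUpTo_of_reachable {G H : SimpleGraph V} {T : Set V} {y : V} (hGH : Disjoint G H)
    (h : HasTJoinUpTo G x T) (hxy : H.Reachable x y) : HasTJoinUpTo (G ⊔ H) y T := by
  refine h.imp (hasTJoin_mono le_sup_left) fun hx => ?_
  simpa only [symmDiff_symmDiff_cancel_right] using hasTJoin_toggle hGH hx hxy

theorem hasTJoinUpTo_sup {G H : SimpleGraph V} {X Y : Set V} (hGH : Disjoint G H)
    (hXY : Disjoint X Y) (hx : x ∉ X) (hX : G.HasTJoin X) (hY : HasTJoinUpTo H x Y) :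
    HasTJoinUpTo (G ⊔ H) x (X ∪ Y) := by
  refine hY.imp (hasTJoin_sup hGH hXY hX) fun hY' => ?_
  have hunion : (X ∪ Y) ∆ {x} = X ∪ Y ∆ {x} := by
    have := disjoint_left.1 hXY
    ext t; simp only [mem_symmDiff, mem_union, mem_singleton_iff]; grind
  rw [hunion]
  refine hasTJoin_sup hGH (disjoint_left.2 fun t htX htY => ?_) hX hY'
  rcases htY with ⟨htY, -⟩ | ⟨rfl, -⟩
  exacts [disjoint_left.1 hXY htX htY, hx htX]

variable {ι : Type u} {H : ι → SimpleGraph V} {X : ι → Set V}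

theorem hasTJoinUpTo_iSup_of_insert (hH : Pairwise (Disjoint on H))
    (hX : Pairwise (Disjoint on X)) (hx : ∀ i, x ∉ X i)
    (h : ∀ i, (H i).HasTJoin (insert x (X i))) : HasTJoinUpTo (⨆ i, H i) x (⋃ i, X i) := by
  have pairs {κ : Type u} {f : κ × Bool → ι} (hf : Injective f) :
      (⨆ k, H (f k)).HasTJoin (⋃ k, X (f k)) :=
    hasTJoin_iSup_prod_bool (hH.comp_of_injective hf) (hX.comp_of_injective hf)
      (fun k => hx (f k)) fun k => h (f k)
  obtain ⟨κ, ⟨⟨f⟩⟩ | ⟨⟨f⟩⟩⟩ := exists_equiv_prod_bool ι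
  · left
    rw [← f.iSup_comp, ← f.surjective.iUnion_comp]
    exact pairs f.injective
  · have hsome : Injective fun k => f (some k) := f.injective.comp (Option.some_injective _)
    have none_ne (k : κ × Bool) : f (some k) ≠ f none := by simp
    rw [← f.iSup_comp, ← f.surjective.iUnion_comp, iSup_option, iUnion_option, sup_comm, union_comm]
    refine hasTJoinUpTo_sup ?_ ?_ ?_ (pairs hsome) (.inr ?_)
    · exact iSup_disjoint_iff.2 fun k => hH (none_ne k)
    · exact disjoint_iUnion_left.2 fun k => hX (none_ne k)
    · simp [hx]
    · exact symmDiff_singleton_of_notMem (hx _) ▸ h _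

theorem hasTJoinUpTo_iSup (hH : Pairwise (Disjoint on H)) (hX : Pairwise (Disjoint on X))
    (hx : ∀ i, x ∉ X i) (h : ∀ i, HasTJoinUpTo (H i) x (X i)) :
    HasTJoinUpTo (⨆ i, H i) x (⋃ i, X i) := by
  let p (i : ι) : Prop := (H i).HasTJoin (X i)
  have insert_join (i : {i // ¬ p i}) : (H i).HasTJoin (insert x (X i)) :=
    symmDiff_singleton_of_notMem (hx _) ▸ (h i).resolve_left i.2
  rw [iSup_split H p, iSup_subtype', iSup_subtype', ← iSup_eq_iUnion, iSup_split X p,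
    iSup_subtype', iSup_subtype']
  refine hasTJoinUpTo_sup ?_ ?_ ?_
    (hasTJoin_iSup (hH.comp_of_injective Subtype.val_injective)
      (hX.comp_of_injective Subtype.val_injective) fun i => i.2)
    (hasTJoinUpTo_iSup_of_insert (hH.comp_of_injective Subtype.val_injective)
      (hX.comp_of_injective Subtype.val_injective) (fun i => hx i) insert_join)
  · simp only [iSup_disjoint_iff, disjoint_iSup_iff]
    exact fun i j => hH fun hij => i.2 (hij ▸ j.2)
  · simp only [iSup_disjoint_iff, disjoint_iSup_iff]
    exact fun i j => hX fun hij => i.2 (hij ▸ j.2)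
  · simp [hx]

end Star

section Substitution

theorem hasTJoin_union_of_reachable {G H L : SimpleGraph V} {X Y : Set V} {u v : V}
    (hGH : Disjoint G H) (hL : Disjoint (G ⊔ H) L) (hXY : Disjoint (insert u X) (insert v Y))
    (hX : G.HasTJoin (X ∆ {u})) (hY : H.HasTJoin (Y ∆ {v})) (huv : L.Reachable u v) :
    (G ⊔ H ⊔ L).HasTJoin (X ∪ Y) := by
  have hdisj := disjoint_left.1 hXY
  simp only [mem_insert_iff] at hdisj
  have hunion : X ∪ Y = (X ∆ {u} ∪ Y ∆ {v}) ∆ {u} ∆ {v} := by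
    ext t; simp only [mem_union, mem_symmDiff, mem_singleton_iff]; grind
  rw [hunion]
  refine hasTJoin_toggle hL (hasTJoin_sup hGH (hXY.mono ?_ ?_) hX hY) huv
  all_goals exact fun t => by simp only [mem_symmDiff, mem_singleton_iff, mem_insert_iff]; tauto

theorem hasTJoin_sup_biSup {H : SimpleGraph V} {K : Set V} {D : V → SimpleGraph V}
    {X : V → Set V} (hD : K.PairwiseDisjoint D) (hHD : ∀ k ∈ K, Disjoint H (D k))
    (hX : K.PairwiseDisjoint fun k => insert k (X k)) (hK : H.HasTJoin K)
    (h : ∀ k ∈ K, (D k).HasTJoin (X k ∆ {k})) :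
    (H ⊔ ⨆ k ∈ K, D k).HasTJoin (⋃ k ∈ K, X k) := by
  obtain ⟨ι, e, L, hL⟩ := exists_isLinkage hK
  have mem (k : ι ⊕ ι) : e k ∈ K := hL.range_eq ▸ mem_range_self k
  have hLD (i : ι) (k : ι ⊕ ι) : Disjoint (L i) (D (e k)) := (hHD _ (mem k)).mono_left (hL.le i)
  have hDe {k l : ι ⊕ ι} (hkl : k ≠ l) : Disjoint (D (e k)) (D (e l)) :=
    hD (mem k) (mem l) (hL.injective.ne hkl)
  have hXe {k l : ι ⊕ ι} (hkl : k ≠ l) :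
      Disjoint (insert (e k) (X (e k))) (insert (e l) (X (e l))) :=
    hX (mem k) (mem l) (hL.injective.ne hkl)
  let F (i : ι) : SimpleGraph V := D (e (.inl i)) ⊔ D (e (.inr i)) ⊔ L i
  let Y (i : ι) : Set V := X (e (.inl i)) ∪ X (e (.inr i))
  have hFY (i : ι) : (F i).HasTJoin (Y i) :=
    hasTJoin_union_of_reachable (hDe Sum.inl_ne_inr)
      (disjoint_sup_left.2 ⟨(hLD i _).symm, (hLD i _).symm⟩) (hXe Sum.inl_ne_inr)
      (h _ (mem _)) (h _ (mem _)) (hL.reachable i)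
  have hF : Pairwise (Disjoint on F) := by
    intro i j hij
    have hinl : Disjoint (D (e (.inl i))) (D (e (.inl j))) := hDe (by simp [hij])
    have hinr : Disjoint (D (e (.inr i))) (D (e (.inr j))) := hDe (by simp [hij])
    simp only [onFun, F, disjoint_sup_left, disjoint_sup_right]
    exact ⟨⟨⟨⟨hinl, hDe Sum.inr_ne_inl⟩, hLD i _⟩, ⟨⟨hDe Sum.inl_ne_inr, hinr⟩, hLD i _⟩⟩,
      ⟨(hLD j _).symm, (hLD j _).symm⟩, hL.disjoint hij⟩
  have hY : Pairwise (Disjoint on Y) := by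
    intro i j hij
    have hXe' {k l : ι ⊕ ι} (hkl : k ≠ l) : Disjoint (X (e k)) (X (e l)) :=
      (hXe hkl).mono (subset_insert _ _) (subset_insert _ _)
    simp only [onFun, Y, disjoint_union_left, disjoint_union_right]
    exact ⟨⟨hXe' (by simp [hij]), hXe' (by simp)⟩, hXe' (by simp), hXe' (by simp [hij])⟩
  have hunion : ⋃ i, Y i = ⋃ k ∈ K, X k := by
    rw [← hL.range_eq, biUnion_range, ← iSup_eq_iUnion, ← iSup_eq_iUnion, iSup_sum,
      ← iSup_sup_eq]
    rfl
  rw [← hunion]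
  refine hasTJoin_mono (iSup_le fun i => ?_) (hasTJoin_iSup hF hY hFY)
  have hle (k : ι ⊕ ι) : D (e k) ≤ H ⊔ ⨆ k ∈ K, D k :=
    (le_biSup D (mem k)).trans le_sup_right
  exact sup_le (sup_le (hle _) (hle _)) ((hL.le i).trans le_sup_left)

theorem hasTJoin_sup_biSup_of_subset {H : SimpleGraph V} {K R : Set V} {D : V → SimpleGraph V}
    {X : V → Set V} (hKR : K ⊆ R) (hD : R.PairwiseDisjoint D) (hHD : ∀ r ∈ R, Disjoint H (D r))
    (hX : R.PairwiseDisjoint fun r => insert r (X r)) (hK : H.HasTJoin K)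
    (h : ∀ k ∈ K, (D k).HasTJoin (X k ∆ {k})) (h' : ∀ r ∈ R \ K, (D r).HasTJoin (X r)) :
    (H ⊔ ⨆ r ∈ R, D r).HasTJoin (⋃ r ∈ R, X r) := by
  have hX' : R.PairwiseDisjoint X := hX.mono fun r => subset_insert r (X r)
  have hKR' {k r : V} (hk : k ∈ K) (hr : r ∈ R \ K) : k ≠ r := fun hkr => hr.2 (hkr ▸ hk)
  have hunion : R = K ∪ R \ K := (union_sdiff_cancel hKR).symm
  rw [hunion, iSup_union, biUnion_union, ← sup_assoc]
  refine hasTJoin_sup ?_ ?_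
    (hasTJoin_sup_biSup (hD.subset hKR) (fun k hk => hHD k (hKR hk)) (hX.subset hKR) hK h)
    (hasTJoin_biSup (hD.subset sdiff_subset) (hX'.subset sdiff_subset) h')
  · simp only [disjoint_sup_left, iSup_disjoint_iff, disjoint_iSup_iff]
    exact fun r hr => ⟨hHD r hr.1, fun k hk => hD (hKR hk) hr.1 (hKR' hk hr)⟩
  · simp only [disjoint_iUnion_left, disjoint_iUnion_right]
    exact fun r hr k hk => hX' (hKR hk) hr.1 (hKR' hk hr)

end Substitution

theorem exists_image_eq_compl {α : Type*} [Preorder α] [WellFoundedLT α] {f : α → α}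
    (hf : ∀ a, a < f a) : ∃ S : Set α, f '' S = Sᶜ := by
  let p : α → Prop := wellFounded_lt.fix fun a ih => ∀ b (hb : b < a), f b = a → ¬ ih b hb
  have hp (a : α) : p a ↔ ∀ b < a, f b = a → ¬ p b := by
    rw [show p a = _ from WellFounded.fix_eq ..]
  refine ⟨{a | p a}, ?_⟩
  ext a
  simp only [mem_image, mem_ofPred_eq, mem_compl_iff, hp a]
  push Not
  exact ⟨fun ⟨b, hb, hba⟩ => ⟨b, hba ▸ hf b, hba, hb⟩, fun ⟨b, _, hba, hb⟩ => ⟨b, hb, hba⟩⟩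

section Forest

open Order

variable [PartialOrder V] [PredOrder V]

/-- The edges from `x` to `pred x` for `x ∈ A`. A well-founded `PredOrder` is a rooted forest in
which `pred x` is the parent of `x` and `Ici x` its subtree, and `predGraph univ` is its graph. -/
def predGraph (A : Set V) : SimpleGraph V := .fromEdgeSet ((fun x => s(pred x, x)) '' A)

theorem predGraph_mono {A B : Set V} (h : A ⊆ B) : predGraph A ≤ predGraph B :=
  SimpleGraph.fromEdgeSet_mono (image_mono h)

theorem edge_pred_injective : Injective fun x : V => s(pred x, x) := by
  intro x y hxy
  rcases Sym2.eq_iff.1 hxy with ⟨-, h⟩ | ⟨hx, hy⟩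
  · exact h
  · exact le_antisymm (hy ▸ pred_le y) (hx ▸ pred_le x)

theorem disjoint_predGraph {A B : Set V} (h : Disjoint A B) :
    Disjoint (predGraph A) (predGraph B) := by
  rw [← SimpleGraph.disjoint_edgeSet, predGraph, predGraph, SimpleGraph.edgeSet_fromEdgeSet,
    SimpleGraph.edgeSet_fromEdgeSet]
  exact ((disjoint_image_iff edge_pred_injective).2 h).mono sdiff_subset sdiff_subset

theorem reachable_predGraph_pred {A : Set V} {x : V} (hx : x ∈ A) :
    (predGraph A).Reachable (pred x) x := by
  rcases eq_or_ne (pred x) x with h | h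
  · rw [h]
  · have hadj : (predGraph A).Adj (pred x) x :=
      (SimpleGraph.fromEdgeSet_adj _).2 ⟨mem_image_of_mem (fun y => s(pred y, y)) hx, h⟩
    exact hadj.reachable

section IsPredArchimedean

variable [IsPredArchimedean V]

theorem reachable_predGraph_Ioc {x y : V} (hxy : x ≤ y) : (predGraph (Ioc x y)).Reachable x y := by
  induction hxy using Pred.rec with
  | rfl => rfl
  | pred x hxy ih =>
    rcases (pred_le x).eq_or_lt with hx | hx
    · rwa [hx]
    · exact (reachable_predGraph_pred (mem_Ioc.2 ⟨hx, hxy⟩)).trans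
        (ih.mono (predGraph_mono (Ioc_subset_Ioc_left hx.le)))

theorem disjoint_Ioc_of_covBy {K : Set V} {a b c d : K} (hab : a ⋖ b) (hcd : c ⋖ d) (hac : a ≠ c) :
    Disjoint (Ioc (a : V) b) (Ioc (c : V) d) := by
  refine disjoint_left.2 fun t hab' hcd' => ?_
  rcases le_total_of_directed hab'.1.le hcd'.1.le with h | h
  · exact hcd.2 (lt_of_le_of_ne h hac.symm) (show (a : V) < d from hab'.1.trans_le hcd'.2)
  · exact hab.2 (lt_of_le_of_ne h hac) (show (c : V) < b from hcd'.1.trans_le hab'.2)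

theorem pairwiseDisjoint_Ici_covBy {z : V} : {c | z ⋖ c}.PairwiseDisjoint (Ici : V → Set V) := by
  intro c hc d hd hcd
  refine disjoint_left.2 fun x hcx hdx => ?_
  rcases le_total_of_directed hcx hdx with h | h
  · exact hc.2 hd.lt (h.lt_of_ne hcd.symm)
  · exact hd.2 hc.lt (h.lt_of_ne hcd)

end IsPredArchimedean

theorem hasTJoin_predGraph [WellFoundedLT V] {A K : Set V} (hK : ∀ k ∈ K, ∃ l ∈ K, k < l)
    (hA : ∀ k ∈ K, ∀ l ∈ K, Ioc k l ⊆ A) : (predGraph A).HasTJoin K := by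
  have exists_next (k : K) : ∃ l, k ⋖ l := by
    obtain ⟨l, hl, hkl⟩ := hK k k.2
    exact exists_covBy_of_wellFoundedLT (not_isMax_iff.2 ⟨⟨l, hl⟩, hkl⟩)
  choose next hnext using exists_next
  obtain ⟨S, hS⟩ := exists_image_eq_compl fun k => (hnext k).lt
  have next_injective : Injective next := by
    intro k l hkl
    by_contra hne
    exact disjoint_left.1 (disjoint_Ioc_of_covBy (hnext k) (hnext l) hne)
      ⟨(hnext k).lt, le_rfl⟩ (by rw [hkl]; exact ⟨(hnext l).lt, le_rfl⟩)
  have next_notMem (k : S) : next k ∉ S := by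
    rw [← mem_compl_iff, ← hS]
    exact mem_image_of_mem next k.2
  let ends : S ⊕ S → K := Sum.elim (fun k => k) (fun k => next k)
  refine IsLinkage.hasTJoin (ι := S) (e := fun k => ends k)
    (H := fun k => predGraph (Ioc (k : V) (next k))) ⟨?_, ?_, fun k => ?_, fun k l hkl => ?_,
      fun k => reachable_predGraph_Ioc (hnext k).le⟩
  · refine Subtype.val_injective.comp (Subtype.val_injective.sumElim
      (next_injective.comp Subtype.val_injective) fun k l hkl => next_notMem l (hkl ▸ k.2))
  · rw [range_comp', Sum.elim_range, ← image_eq_range, Subtype.range_coe, hS, union_compl_self,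
      image_univ, Subtype.range_coe]
  · exact predGraph_mono (hA _ (k : K).2 _ (next k).2)
  · exact disjoint_predGraph
      (disjoint_Ioc_of_covBy (hnext k) (hnext l) (Subtype.val_injective.ne hkl))

end Forest

section Settled

open Order

variable [PartialOrder V] [PredOrder V] {T : Set V} {x y z : V}

/-- The subtree at `y`, together with the edge from `y` to its parent, has a join of its vertices
in `T`, possibly with one path ending at the parent. -/
def IsSettled (T : Set V) (y : V) : Prop :=
  HasTJoinUpTo (predGraph (Ici y)) (pred y) (T ∩ Ici y)

/-- The union of the settled subtrees hanging from children of `z`. -/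
def settledPart (T : Set V) (z : V) : Set V := ⋃ c ∈ {c | z ⋖ c ∧ IsSettled T c}, Ici c

/-- The vertices reached from `y` without entering a settled proper subtree. -/
def unsettledRegion (T : Set V) (y : V) : Set V := {z | y ≤ z ∧ ∀ w ∈ Ioc y z, ¬ IsSettled T w}

/-- The vertices `z` of the unsettled region at which one path end is left over when the vertices of
`T` in `insert z (settledPart T z)` are paired off. -/
def tokens (T : Set V) (y : V) : Set V :=
  {z ∈ unsettledRegion T y |
    ¬ (predGraph (settledPart T z)).HasTJoin (T ∩ insert z (settledPart T z))}

theorem mem_settledPart : x ∈ settledPart T z ↔ ∃ c, z ⋖ c ∧ IsSettled T c ∧ c ≤ x := by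
  simp only [settledPart, mem_iUnion₂, mem_ofPred_eq, mem_Ici, exists_prop, and_assoc]

theorem settledPart_subset_Ioi : settledPart T z ⊆ Ioi z := by
  intro x hx
  obtain ⟨c, hc, -, hcx⟩ := mem_settledPart.1 hx
  exact hc.lt.trans_le hcx

section IsPredArchimedean

variable [IsPredArchimedean V]

theorem hasTJoinUpTo_settledPart (T : Set V) (z : V) :
    HasTJoinUpTo (predGraph (settledPart T z)) z (T ∩ insert z (settledPart T z)) := by
  have hpart : HasTJoinUpTo (predGraph (settledPart T z)) z (T ∩ settledPart T z) := by
    let C : Set V := {c | z ⋖ c ∧ IsSettled T c}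
    have hdisj : Pairwise (Disjoint on fun c : C => Ici (c : V)) :=
      (pairwiseDisjoint_Ici_covBy.subset fun c hc => hc.1).subtype _ _
    rw [settledPart, biUnion_eq_iUnion, inter_iUnion]
    refine hasTJoinUpTo_mono (iSup_le fun c => predGraph_mono (subset_iUnion _ c))
      (hasTJoinUpTo_iSup (H := fun c : C => predGraph (Ici (c : V)))
        (fun c d hcd => disjoint_predGraph (hdisj hcd))
        (fun c d hcd => (hdisj hcd).mono inter_subset_right inter_subset_right)
        (fun c hz => c.2.1.lt.not_ge hz.2) fun c => ?_)
    simpa only [IsSettled, c.2.1.pred_eq] using c.2.2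
  by_cases hzT : z ∈ T
  · have hz : z ∉ T ∩ settledPart T z := fun hz => (settledPart_subset_Ioi hz.2).false
    rw [inter_insert_of_mem hzT, ← symmDiff_singleton_of_notMem hz]
    exact hpart.symm.imp_right fun h => by rwa [symmDiff_symmDiff_cancel_right]
  · rwa [inter_insert_of_notMem hzT]

theorem pairwiseDisjoint_insert_settledPart (T : Set V) (y : V) :
    (unsettledRegion T y).PairwiseDisjoint fun z => insert z (settledPart T z) := by
  have le_of_mem {z x : V} (hx : x ∈ insert z (settledPart T z)) : z ≤ x :=
    hx.elim Eq.ge fun hx => (settledPart_subset_Ioi hx).le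
  have disjoint_of_lt {z w : V} (hz : z ∈ unsettledRegion T y) (hw : w ∈ unsettledRegion T y)
      (hzw : z < w) : Disjoint (insert z (settledPart T z)) (insert w (settledPart T w)) := by
    refine disjoint_left.2 fun x hxz hxw => ?_
    have hwx := le_of_mem hxw
    obtain ⟨c, hzc, hc, hcx⟩ :=
      mem_settledPart.1 (hxz.resolve_left (hzw.trans_le hwx).ne')
    rcases lt_or_le_of_directed hwx hcx with hwc | hcw
    · exact hzc.2 hzw hwc
    · exact hw.2 c ⟨hz.1.trans_lt hzc.lt, hcw⟩ hc
  intro z hz w hw hzw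
  refine disjoint_left.2 fun x hxz hxw => ?_
  rcases le_total_of_directed (le_of_mem hxz) (le_of_mem hxw) with h | h
  · exact disjoint_left.1 (disjoint_of_lt hw hz (h.lt_of_ne hzw.symm)) hxw hxz
  · exact disjoint_left.1 (disjoint_of_lt hz hw (h.lt_of_ne hzw)) hxz hxw

end IsPredArchimedean

variable [WellFoundedLT V]

theorem isSettled_of_forall_covBy (h : ∀ c, z ⋖ c → IsSettled T c) : IsSettled T z := by
  have hpart : settledPart T z = Ioi z := by
    refine settledPart_subset_Ioi.antisymm fun x hx => ?_
    obtain ⟨c, hzc, hcx⟩ := exists_covBy_le_of_lt hx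
    exact mem_settledPart.2 ⟨c, hzc, h c hzc, hcx⟩
  have hjoin := hasTJoinUpTo_settledPart T z
  rw [hpart, Ioi_insert] at hjoin
  have hdisj : Disjoint (Ioi z) {z} := by simp
  refine hasTJoinUpTo_mono (sup_le ?_ ?_) (hasTJoinUpTo_of_reachable (disjoint_predGraph hdisj)
    hjoin (reachable_predGraph_pred (mem_singleton z)).symm)
  exacts [predGraph_mono Ioi_subset_Ici_self, predGraph_mono (by simp)]

theorem biUnion_insert_settledPart (T : Set V) (y : V) :
    ⋃ z ∈ unsettledRegion T y, insert z (settledPart T z) = Ici y := by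
  refine (iUnion₂_subset fun z hz => insert_subset hz.1 ?_).antisymm fun x hyx => ?_
  · exact settledPart_subset_Ioi.trans (Ioi_subset_Ici hz.1)
  by_cases hx : x ∈ unsettledRegion T y
  · exact mem_biUnion hx (mem_insert x _)
  have hex : ∃ w, w ∈ Ioc y x ∧ IsSettled T w := by
    simpa [unsettledRegion, mem_Ici.1 hyx, and_assoc] using hx
  obtain ⟨w, ⟨hw, hwT⟩, hmin⟩ := exists_minimal_of_wellFoundedLT _ hex
  have hpred : pred w ⋖ w := pred_covBy_of_not_isMin hw.1.not_isMin
  refine mem_biUnion (x := pred w) ⟨le_pred_of_lt hw.1, fun v hv hvT => ?_⟩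
    (.inr (mem_settledPart.2 ⟨w, hpred, hwT, hw.2⟩))
  have hvw : v < w := hv.2.trans_lt hpred.lt
  exact hvw.not_ge (hmin ⟨⟨hv.1, hvw.le.trans hw.2⟩, hvT⟩ hvw.le)

theorem hasTJoin_of_forall_tokens (h : ∀ k ∈ tokens T y, ∃ l ∈ tokens T y, k < l) :
    (predGraph (Ici y)).HasTJoin (T ∩ Ici y) := by
  have hblock := pairwiseDisjoint_insert_settledPart T y
  have hlinks : (predGraph (unsettledRegion T y)).HasTJoin (tokens T y) :=
    hasTJoin_predGraph h fun k hk l hl x hx => ⟨hk.1.1.trans hx.1.le, fun w hw =>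
      hl.1.2 w ⟨hw.1, hw.2.trans hx.2⟩⟩
  have hparts {z : V} (hz : z ∈ unsettledRegion T y) :
      Disjoint (unsettledRegion T y) (settledPart T z) := by
    refine disjoint_left.2 fun x hx hxz => ?_
    exact disjoint_left.1 (hblock hx hz (settledPart_subset_Ioi hxz).ne')
      (mem_insert x _) (.inr hxz)
  have hjoin := hasTJoin_sup_biSup_of_subset (D := fun z => predGraph (settledPart T z))
    (X := fun z => T ∩ insert z (settledPart T z)) (fun z (hz : z ∈ tokens T y) => hz.1)
    (fun z hz w hw hzw =>
      disjoint_predGraph ((hblock hz hw hzw).mono (subset_insert _ _) (subset_insert _ _)))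
    (fun z hz => disjoint_predGraph (hparts hz))
    (hblock.mono fun z => insert_subset (mem_insert z _) inter_subset_right) hlinks
    (fun z hz => (hasTJoinUpTo_settledPart T z).resolve_left hz.2)
    (fun z hz => not_not.1 fun hz' => hz.2 ⟨hz.1, hz'⟩)
  rw [← inter_iUnion₂, biUnion_insert_settledPart] at hjoin
  refine hasTJoin_mono (sup_le ?_ (iSup₂_le fun z hz => ?_)) hjoin
  · exact predGraph_mono fun z hz => hz.1
  · exact predGraph_mono (settledPart_subset_Ioi.trans (Ioi_subset_Ici hz.1))

theorem isSettled (T : Set V) (y : V) : IsSettled T y := by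
  by_contra hy
  -- The children of a last token `k` are settled: an unsettled child of `k` would have no tokens.
  obtain ⟨k, hk, hmax⟩ : ∃ k ∈ tokens T y, ∀ l ∈ tokens T y, ¬ k < l := by
    by_contra! h
    exact hy (.inl (hasTJoin_of_forall_tokens h))
  have unsettled_of_mem {w : V} (hw : w ∈ Icc y k) : ¬ IsSettled T w :=
    hw.1.eq_or_lt.elim (fun h => h ▸ hy) fun h => hk.1.2 w ⟨h, hw.2⟩
  refine unsettled_of_mem ⟨hk.1.1, le_rfl⟩ (isSettled_of_forall_covBy fun c hkc => ?_)
  by_contra hc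
  refine hc (.inl (hasTJoin_of_forall_tokens fun l hl => ?_))
  refine absurd (hkc.lt.trans_le hl.1.1) (hmax l ⟨⟨?_, fun w hw => ?_⟩, hl.2⟩)
  · exact hk.1.1.trans (hkc.le.trans hl.1.1)
  rcases lt_or_le_of_directed hl.1.1 hw.2 with hcw | hwc
  · exact hl.1.2 w ⟨hcw, hw.2⟩
  rcases hwc.eq_or_lt with rfl | hwc
  · exact hc
  · exact unsettled_of_mem ⟨hw.1.le, hkc.pred_eq ▸ le_pred_of_lt hwc⟩

end Settled

section SpanningTree

theorem exists_predOrder_of_lt {f : V → V} {h : V → ℕ} (hf : ∀ x, f x = x ∨ h (f x) < h x) :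
    ∃ (_ : PartialOrder V) (_ : PredOrder V), WellFoundedLT V ∧ ∀ x : V, Order.pred x = f x := by
  have iterate_lt (n : ℕ) (x : V) : f^[n] x = x ∨ h (f^[n] x) < h x := by
    induction n generalizing x with
    | zero => exact .inl rfl
    | succ n ih =>
      rw [iterate_succ_apply]
      rcases hf x with hx | hx
      · rw [hx]
        exact ih x
      · exact .inr ((ih (f x)).elim (fun hfx => hfx.symm ▸ hx) fun hfx => hfx.trans hx)
  let order : PartialOrder V :=
    { le := fun x y => ∃ n, f^[n] y = x
      le_refl := fun x => ⟨0, rfl⟩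
      le_trans := by
        rintro _ _ z ⟨m, rfl⟩ ⟨n, rfl⟩
        exact ⟨m + n, iterate_add_apply f m n z⟩
      le_antisymm := by
        rintro x y ⟨m, hm⟩ ⟨n, hn⟩
        rcases iterate_lt m y with hy | hy
        · exact hm ▸ hy
        · rcases iterate_lt n x with hx | hx
          · exact hx ▸ hn
          · exact absurd (hm ▸ hy) (hn ▸ hx).not_gt }
  have height_strictMono : StrictMono h := by
    intro x y hxy
    obtain ⟨n, rfl⟩ := hxy.le
    exact (iterate_lt n y).resolve_left hxy.ne
  have le_self (x : V) : f x ≤ x := ⟨1, rfl⟩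
  let predOrder : PredOrder V :=
    { pred := f
      pred_le := le_self
      min_of_le_pred := by
        rintro x hx y ⟨n, rfl⟩
        rw [iterate_fixed (le_antisymm (le_self x) hx)]
      le_pred_of_lt := by
        rintro x y hxy
        obtain ⟨_ | n, hn⟩ := hxy.le
        · exact absurd hn.symm hxy.ne
        · exact ⟨n, hn⟩ }
  exact ⟨order, predOrder, height_strictMono.wellFoundedLT, fun _ => rfl⟩

theorem exists_adj_dist_lt {G : SimpleGraph V} {x r : V} (hxr : G.Reachable x r) (hne : x ≠ r) :
    ∃ y, G.Adj x y ∧ G.dist y r < G.dist x r := by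
  obtain ⟨w, hw⟩ := hxr.exists_walk_length_eq_dist
  cases w with
  | nil => exact absurd rfl hne
  | @cons _ y _ hadj w =>
    refine ⟨y, hadj, ?_⟩
    rw [← hw, SimpleGraph.Walk.length_cons]
    exact Nat.lt_succ_of_le (SimpleGraph.dist_le w)

theorem exists_predGraph_le {G : SimpleGraph V} (hG : G.Preconnected) (r : V) :
    ∃ (_ : PartialOrder V) (_ : PredOrder V),
      WellFoundedLT V ∧ (∀ x, r ≤ x) ∧ predGraph (univ : Set V) ≤ G := by
  have exists_parent (x : V) :
      ∃ y, (y = x ∧ x = r) ∨ (G.Adj x y ∧ G.dist y r < G.dist x r) := by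
    by_cases hx : x = r
    · exact ⟨x, .inl ⟨rfl, hx⟩⟩
    · exact (exists_adj_dist_lt (hG x r) hx).imp fun _ => .inr
  choose f hf using exists_parent
  obtain ⟨order, predOrder, hwf, hpred⟩ := exists_predOrder_of_lt (h := fun x => G.dist x r)
    fun x => (hf x).imp And.left And.right
  refine ⟨order, predOrder, hwf, fun x => ?_, ?_⟩
  · induction x using WellFoundedLT.induction with
    | _ x ih =>
      rcases hf x with ⟨-, rfl⟩ | ⟨hadj, -⟩
      · exact le_rfl
      · have hle : f x ≤ x := hpred x ▸ Order.pred_le x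
        exact (ih _ (hle.lt_of_ne hadj.ne.symm)).trans hle
  · rw [predGraph, SimpleGraph.fromEdgeSet_le]
    rintro _ ⟨⟨x, -, rfl⟩, hloop⟩
    simp only [hpred] at hloop ⊢
    rcases hf x with ⟨hx, -⟩ | ⟨hadj, -⟩
    · exact absurd hx hloop
    · exact hadj.symm

theorem hasTJoinUpTo_of_preconnected {G : SimpleGraph V} (hG : G.Preconnected) (v : V)
    (T : Set V) : HasTJoinUpTo G v T := by
  obtain ⟨_, _, _, hleast, hle⟩ := exists_predGraph_le hG v
  have hsettled := isSettled T v
  have hv : Order.pred v = v := (Order.pred_le v).antisymm (hleast _)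
  have huniv : Ici v = univ := eq_univ_of_forall hleast
  rw [IsSettled, hv, huniv, inter_univ] at hsettled
  exact hasTJoinUpTo_mono hle hsettled

end SpanningTree

/-- If a connected graph `G` has no `T`-join, then it has a `(T ∪ {v})`-join for every
vertex `v ∉ T`. -/
theorem hasTJoin_insert_of_not_hasTJoin {V : Type*} (G : SimpleGraph V) (hG : G.Connected)
    (T : Set V) (hT : ¬ G.HasTJoin T) (v : V) (hv : v ∉ T) :
    G.HasTJoin (insert v T) := by
  rw [← symmDiff_singleton_of_notMem hv]
  exact (hasTJoinUpTo_of_preconnected hG.preconnected v T).resolve_left hT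
end
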